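/- Under the Viscous Setup, suppose additionally that δ ≤ ε, ρ̄ ≤ 1, and that there is a constant M₀ > 0 with ε b^n/a + δ|log a|(1 + b^n/ε) + ρ̄^θ|log a| + ρ̄^γ b^n + √ε/a ≤ M₀, where θ = (γ−1)/2. Let ω ∈ C_c^∞([0,∞)) be a test function with ω(r) = 1 for r ∈ [0,1] and ω(r) ≥ 0. Then there exists a constant M > 0, depending only on n, γ, T, E₀, M₀ and ω but not on ε, such that ∫₀^T∫_a^b (ρ|u|³ + ρ^{γ+θ}) ω(r) r^{n−1} dr dt ≤ M. -/

import Mathlib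

open MeasureTheory Real Set

noncomputable section

/-- The internal energy function `h_δ(ρ) = κρ^γ/(γ-1) + δρ²`. -/
def hDelta (γ κ δ ρ : ℝ) : ℝ := κ * ρ ^ γ / (γ - 1) + δ * ρ ^ (2 : ℕ)

/-- Its derivative `h_δ'(ρ̄) = κγρ̄^{γ-1}/(γ-1) + 2δρ̄`. -/
def hDelta' (γ κ δ ρbar : ℝ) : ℝ := κ * γ * ρbar ^ (γ - 1) / (γ - 1) + 2 * δ * ρbar

/-- Its second derivative `h_δ''(ρ) = κγρ^{γ-2} + 2δ`. -/
def hDelta'' (γ κ δ ρ : ℝ) : ℝ := κ * γ * ρ ^ (γ - 2) + 2 * δ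

/-- The relative internal energy `h̄_δ(ρ,ρ̄) = h_δ(ρ) − h_δ(ρ̄) − h_δ'(ρ̄)(ρ−ρ̄)`. -/
def hBarDelta (γ κ δ ρ ρbar : ℝ) : ℝ :=
  hDelta γ κ δ ρ - hDelta γ κ δ ρbar - hDelta' γ κ δ ρbar * (ρ - ρbar)

/-- The Viscous Setup: `n ≥ 2`, `γ > 1`, `κ = (γ−1)²/(4γ)`, `p_δ(ρ) = κρ^γ + δρ²`;
`T > 0`, `ε > 0`, `δ > 0`, `0 < a < 1 < b`, `ρ̄ > 0`; smooth functions `(ρ, m)` on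
`[0,T]×[a,b]` with `ρ ≥ c_ε > 0` and `u = m/ρ`, satisfying the viscous system
`(r^{n−1}ρ)_t + (r^{n−1}m)_r = ε(r^{n−1}ρ_r)_r`,
`(r^{n−1}m)_t + (r^{n−1}m²/ρ)_r + r^{n−1}(p_δ(ρ))_r
  = ε(r^{n−1}m)_{rr} − ε((n−1)/r)(r^{n−1}m)_r` on `(0,T)×(a,b)`,
the boundary conditions `ρ_r(t,a) = 0`, `m(t,a) = 0`, `ρ(t,b) = ρ̄`, `m(t,b) = 0`,
and the energy estimate with total energy bound `E₀`. -/
structure ViscousSetup (n : ℕ) (γ T E₀ : ℝ) where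
  ε : ℝ
  δ : ℝ
  a : ℝ
  b : ℝ
  ρbar : ℝ
  cε : ℝ
  ρ : ℝ → ℝ → ℝ
  m : ℝ → ℝ → ℝ
  hn : 2 ≤ n
  hγ : 1 < γ
  hT : 0 < T
  hε : 0 < ε
  hδ : 0 < δ
  ha0 : 0 < a
  ha1 : a < 1
  hb : 1 < b
  hρbar : 0 < ρbar
  hcε : 0 < cε
  smooth_ρ : ContDiff ℝ (⊤ : ℕ∞) (Function.uncurry ρ)
  smooth_m : ContDiff ℝ (⊤ : ℕ∞) (Function.uncurry m)
  pos : ∀ t ∈ Set.Icc 0 T, ∀ r ∈ Set.Icc a b, cε ≤ ρ t r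
  continuity_eq : ∀ t ∈ Set.Ioo 0 T, ∀ r ∈ Set.Ioo a b,
    r ^ (n - 1) * deriv (fun s => ρ s r) t + deriv (fun y => y ^ (n - 1) * m t y) r
      = ε * deriv (fun y => y ^ (n - 1) * deriv (fun z => ρ t z) y) r
  momentum_eq : ∀ t ∈ Set.Ioo 0 T, ∀ r ∈ Set.Ioo a b,
    r ^ (n - 1) * deriv (fun s => m s r) t
      + deriv (fun y => y ^ (n - 1) * (m t y) ^ (2:ℕ) / ρ t y) r
      + r ^ (n - 1) * deriv (fun y =>
          (γ - 1) ^ (2:ℕ) / (4 * γ) * (ρ t y) ^ γ + δ * (ρ t y) ^ (2:ℕ)) r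
      = ε * deriv (fun y => deriv (fun z => z ^ (n - 1) * m t z) y) r
        - ε * ((n - 1 : ℝ) / r) * deriv (fun y => y ^ (n - 1) * m t y) r
  bc_ρr : ∀ t ∈ Set.Icc 0 T, deriv (fun y => ρ t y) a = 0
  bc_ma : ∀ t ∈ Set.Icc 0 T, m t a = 0
  bc_ρb : ∀ t ∈ Set.Icc 0 T, ρ t b = ρbar
  bc_mb : ∀ t ∈ Set.Icc 0 T, m t b = 0
  energy : ∀ t ∈ Set.Icc 0 T,
    (∫ r in Set.Ioo a b,
      ((1/2) * ρ t r * (m t r / ρ t r) ^ (2:ℕ)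
        + hBarDelta γ ((γ - 1) ^ (2:ℕ) / (4 * γ)) δ (ρ t r) ρbar) * r ^ (n - 1))
    + ε * ∫ s in Set.Ioo 0 T, ∫ r in Set.Ioo a b,
        (hDelta'' γ ((γ - 1) ^ (2:ℕ) / (4 * γ)) δ (ρ s r) * (deriv (fun y => ρ s y) r) ^ (2:ℕ)
          + ρ s r * (deriv (fun y => m s y / ρ s y) r) ^ (2:ℕ)
          + (n - 1 : ℝ) * ρ s r * (m s r / ρ s r) ^ (2:ℕ) / r ^ (2:ℕ)) * r ^ (n - 1)
      ≤ E₀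

/-!
The idea is to test the system with an entropy pair adapted to the perturbed pressure `p_δ`. Its
entropy solves the entropy wave equation, which is integrated along characteristics: the
derivative data transported by one family relaxes towards minus its reflection at a rate read off
from the sound speed. The solution has bounded second derivatives, while its flux dominates
`c₀ (ρ |u|³ + ρ ^ (γ + θ))` up to a multiple of the energy density.

The entropy balance is then multiplied by the primitive `W r = ∫_a^r ω`, so that integration by
parts in `r` leaves the flux weighted by `ω`. The boundary term vanishes at `r = a` because
`W a = 0`, and at `r = b` because the entropy is normalised at the far-field state `(ρbar, 0)`, up
to a contribution of size `ρbar ^ γ b ^ (n - 1)`. The viscous terms are absorbed by the energy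
dissipation, since the Hessian of the entropy is bounded and `ε / a`, `ε b ^ n` are bounded.
-/

/-! ### A relaxation equation with reflection -/

/-- Monotone profiles equal to `-1` left of `α` and to `1` right of `β`. -/
structure IsTransition (α β : ℝ) (f : ℝ → ℝ) : Prop where
  monotone : Monotone f
  eq_neg_one : ∀ x ≤ α, f x = -1
  eq_one : ∀ x, β ≤ x → f x = 1

lemma IsTransition.abs_le_one {α β : ℝ} {f : ℝ → ℝ} (hf : IsTransition α β f) (x : ℝ) :
    |f x| ≤ 1 := by
  have hlow := hf.monotone (min_le_left x α)
  have hup := hf.monotone (le_max_left x β)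
  rw [hf.eq_neg_one _ (min_le_right _ _)] at hlow
  rw [hf.eq_one _ (le_max_right _ _)] at hup
  exact abs_le.2 ⟨hlow, hup⟩

lemma isClosed_setOf_isTransition (α β : ℝ) : IsClosed {f : ℝ → ℝ | IsTransition α β f} := by
  have h : {f : ℝ → ℝ | IsTransition α β f} =
      {f | Monotone f} ∩ ((⋂ x ∈ Iic α, {f | f x = -1}) ∩ ⋂ x ∈ Ici β, {f | f x = 1}) := by
    ext f
    simpa using ⟨fun h => ⟨h.1, h.2, h.3⟩, fun h => ⟨h.1, h.2.1, h.2.2⟩⟩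
  rw [h]
  exact isClosed_monotone.inter <|
    (isClosed_biInter fun x _ => isClosed_eq (continuous_apply x) continuous_const).inter
      (isClosed_biInter fun x _ => isClosed_eq (continuous_apply x) continuous_const)

/-- Truncation of a real number to `[-1, 1]`. -/
def clampUnit (x : ℝ) : ℝ := max (-1) (min 1 x)

@[fun_prop]
lemma continuous_clampUnit : Continuous clampUnit := by
  unfold clampUnit
  fun_prop

lemma clampUnit_neg (x : ℝ) : clampUnit (-x) = -clampUnit x := by
  unfold clampUnit
  grind

lemma isTransition_clampUnit_div {σ : ℝ} (hσ : 0 < σ) :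
    IsTransition (-σ) σ fun x => clampUnit (x / σ) where
  monotone x y hxy := by
    simp only [clampUnit]
    gcongr
  eq_neg_one x hx := by
    have : x / σ ≤ -1 := by rw [div_le_iff₀ hσ]; linarith
    rw [clampUnit, min_eq_right (by linarith), max_eq_left this]
  eq_one x hx := by
    rw [clampUnit, min_eq_left ((one_le_div hσ).2 hx), max_eq_right (by norm_num)]

section Relaxation

variable {l r σ : ℝ} {g k y₀ : ℝ → ℝ}

/-- The integrating factor `exp ∫ₗ g` of the rate `g`. -/
def growth (g : ℝ → ℝ) (l ρ : ℝ) : ℝ := exp (∫ τ in l..ρ, g τ)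

lemma growth_pos (ρ : ℝ) : 0 < growth g l ρ := exp_pos _

lemma growth_self : growth g l l = 1 := by simp [growth]

lemma hasDerivAt_growth (hg : Continuous g) (ρ : ℝ) :
    HasDerivAt (growth g l) (g ρ * growth g l ρ) ρ :=
  (hg.integral_hasStrictDerivAt l ρ).hasDerivAt.exp.congr_deriv (mul_comm _ _)

lemma continuous_growth (hg : Continuous g) : Continuous (growth g l) :=
  continuous_iff_continuousAt.2 fun ρ => (hasDerivAt_growth hg ρ).continuousAt

lemma monotone_growth (hg : Continuous g) (hg0 : ∀ s, 0 ≤ g s) : Monotone (growth g l) :=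
  monotone_of_hasDerivAt_nonneg (hasDerivAt_growth hg) fun s => mul_nonneg (hg0 s) (growth_pos s).le

lemma one_le_growth (hg : Continuous g) (hg0 : ∀ s, 0 ≤ g s) {ρ : ℝ} (hρ : l ≤ ρ) :
    1 ≤ growth g l ρ :=
  growth_self.symm.trans_le (monotone_growth hg hg0 hρ)

lemma integral_mul_growth (hg : Continuous g) (ρ : ℝ) :
    ∫ s in l..ρ, g s * growth g l s = growth g l ρ - 1 := by
  rw [intervalIntegral.integral_eq_sub_of_hasDerivAt (fun s _ => hasDerivAt_growth hg s)
    ((hg.mul (continuous_growth hg)).intervalIntegrable _ _), growth_self]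

lemma abs_integral_mul_growth_mul_le (hg : Continuous g) (hg0 : ∀ s, 0 ≤ g s) {ρ c : ℝ}
    (hρ : l ≤ ρ) {f : ℝ → ℝ} (hf : ∀ s, |f s| ≤ c) :
    |∫ s in l..ρ, g s * growth g l s * f s| ≤ (growth g l ρ - 1) * c := by
  have hgr := hg.mul (continuous_growth (l := l) hg)
  rw [← integral_mul_growth hg, ← intervalIntegral.integral_mul_const]
  have hbound (s : ℝ) : ‖g s * growth g l s * f s‖ ≤ g s * growth g l s * c := by
    have hw : 0 ≤ g s * growth g l s := mul_nonneg (hg0 s) (growth_pos s).le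
    rw [norm_eq_abs, abs_mul, abs_of_nonneg hw]
    exact mul_le_mul_of_nonneg_left (hf s) hw
  exact intervalIntegral.norm_integral_le_of_norm_le hρ
    (Filter.Eventually.of_forall fun s _ => hbound s) ((hgr.mul_const c).intervalIntegrable _ _)

/-- Duhamel's formula for `∂ᵨB(ρ,x) = -g(ρ) (B(ρ,x) + B(ρ,2k(ρ)-x))` on `l ≤ ρ ≤ r` with initial
profile `y₀`. The solutions are its fixed points; they are frozen outside `[l, r]`. -/
def relaxationMap (hlr : l ≤ r) (g k y₀ : ℝ → ℝ) (B : ℝ × ℝ → ℝ) (p : ℝ × ℝ) : ℝ :=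
  (y₀ p.2 - ∫ s in l..projIcc l r hlr p.1, g s * growth g l s * B (s, 2 * k s - p.2)) /
    growth g l (projIcc l r hlr p.1)

variable (hlr : l ≤ r)

lemma continuous_relaxationMap (hg : Continuous g) (hk : Continuous k) (hy : Continuous y₀)
    {B : ℝ × ℝ → ℝ} (hB : Continuous B) : Continuous (relaxationMap hlr g k y₀ B) := by
  have hgr := continuous_growth (l := l) hg
  have hpr : Continuous fun p : ℝ × ℝ => (projIcc l r hlr p.1 : ℝ) :=
    continuous_subtype_val.comp (continuous_projIcc.comp continuous_fst)
  have hint : Continuous fun p : ℝ × ℝ =>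
      ∫ s in l..projIcc l r hlr p.1, g s * growth g l s * B (s, 2 * k s - p.2) :=
    intervalIntegral.continuous_parametric_intervalIntegral_of_continuous
      (by simp only [Function.uncurry_def]; fun_prop) hpr
  exact ((hy.comp continuous_snd).sub hint).div (hgr.comp hpr) fun _ => (growth_pos _).ne'

lemma abs_relaxationMap_sub_le (hg : Continuous g) (hg0 : ∀ s, 0 ≤ g s) (hk : Continuous k)
    {B B' : ℝ × ℝ → ℝ} (hB : Continuous B) (hB' : Continuous B') {c : ℝ}
    (hc : ∀ p, |B p - B' p| ≤ c) (p : ℝ × ℝ) :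
    |relaxationMap hlr g k y₀ B p - relaxationMap hlr g k y₀ B' p| ≤
      (1 - (growth g l r)⁻¹) * c := by
  have hgr := continuous_growth (l := l) hg
  set ρ : ℝ := (projIcc l r hlr p.1).1
  have hρl : l ≤ ρ := (projIcc l r hlr p.1).2.1
  have hE : growth g l ρ ≤ growth g l r := monotone_growth hg hg0 (projIcc l r hlr p.1).2.2
  have hE0 : 0 < growth g l ρ := growth_pos ρ
  have hc0 : 0 ≤ c := (abs_nonneg _).trans (hc p)
  have hdiff : relaxationMap hlr g k y₀ B p - relaxationMap hlr g k y₀ B' p =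
      (∫ s in l..ρ, g s * growth g l s * (B' (s, 2 * k s - p.2) - B (s, 2 * k s - p.2))) /
        growth g l ρ := by
    simp only [mul_sub]
    rw [intervalIntegral.integral_sub (Continuous.intervalIntegrable (by fun_prop) _ _)
      (Continuous.intervalIntegrable (by fun_prop) _ _), relaxationMap, relaxationMap]
    ring
  rw [hdiff, abs_div, abs_of_pos hE0]
  calc _ ≤ (growth g l ρ - 1) * c / growth g l ρ := by
        gcongr
        exact abs_integral_mul_growth_mul_le hg hg0 hρl fun s => by rw [abs_sub_comm]; exact hc _
    _ = (1 - (growth g l ρ)⁻¹) * c := by field_simp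
    _ ≤ (1 - (growth g l r)⁻¹) * c := by gcongr

lemma abs_relaxationMap_le (hg : Continuous g) (hg0 : ∀ s, 0 ≤ g s) (hy : ∀ x, |y₀ x| ≤ 1)
    {B : ℝ × ℝ → ℝ} {c : ℝ} (hB : ∀ p, |B p| ≤ c) (p : ℝ × ℝ) :
    |relaxationMap hlr g k y₀ B p| ≤ 1 + c := by
  set ρ : ℝ := (projIcc l r hlr p.1).1
  have hρl : l ≤ ρ := (projIcc l r hlr p.1).2.1
  have hE1 : 1 ≤ growth g l ρ := one_le_growth hg hg0 hρl
  have hc0 : 0 ≤ c := (abs_nonneg _).trans (hB p)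
  have hint := abs_integral_mul_growth_mul_le hg hg0 hρl (f := fun s => B (s, 2 * k s - p.2))
    fun s => hB _
  rw [relaxationMap, abs_div, abs_of_pos (growth_pos (g := g) (l := l) ρ),
    div_le_iff₀ (growth_pos _)]
  calc _ ≤ 1 + (growth g l ρ - 1) * c := (abs_sub _ _).trans (add_le_add (hy _) hint)
    _ ≤ (1 + c) * growth g l ρ := by nlinarith

/-- Below `-σ` and above `2k + σ` the initial profile and the reflected one have opposite signs and
modulus one, so that the two contributions to Duhamel's formula combine to a constant. -/
lemma isTransition_relaxationMap (hg : Continuous g) (hg0 : ∀ s, 0 ≤ g s) (hk : Continuous k)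
    (hkm : MonotoneOn k (Icc l r)) (hkl : 0 ≤ k l) (hy : IsTransition (-σ) σ y₀)
    {B : ℝ × ℝ → ℝ} (hB : Continuous B)
    (hBt : ∀ ρ, IsTransition (-σ) (2 * k (projIcc l r hlr ρ) + σ) fun x => B (ρ, x)) (ρ : ℝ) :
    IsTransition (-σ) (2 * k (projIcc l r hlr ρ) + σ)
      fun x => relaxationMap hlr g k y₀ B (ρ, x) := by
  have hgr := continuous_growth (l := l) hg
  obtain ⟨hρl, hρr⟩ := (projIcc l r hlr ρ).2
  have hconst {x c : ℝ} (hx : ∀ s ∈ Icc l (projIcc l r hlr ρ : ℝ), B (s, 2 * k s - x) = c) :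
      relaxationMap hlr g k y₀ B (ρ, x) = (y₀ x + c) / growth g l (projIcc l r hlr ρ) - c := by
    have : ∫ s in l..projIcc l r hlr ρ, g s * growth g l s * B (s, 2 * k s - x) =
        ∫ s in l..projIcc l r hlr ρ, g s * growth g l s * c :=
      intervalIntegral.integral_congr fun s hs => by
        rw [uIcc_of_le hρl] at hs
        simp only [hx s hs]
    have hE := growth_pos (g := g) (l := l) (projIcc l r hlr ρ)
    rw [relaxationMap, this, intervalIntegral.integral_mul_const, integral_mul_growth hg]
    field_simp
    ring
  refine ⟨fun x x' hxx' => ?_, fun x hx => ?_, fun x hx => ?_⟩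
  · refine div_le_div_of_nonneg_right (sub_le_sub (hy.monotone hxx') ?_) (growth_pos _).le
    refine intervalIntegral.integral_mono_on hρl (Continuous.intervalIntegrable (by fun_prop) _ _)
      (Continuous.intervalIntegrable (by fun_prop) _ _) fun s _ => ?_
    exact mul_le_mul_of_nonneg_left ((hBt s).monotone (by dsimp only; linarith))
      (mul_nonneg (hg0 s) (growth_pos s).le)
  · rw [hconst (c := 1) fun s hs => (hBt s).eq_one _ ?_, hy.eq_neg_one x hx]
    · simp
    · rw [projIcc_of_mem hlr ⟨hs.1, hs.2.trans hρr⟩]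
      linarith
  · have hkρ : 0 ≤ k (projIcc l r hlr ρ) := hkl.trans (hkm ⟨le_rfl, hlr⟩ ⟨hρl, hρr⟩ hρl)
    rw [hconst (c := -1) fun s hs => (hBt s).eq_neg_one _ ?_, hy.eq_one x (by linarith)]
    · simp
    · have := hkm ⟨hs.1, hs.2.trans hρr⟩ ⟨hρl, hρr⟩ hs.2
      linarith

open scoped BoundedContinuousFunction in
lemma exists_relaxationMap_fixedPoint (hg : Continuous g) (hg0 : ∀ s, 0 ≤ g s) (hk : Continuous k)
    (hkm : MonotoneOn k (Icc l r)) (hkl : 0 ≤ k l) (hy : Continuous y₀)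
    (hyt : IsTransition (-σ) σ y₀) :
    ∃ B : ℝ × ℝ → ℝ, Continuous B ∧
      (∀ ρ, IsTransition (-σ) (2 * k (projIcc l r hlr ρ) + σ) fun x => B (ρ, x)) ∧
      relaxationMap hlr g k y₀ B = B := by
  let Φ (B : ℝ × ℝ →ᵇ ℝ) : ℝ × ℝ →ᵇ ℝ := .ofNormedAddCommGroup (relaxationMap hlr g k y₀ B)
    (continuous_relaxationMap hlr hg hk hy B.continuous) (1 + ‖B‖)
    (abs_relaxationMap_le hlr hg hg0 hyt.abs_le_one B.norm_coe_le_norm)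
  have hE1 : (growth g l r)⁻¹ ≤ 1 := inv_le_one_of_one_le₀ (one_le_growth hg hg0 hlr)
  have hΦ : ContractingWith (1 - (growth g l r)⁻¹).toNNReal Φ := by
    refine ⟨?_, LipschitzWith.of_dist_le_mul fun B B' => ?_⟩
    · rw [Real.toNNReal_lt_one]
      linarith [inv_pos.2 (growth_pos (g := g) (l := l) r)]
    · rw [Real.coe_toNNReal _ (sub_nonneg.2 hE1),
        BoundedContinuousFunction.dist_le (mul_nonneg (sub_nonneg.2 hE1) dist_nonneg)]
      exact abs_relaxationMap_sub_le hlr hg hg0 hk B.continuous B'.continuous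
        fun p => by rw [← Real.dist_eq]; exact BoundedContinuousFunction.dist_coe_le_dist p
  let C : Set (ℝ × ℝ →ᵇ ℝ) :=
    {B | ∀ ρ, IsTransition (-σ) (2 * k (projIcc l r hlr ρ) + σ) fun x => B (ρ, x)}
  have hC : IsClosed C := by
    simp only [C, ofPred_forall]
    exact isClosed_iInter fun ρ => (isClosed_setOf_isTransition _ _).preimage
      (f := fun (B : ℝ × ℝ →ᵇ ℝ) x => B (ρ, x)) (by fun_prop)
  have hΦC : MapsTo Φ C C := fun B hB =>
    isTransition_relaxationMap hlr hg hg0 hk hkm hkl hyt B.continuous hB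
  have hpr : Continuous fun p : ℝ × ℝ => (projIcc l r hlr p.1 : ℝ) :=
    continuous_subtype_val.comp (continuous_projIcc.comp continuous_fst)
  let B₀ : ℝ × ℝ →ᵇ ℝ := .ofNormedAddCommGroup
    (fun p => y₀ (p.2 - 2 * k (projIcc l r hlr p.1)))
    (hy.comp (continuous_snd.sub ((hk.comp hpr).const_mul 2))) 1 fun _ => hyt.abs_le_one _
  have hB₀ : B₀ ∈ C := fun ρ => by
    have hkρ : 0 ≤ k (projIcc l r hlr ρ) :=
      hkl.trans (hkm ⟨le_rfl, hlr⟩ (projIcc l r hlr ρ).2 (projIcc l r hlr ρ).2.1)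
    exact ⟨fun x x' h => hyt.monotone (by dsimp only; linarith),
      fun x hx => hyt.eq_neg_one _ (by dsimp only; linarith),
      fun x hx => hyt.eq_one _ (by dsimp only; linarith)⟩
  obtain ⟨B, hB, hfix, -⟩ := (hΦ.restrict hΦC).exists_fixedPoint' hC.isComplete hΦC hB₀
    (edist_ne_top _ _)
  exact ⟨B, B.continuous, hB, congrArg DFunLike.coe hfix⟩

lemma exists_reflected_relaxation (hlr : l ≤ r) (hg : Continuous g) (hg0 : ∀ s, 0 ≤ g s)
    (hk : Continuous k) (hkm : MonotoneOn k (Icc l r)) (hkl : 0 ≤ k l) (hy : Continuous y₀)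
    (hyt : IsTransition (-σ) σ y₀) :
    ∃ A : ℝ → ℝ → ℝ, Continuous (Function.uncurry A) ∧
      (∀ ρ ∈ Icc l r, IsTransition (-σ) (2 * k ρ + σ) (A ρ)) ∧ A l = y₀ ∧
      ∀ ρ ∈ Ioo l r, ∀ x,
        HasDerivAt (fun s => A s x) (-g ρ * (A ρ x + A ρ (2 * k ρ - x))) ρ := by
  obtain ⟨B, hB, hBt, hfix⟩ := exists_relaxationMap_fixedPoint hlr hg hg0 hk hkm hkl hy hyt
  have hgr := continuous_growth (l := l) hg
  have hduhamel {ρ : ℝ} (hρ : ρ ∈ Icc l r) (x : ℝ) : B (ρ, x) =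
      (y₀ x - ∫ s in l..ρ, g s * growth g l s * B (s, 2 * k s - x)) / growth g l ρ := by
    conv_lhs => rw [← hfix]
    simp only [relaxationMap, projIcc_of_mem hlr hρ]
  refine ⟨fun ρ x => B (ρ, x), hB, fun ρ hρ => ?_, funext fun x => ?_, fun ρ hρ x => ?_⟩
  · simpa only [projIcc_of_mem hlr hρ] using hBt ρ
  · simp [hduhamel ⟨le_rfl, hlr⟩, growth_self]
  · have hint : Continuous fun s => g s * growth g l s * B (s, 2 * k s - x) := by fun_prop
    have hd := ((hint.integral_hasStrictDerivAt l ρ).hasDerivAt.const_sub (y₀ x)).div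
      (hasDerivAt_growth (l := l) hg ρ) (growth_pos (g := g) (l := l) ρ).ne'
    refine (hd.congr_of_eventuallyEq ?_).congr_deriv ?_
    · filter_upwards [Ioo_mem_nhds hρ.1 hρ.2] with s hs using hduhamel ⟨hs.1.le, hs.2.le⟩ x
    · have := growth_pos (g := g) (l := l) ρ
      simp only [hduhamel ⟨hρ.1.le, hρ.2.le⟩ x]
      field_simp
      ring

end Relaxation

/-! ### Functions of two real variables -/

/-- `f` has continuous partial derivatives `f₁`, `f₂` on the strip `I × ℝ`. -/
structure HasPartials (f f₁ f₂ : ℝ → ℝ → ℝ) (I : Set ℝ) : Prop where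
  left : ∀ ρ ∈ I, ∀ u, HasDerivAt (fun s => f s u) (f₁ ρ u) ρ
  right : ∀ ρ ∈ I, ∀ u, HasDerivAt (fun v => f ρ v) (f₂ ρ u) u
  continuousOn_left : ContinuousOn (Function.uncurry f₁) (I ×ˢ univ)
  continuousOn_right : ContinuousOn (Function.uncurry f₂) (I ×ˢ univ)

lemma HasPartials.comp {f f₁ f₂ : ℝ → ℝ → ℝ} {I : Set ℝ} (h : HasPartials f f₁ f₂ I)
    (hI : IsOpen I) {x y : ℝ → ℝ} {x' y' t : ℝ} (hx : HasDerivAt x x' t) (hy : HasDerivAt y y' t)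
    (ht : x t ∈ I) :
    HasDerivAt (fun s => f (x s) (y s)) (f₁ (x t) (y t) * x' + f₂ (x t) (y t) * y') t := by
  have hN : I ×ˢ (univ : Set ℝ) ∈ nhds (x t, y t) := (hI.prod isOpen_univ).mem_nhds ⟨ht, mem_univ _⟩
  have hspan : Continuous fun c : ℝ => ContinuousLinearMap.toSpanSingleton ℝ c :=
    (ContinuousLinearMap.toSpanSingletonLE ℝ ℝ ℝ).toLinearMap.continuous_of_finiteDimensional
  have hf := hasStrictFDerivAt_uncurry_coprod (𝕜 := ℝ) (u := (x t, y t)) (f := f)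
    (f₁ := fun a b => .toSpanSingleton ℝ (f₁ a b)) (f₂ := fun a b => .toSpanSingleton ℝ (f₂ a b))
    (by filter_upwards [hN] with v hv using (h.left v.1 hv.1 v.2).hasFDerivAt)
    (by filter_upwards [hN] with v hv using (h.right v.1 hv.1 v.2).hasFDerivAt)
    (hspan.continuousAt.comp (h.continuousOn_left.continuousAt hN))
    (hspan.continuousAt.comp (h.continuousOn_right.continuousAt hN))
  refine (hf.hasFDerivAt.comp_hasDerivAt t (hx.prodMk hy)).congr_deriv ?_
  simp [Function.HasUncurry.uncurry]
  ring

lemma hasDerivAt_intervalIntegral_of_continuousOn {f f₁ : ℝ → ℝ → ℝ} {I : Set ℝ} (hI : IsOpen I)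
    {α β : ℝ} (h : ∀ ρ ∈ I, ∀ u ∈ uIcc α β, HasDerivAt (fun s => f s u) (f₁ ρ u) ρ)
    (hf : ContinuousOn (Function.uncurry f) (I ×ˢ uIcc α β))
    (hf₁ : ContinuousOn (Function.uncurry f₁) (I ×ˢ uIcc α β)) {ρ : ℝ} (hρ : ρ ∈ I) :
    HasDerivAt (fun s => ∫ v in α..β, f s v) (∫ v in α..β, f₁ ρ v) ρ := by
  obtain ⟨e, he, hsub⟩ := Metric.nhds_basis_closedBall.mem_iff.1 (hI.mem_nhds hρ)
  obtain ⟨C, hC⟩ := ((isCompact_closedBall ρ e).prod isCompact_uIcc).exists_bound_of_continuousOn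
    (hf₁.mono (prod_mono_left hsub))
  have hslice {φ : ℝ → ℝ → ℝ} (hφ : ContinuousOn (Function.uncurry φ) (I ×ˢ uIcc α β)) {s : ℝ}
      (hs : s ∈ I) : ContinuousOn (φ s) (uIcc α β) :=
    hφ.comp (f := fun v => (s, v)) (by fun_prop) fun v hv => ⟨hs, hv⟩
  refine (intervalIntegral.hasDerivAt_integral_of_dominated_loc_of_deriv_le (bound := fun _ => C)
    (F := f) (F' := f₁) (Metric.closedBall_mem_nhds ρ he) ?_ (hslice hf hρ).intervalIntegrable ?_ ?_
    intervalIntegrable_const ?_).2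
  · filter_upwards [hI.mem_nhds hρ] with s hs
    exact ((hslice hf hs).mono uIoc_subset_uIcc).aestronglyMeasurable measurableSet_uIoc
  · exact ((hslice hf₁ hρ).mono uIoc_subset_uIcc).aestronglyMeasurable measurableSet_uIoc
  · exact Filter.Eventually.of_forall fun v hv s hs => hC (s, v) ⟨hs, uIoc_subset_uIcc hv⟩
  · exact Filter.Eventually.of_forall fun v hv s hs => h s (hsub hs) v (uIoc_subset_uIcc hv)

/-! ### The wave kernel of a sound speed -/

/-- A Riemann invariant `A` for the entropy wave equation with sound speed `c`, on densities in
`[l, r]`. Here `k' = c / ρ` is the characteristic speed in the density-velocity plane and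
`g = (ρ c)' / (2 ρ c)` is the rate at which waves travelling in opposite directions are coupled. -/
structure WaveKernel (l r σ : ℝ) where
  c : ℝ → ℝ
  g : ℝ → ℝ
  k : ℝ → ℝ
  A : ℝ → ℝ → ℝ
  l_pos : 0 < l
  l_lt_r : l < r
  σ_pos : 0 < σ
  continuous_c : Continuous c
  c_pos : ∀ s, 0 < c s
  continuous_g : Continuous g
  continuous_k : Continuous k
  k_left : k l = 0
  hasDerivAt_k : ∀ ρ ∈ Ioo l r, HasDerivAt k (c ρ / ρ) ρ
  hasDerivAt_mul_c : ∀ ρ ∈ Ioo l r, HasDerivAt (fun s => s * c s) (2 * g ρ * (ρ * c ρ)) ρ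
  continuous_uncurry_A : Continuous (Function.uncurry A)
  isTransition_A : ∀ ρ ∈ Icc l r, IsTransition (-σ) (2 * k ρ + σ) (A ρ)
  A_left : A l = fun x => clampUnit (x / σ)
  hasDerivAt_A : ∀ ρ ∈ Ioo l r, ∀ x,
    HasDerivAt (fun s => A s x) (-g ρ * (A ρ x + A ρ (2 * k ρ - x))) ρ

namespace WaveKernel

attribute [fun_prop] continuous_c continuous_g continuous_k

variable {l r σ : ℝ} (K : WaveKernel l r σ) {X : Type*} [TopologicalSpace X] {f₁ f₂ : X → ℝ}

/-- The primitive of the Riemann invariant. -/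
def prim (ρ x : ℝ) : ℝ := ∫ v in (0)..x, K.A ρ v

/-- The odd part in `u` of `A(k + u)`, which is `∂ᵤV`. -/
def oddPart (ρ u : ℝ) : ℝ := (K.A ρ (K.k ρ + u) - K.A ρ (K.k ρ - u)) / 2

/-- The even part in `u` of `A(k + u)`, which is `∂ᵨV` up to the factor `c / ρ`. -/
def evenPart (ρ u : ℝ) : ℝ := (K.A ρ (K.k ρ + u) + K.A ρ (K.k ρ - u)) / 2

/-- The constant of integration, depending on the density, in the definition of `V`. -/
def shift (ρ : ℝ) : ℝ := ∫ s in l..ρ, K.g s * K.prim s (2 * K.k s)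

/-- The derivative of the entropy with respect to the momentum. -/
def V (ρ u : ℝ) : ℝ := (K.prim ρ (K.k ρ + u) + K.prim ρ (K.k ρ - u)) / 2 + K.shift ρ

/-- The potential with `∂ᵨJ = c² ∂ᵤV` and `∂ᵤJ = ρ² ∂ᵨV`. -/
def J (ρ u : ℝ) : ℝ := ρ * K.c ρ * ((K.prim ρ (K.k ρ + u) - K.prim ρ (K.k ρ - u)) / 2)

/-- The entropy per unit mass. -/
def F (ρ u : ℝ) : ℝ := ∫ v in (0)..u, K.V ρ v

/-- The part of the entropy flux which is not convected: the flux is `u ρ F + H`. -/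
def H (ρ u : ℝ) : ℝ := ∫ s in l..ρ, K.c s ^ 2 * K.V s u

/-- The pressure above the reference density `l`. -/
def press (ρ : ℝ) : ℝ := ∫ s in l..ρ, K.c s ^ 2

/-- Half the width of the velocity window outside which `V` is `|u|` up to a constant. -/
def width (ρ : ℝ) : ℝ := K.k ρ + σ

@[fun_prop]
lemma continuous_A (h₁ : Continuous f₁) (h₂ : Continuous f₂) :
    Continuous fun p => K.A (f₁ p) (f₂ p) :=
  K.continuous_uncurry_A.comp (h₁.prodMk h₂)

@[fun_prop]
lemma continuous_prim (h₁ : Continuous f₁) (h₂ : Continuous f₂) :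
    Continuous fun p => K.prim (f₁ p) (f₂ p) :=
  intervalIntegral.continuous_parametric_intervalIntegral_of_continuous
    (f := fun p v => K.A (f₁ p) v) (by simp only [Function.uncurry_def]; fun_prop) h₂

@[fun_prop]
lemma continuous_oddPart (h₁ : Continuous f₁) (h₂ : Continuous f₂) :
    Continuous fun p => K.oddPart (f₁ p) (f₂ p) := by
  unfold oddPart
  fun_prop

@[fun_prop]
lemma continuous_evenPart (h₁ : Continuous f₁) (h₂ : Continuous f₂) :
    Continuous fun p => K.evenPart (f₁ p) (f₂ p) := by
  unfold evenPart
  fun_prop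

lemma hasDerivAt_shift (ρ : ℝ) : HasDerivAt K.shift (K.g ρ * K.prim ρ (2 * K.k ρ)) ρ :=
  (Continuous.integral_hasStrictDerivAt (f := fun s => K.g s * K.prim s (2 * K.k s))
    (by fun_prop) l ρ).hasDerivAt

@[fun_prop]
lemma continuous_shift : Continuous K.shift :=
  continuous_iff_continuousAt.2 fun s => (K.hasDerivAt_shift s).continuousAt

@[fun_prop]
lemma continuous_V (h₁ : Continuous f₁) (h₂ : Continuous f₂) :
    Continuous fun p => K.V (f₁ p) (f₂ p) := by
  unfold V
  fun_prop

@[fun_prop]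
lemma continuous_J (h₁ : Continuous f₁) (h₂ : Continuous f₂) :
    Continuous fun p => K.J (f₁ p) (f₂ p) := by
  unfold J
  fun_prop

@[fun_prop]
lemma continuous_F (h₁ : Continuous f₁) (h₂ : Continuous f₂) :
    Continuous fun p => K.F (f₁ p) (f₂ p) :=
  intervalIntegral.continuous_parametric_intervalIntegral_of_continuous
    (f := fun p v => K.V (f₁ p) v) (by simp only [Function.uncurry_def]; fun_prop) h₂

@[fun_prop]
lemma continuous_H (h₁ : Continuous f₁) (h₂ : Continuous f₂) :
    Continuous fun p => K.H (f₁ p) (f₂ p) :=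
  intervalIntegral.continuous_parametric_intervalIntegral_of_continuous
    (f := fun p s => K.c s ^ 2 * K.V s (f₂ p)) (by simp only [Function.uncurry_def]; fun_prop) h₁

lemma hasDerivAt_press (ρ : ℝ) : HasDerivAt K.press (K.c ρ ^ 2) ρ :=
  ((K.continuous_c.pow 2).integral_hasStrictDerivAt l ρ).hasDerivAt

@[fun_prop]
lemma continuous_press : Continuous K.press :=
  continuous_iff_continuousAt.2 fun s => (K.hasDerivAt_press s).continuousAt

section Derivatives

lemma hasDerivAt_prim_right (ρ x : ℝ) : HasDerivAt (K.prim ρ) (K.A ρ x) x :=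
  (Continuous.integral_hasStrictDerivAt (f := K.A ρ) (by fun_prop) 0 x).hasDerivAt

lemma hasDerivAt_prim_left {ρ : ℝ} (hρ : ρ ∈ Ioo l r) (x : ℝ) :
    HasDerivAt (fun s => K.prim s x)
      (-K.g ρ * (K.prim ρ x + K.prim ρ (2 * K.k ρ) - K.prim ρ (2 * K.k ρ - x))) ρ := by
  have hA (α β : ℝ) : IntervalIntegrable (K.A ρ) volume α β :=
    Continuous.intervalIntegrable (by fun_prop) _ _
  have h := hasDerivAt_intervalIntegral_of_continuousOn (f := K.A)
    (f₁ := fun ρ x => -K.g ρ * (K.A ρ x + K.A ρ (2 * K.k ρ - x))) isOpen_Ioo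
    (α := 0) (β := x) (fun ρ hρ u _ => K.hasDerivAt_A ρ hρ u) K.continuous_uncurry_A.continuousOn
    (Continuous.continuousOn (by simp only [Function.uncurry_def]; fun_prop)) hρ
  refine h.congr_deriv ?_
  rw [intervalIntegral.integral_const_mul, intervalIntegral.integral_add (hA _ _)
      (Continuous.intervalIntegrable (by fun_prop) _ _),
    intervalIntegral.integral_comp_sub_left (K.A ρ), sub_zero, prim, prim, prim,
    ← intervalIntegral.integral_interval_sub_left (hA 0 (2 * K.k ρ)) (hA 0 (2 * K.k ρ - x))]
  ring

lemma hasPartials_prim : HasPartials K.prim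
    (fun ρ x => -K.g ρ * (K.prim ρ x + K.prim ρ (2 * K.k ρ) - K.prim ρ (2 * K.k ρ - x))) K.A
    (Ioo l r) where
  left _ hρ := K.hasDerivAt_prim_left hρ
  right ρ _ := K.hasDerivAt_prim_right ρ
  continuousOn_left := Continuous.continuousOn (by simp only [Function.uncurry_def]; fun_prop)
  continuousOn_right := K.continuous_uncurry_A.continuousOn

lemma hasDerivAt_V_right (ρ u : ℝ) : HasDerivAt (K.V ρ) (K.oddPart ρ u) u := by
  have hadd := (K.hasDerivAt_prim_right ρ _).comp u ((hasDerivAt_id' u).const_add (K.k ρ))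
  have hsub := (K.hasDerivAt_prim_right ρ _).comp u ((hasDerivAt_id' u).const_sub (K.k ρ))
  refine (((hadd.add hsub).div_const 2).add_const (K.shift ρ)).congr_deriv ?_
  rw [oddPart]
  ring

lemma hasDerivAt_J_right (ρ u : ℝ) : HasDerivAt (K.J ρ) (ρ * K.c ρ * K.evenPart ρ u) u := by
  have hadd := (K.hasDerivAt_prim_right ρ _).comp u ((hasDerivAt_id' u).const_add (K.k ρ))
  have hsub := (K.hasDerivAt_prim_right ρ _).comp u ((hasDerivAt_id' u).const_sub (K.k ρ))
  refine (((hadd.sub hsub).div_const 2).const_mul (ρ * K.c ρ)).congr_deriv ?_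
  rw [evenPart]
  ring

lemma hasDerivAt_prim_add {ρ : ℝ} (hρ : ρ ∈ Ioo l r) (u : ℝ) :
    HasDerivAt (fun s => K.prim s (K.k s + u))
      (-K.g ρ * (K.prim ρ (K.k ρ + u) + K.prim ρ (2 * K.k ρ) - K.prim ρ (K.k ρ - u)) +
        K.A ρ (K.k ρ + u) * (K.c ρ / ρ)) ρ := by
  refine (K.hasPartials_prim.comp isOpen_Ioo (hasDerivAt_id' ρ)
    ((K.hasDerivAt_k ρ hρ).add_const u) hρ).congr_deriv ?_
  rw [show 2 * K.k ρ - (K.k ρ + u) = K.k ρ - u by ring, mul_one]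

lemma hasDerivAt_V_left {ρ : ℝ} (hρ : ρ ∈ Ioo l r) (u : ℝ) :
    HasDerivAt (fun s => K.V s u) (K.c ρ / ρ * K.evenPart ρ u) ρ := by
  have hadd := K.hasDerivAt_prim_add hρ u
  have hsub := K.hasDerivAt_prim_add hρ (-u)
  simp only [← sub_eq_add_neg, sub_neg_eq_add] at hsub
  refine (((hadd.add hsub).div_const 2).add (K.hasDerivAt_shift ρ)).congr_deriv ?_
  rw [evenPart]
  ring

lemma hasDerivAt_J_left {ρ : ℝ} (hρ : ρ ∈ Ioo l r) (u : ℝ) :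
    HasDerivAt (fun s => K.J s u) (K.c ρ ^ 2 * K.oddPart ρ u) ρ := by
  have hadd := K.hasDerivAt_prim_add hρ u
  have hsub := K.hasDerivAt_prim_add hρ (-u)
  simp only [← sub_eq_add_neg, sub_neg_eq_add] at hsub
  refine ((K.hasDerivAt_mul_c ρ hρ).mul ((hadd.sub hsub).div_const 2)).congr_deriv ?_
  have : ρ ≠ 0 := (K.l_pos.trans hρ.1).ne'
  simp only [oddPart, Pi.sub_apply]
  field_simp
  ring

lemma hasPartials_V :
    HasPartials K.V (fun ρ u => K.c ρ / ρ * K.evenPart ρ u) K.oddPart (Ioo l r) where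
  left _ hρ := K.hasDerivAt_V_left hρ
  right ρ _ := K.hasDerivAt_V_right ρ
  continuousOn_left := by
    simp only [Function.uncurry_def]
    exact (ContinuousOn.div (by fun_prop) (by fun_prop)
      fun p hp => (K.l_pos.trans hp.1.1).ne').mul (by fun_prop)
  continuousOn_right := (K.continuous_oddPart continuous_fst continuous_snd).continuousOn

lemma hasPartials_J :
    HasPartials K.J (fun ρ u => K.c ρ ^ 2 * K.oddPart ρ u)
      (fun ρ u => ρ * K.c ρ * K.evenPart ρ u) (Ioo l r) where
  left _ hρ := K.hasDerivAt_J_left hρ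
  right ρ _ := K.hasDerivAt_J_right ρ
  continuousOn_left := Continuous.continuousOn (by simp only [Function.uncurry_def]; fun_prop)
  continuousOn_right := Continuous.continuousOn (by simp only [Function.uncurry_def]; fun_prop)

lemma J_zero (ρ : ℝ) : K.J ρ 0 = 0 := by simp [J]

lemma A_left_neg (x : ℝ) : K.A l (-x) = -K.A l x := by
  simp only [K.A_left, neg_div, clampUnit_neg]

lemma prim_left_neg (x : ℝ) : K.prim l (-x) = K.prim l x := by
  have h := intervalIntegral.integral_comp_neg (a := 0) (b := x) (K.A l)
  simp only [K.A_left_neg, neg_zero, intervalIntegral.integral_neg] at h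
  rw [prim, prim, intervalIntegral.integral_symm, ← h, neg_neg]

lemma J_left (u : ℝ) : K.J l u = 0 := by
  simp [J, K.k_left, K.prim_left_neg]

lemma J_eq_integral {ρ : ℝ} (hρ : ρ ∈ Icc l r) (u : ℝ) :
    K.J ρ u = ∫ s in l..ρ, K.c s ^ 2 * K.oddPart s u := by
  rw [intervalIntegral.integral_eq_sub_of_hasDerivAt_of_le hρ.1 (f := fun s => K.J s u)
    (Continuous.continuousOn (by fun_prop))
    (fun s hs => K.hasDerivAt_J_left ⟨hs.1, hs.2.trans_le hρ.2⟩ u)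
    (Continuous.intervalIntegrable (by fun_prop) _ _), K.J_left, sub_zero]

lemma hasDerivAt_F_left {ρ : ℝ} (hρ : ρ ∈ Ioo l r) (u : ℝ) :
    HasDerivAt (fun s => K.F s u) (K.J ρ u / ρ ^ 2) ρ := by
  have h := hasDerivAt_intervalIntegral_of_continuousOn (f := K.V) isOpen_Ioo
    (α := 0) (β := u) (fun ρ hρ u _ => K.hasPartials_V.left ρ hρ u)
    (K.continuous_V continuous_fst continuous_snd).continuousOn
    (K.hasPartials_V.continuousOn_left.mono (prod_mono_right (subset_univ _))) hρ
  refine h.congr_deriv ?_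
  have hJ := intervalIntegral.integral_eq_sub_of_hasDerivAt (a := 0) (b := u)
    (fun v _ => K.hasDerivAt_J_right ρ v) (Continuous.intervalIntegrable (by fun_prop) _ _)
  rw [K.J_zero, sub_zero, intervalIntegral.integral_const_mul] at hJ
  have : ρ ≠ 0 := (K.l_pos.trans hρ.1).ne'
  rw [intervalIntegral.integral_const_mul, ← hJ]
  field_simp

lemma hasDerivAt_F_right (ρ u : ℝ) : HasDerivAt (K.F ρ) (K.V ρ u) u :=
  (Continuous.integral_hasStrictDerivAt (f := K.V ρ) (by fun_prop) 0 u).hasDerivAt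

lemma hasPartials_F : HasPartials K.F (fun ρ u => K.J ρ u / ρ ^ 2) K.V (Ioo l r) where
  left _ hρ := K.hasDerivAt_F_left hρ
  right ρ _ := K.hasDerivAt_F_right ρ
  continuousOn_left := by
    simp only [Function.uncurry_def]
    exact ContinuousOn.div (by fun_prop) (by fun_prop)
      fun p hp => pow_ne_zero _ (K.l_pos.trans hp.1.1).ne'
  continuousOn_right := (K.continuous_V continuous_fst continuous_snd).continuousOn

lemma hasDerivAt_H_left (ρ u : ℝ) : HasDerivAt (fun s => K.H s u) (K.c ρ ^ 2 * K.V ρ u) ρ :=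
  (Continuous.integral_hasStrictDerivAt (f := fun s => K.c s ^ 2 * K.V s u)
    (by fun_prop) l ρ).hasDerivAt

lemma hasDerivAt_H_right {ρ : ℝ} (hρ : ρ ∈ Icc l r) (u : ℝ) :
    HasDerivAt (K.H ρ) (K.J ρ u) u := by
  have h := hasDerivAt_intervalIntegral_of_continuousOn (f := fun v s => K.c s ^ 2 * K.V s v)
    (f₁ := fun v s => K.c s ^ 2 * K.oddPart s v) (I := univ) isOpen_univ (α := l) (β := ρ)
    (fun v _ s _ => (K.hasDerivAt_V_right s v).const_mul _)
    (Continuous.continuousOn (by simp only [Function.uncurry_def]; fun_prop))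
    (Continuous.continuousOn (by simp only [Function.uncurry_def]; fun_prop)) (mem_univ u)
  exact h.congr_deriv (K.J_eq_integral hρ u).symm

lemma hasPartials_H : HasPartials K.H (fun ρ u => K.c ρ ^ 2 * K.V ρ u) K.J (Ioo l r) where
  left ρ _ := K.hasDerivAt_H_left ρ
  right _ hρ := K.hasDerivAt_H_right (Ioo_subset_Icc_self hρ)
  continuousOn_left := Continuous.continuousOn (by simp only [Function.uncurry_def]; fun_prop)
  continuousOn_right := (K.continuous_J continuous_fst continuous_snd).continuousOn

end Derivatives

section Bounds

variable {ρ : ℝ}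

lemma monotoneOn_k : MonotoneOn K.k (Icc l r) := by
  refine monotoneOn_of_hasDerivWithinAt_nonneg (convex_Icc l r) K.continuous_k.continuousOn
    (f' := fun ρ => K.c ρ / ρ) ?_ ?_ <;> rw [interior_Icc]
  · exact fun x hx => (K.hasDerivAt_k x hx).hasDerivWithinAt
  · exact fun x hx => div_nonneg (K.c_pos x).le (K.l_pos.trans hx.1).le

lemma width_mono {s : ℝ} (hs : l ≤ s) (hsρ : s ≤ ρ) (hρ : ρ ≤ r) : K.width s ≤ K.width ρ :=
  add_le_add_left (K.monotoneOn_k ⟨hs, hsρ.trans hρ⟩ ⟨hs.trans hsρ, hρ⟩ hsρ) σ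

lemma width_left : K.width l = σ := by simp [width, K.k_left]

lemma le_width (hρ : ρ ∈ Icc l r) : σ ≤ K.width ρ :=
  K.width_left.symm.trans_le (K.width_mono le_rfl hρ.1 hρ.2)

lemma width_pos (hρ : ρ ∈ Icc l r) : 0 < K.width ρ := K.σ_pos.trans_le (K.le_width hρ)

lemma abs_oddPart_le (hρ : ρ ∈ Icc l r) (u : ℝ) : |K.oddPart ρ u| ≤ 1 := by
  have hadd := abs_le.1 ((K.isTransition_A ρ hρ).abs_le_one (K.k ρ + u))
  have hsub := abs_le.1 ((K.isTransition_A ρ hρ).abs_le_one (K.k ρ - u))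
  rw [oddPart, abs_le]
  constructor <;> linarith

lemma abs_evenPart_le (hρ : ρ ∈ Icc l r) (u : ℝ) : |K.evenPart ρ u| ≤ 1 := by
  have hadd := abs_le.1 ((K.isTransition_A ρ hρ).abs_le_one (K.k ρ + u))
  have hsub := abs_le.1 ((K.isTransition_A ρ hρ).abs_le_one (K.k ρ - u))
  rw [evenPart, abs_le]
  constructor <;> linarith

lemma monotone_oddPart (hρ : ρ ∈ Icc l r) : Monotone (K.oddPart ρ) := fun u v h => by
  have hadd := (K.isTransition_A ρ hρ).monotone (show K.k ρ + u ≤ K.k ρ + v by linarith)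
  have hsub := (K.isTransition_A ρ hρ).monotone (show K.k ρ - v ≤ K.k ρ - u by linarith)
  rw [oddPart, oddPart]
  linarith

lemma oddPart_nonneg {u : ℝ} (hρ : ρ ∈ Icc l r) (hu : 0 ≤ u) : 0 ≤ K.oddPart ρ u :=
  (show 0 = K.oddPart ρ 0 by simp [oddPart]).trans_le (K.monotone_oddPart hρ hu)

lemma A_of_width_le {u : ℝ} (hρ : ρ ∈ Icc l r) (hu : K.width ρ ≤ u) :
    K.A ρ (K.k ρ + u) = 1 ∧ K.A ρ (K.k ρ - u) = -1 := by
  rw [width] at hu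
  exact ⟨(K.isTransition_A ρ hρ).eq_one _ (by linarith),
    (K.isTransition_A ρ hρ).eq_neg_one _ (by linarith)⟩

lemma oddPart_of_width_le {u : ℝ} (hρ : ρ ∈ Icc l r) (hu : K.width ρ ≤ u) :
    K.oddPart ρ u = 1 := by
  obtain ⟨hadd, hsub⟩ := K.A_of_width_le hρ hu
  norm_num [oddPart, hadd, hsub]

lemma evenPart_of_width_le {u : ℝ} (hρ : ρ ∈ Icc l r) (hu : K.width ρ ≤ u) :
    K.evenPart ρ u = 0 := by
  obtain ⟨hadd, hsub⟩ := K.A_of_width_le hρ hu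
  norm_num [evenPart, hadd, hsub]

lemma V_neg (ρ u : ℝ) : K.V ρ (-u) = K.V ρ u := by
  simp only [V, sub_neg_eq_add, ← sub_eq_add_neg]
  ring

lemma J_neg (ρ u : ℝ) : K.J ρ (-u) = -K.J ρ u := by
  simp only [J, sub_neg_eq_add, ← sub_eq_add_neg]
  ring

lemma F_neg (ρ u : ℝ) : K.F ρ (-u) = -K.F ρ u := by
  have h := intervalIntegral.integral_comp_neg (a := 0) (b := u) (K.V ρ)
  simp only [K.V_neg, neg_zero] at h
  rw [F, F, h, intervalIntegral.integral_symm]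

lemma F_zero (ρ : ℝ) : K.F ρ 0 = 0 := by simp [F]

lemma V_abs (ρ u : ℝ) : K.V ρ |u| = K.V ρ u := (abs_choice u).elim (congrArg _)
  fun h => by rw [h, K.V_neg]

lemma H_abs (ρ u : ℝ) : K.H ρ |u| = K.H ρ u := by simp only [H, K.V_abs]

lemma mul_J_abs (ρ u : ℝ) : |u| * K.J ρ |u| = u * K.J ρ u := by
  rcases abs_choice u with h | h <;> simp [h, K.J_neg]

lemma mul_F_abs (ρ u : ℝ) : |u| * K.F ρ |u| = u * K.F ρ u := by
  rcases abs_choice u with h | h <;> simp [h, K.F_neg]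

lemma V_left (u : ℝ) : K.V l u = K.prim l u := by
  simp [V, K.k_left, shift, K.prim_left_neg]

lemma V_left_of_le {u : ℝ} (hu : σ ≤ u) : K.V l u = u - σ / 2 := by
  have hσ := K.σ_pos
  have hA (α β : ℝ) : IntervalIntegrable (K.A l) volume α β :=
    Continuous.intervalIntegrable (by fun_prop) _ _
  have hinner : ∫ v in (0)..σ, K.A l v = ∫ v in (0)..σ, v / σ := by
    refine intervalIntegral.integral_congr fun v hv => ?_
    rw [uIcc_of_le hσ.le] at hv
    have hv0 : 0 ≤ v / σ := div_nonneg hv.1 hσ.le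
    simp only [K.A_left, clampUnit]
    rw [min_eq_right ((div_le_one hσ).2 hv.2), max_eq_right (by linarith)]
  have houter : ∫ v in σ..u, K.A l v = ∫ _ in σ..u, (1 : ℝ) := by
    refine intervalIntegral.integral_congr fun v hv => ?_
    rw [uIcc_of_le hu] at hv
    simp only [K.A_left, (isTransition_clampUnit_div hσ).eq_one v hv.1]
  rw [V_left, prim, ← intervalIntegral.integral_add_adjacent_intervals (hA 0 σ) (hA σ u), hinner,
    houter, intervalIntegral.integral_div, integral_id, intervalIntegral.integral_const,
    smul_eq_mul]
  field_simp
  ring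

lemma V_of_width_le {u : ℝ} (hρ : ρ ∈ Icc l r) (hu : K.width ρ ≤ u) : K.V ρ u = u - σ / 2 := by
  have h := intervalIntegral.integral_eq_sub_of_hasDerivAt_of_le hρ.1 (f := fun s => K.V s u)
    (f' := fun _ => 0) (Continuous.continuousOn (by fun_prop))
    (fun s hs => by
      have hs' : s ∈ Icc l r := ⟨hs.1.le, hs.2.le.trans hρ.2⟩
      have := K.hasDerivAt_V_left (ρ := s) ⟨hs.1, hs.2.trans_le hρ.2⟩ u
      rwa [K.evenPart_of_width_le hs' ((K.width_mono hs.1.le hs.2.le hρ.2).trans hu),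
        mul_zero] at this)
    intervalIntegrable_const
  rw [intervalIntegral.integral_zero, K.V_left_of_le ((K.le_width hρ).trans hu)] at h
  linarith

lemma monotone_sub_V (hρ : ρ ∈ Icc l r) : Monotone fun v => v - K.V ρ v :=
  monotone_of_hasDerivAt_nonneg (fun v => (hasDerivAt_id' v).sub (K.hasDerivAt_V_right ρ v))
    fun v => sub_nonneg.2 (abs_le.1 (K.abs_oddPart_le hρ v)).2

lemma monotoneOn_V (hρ : ρ ∈ Icc l r) : MonotoneOn (K.V ρ) (Ici 0) :=
  monotoneOn_of_hasDerivWithinAt_nonneg (convex_Ici 0) (Continuous.continuousOn (by fun_prop))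
    (fun x _ => (K.hasDerivAt_V_right ρ x).hasDerivWithinAt)
    fun _ hx => K.oddPart_nonneg hρ (interior_subset hx)

lemma V_ge (hρ : ρ ∈ Icc l r) (u : ℝ) : |u| - σ / 2 ≤ K.V ρ u := by
  have h : |u| - K.V ρ |u| ≤ max |u| (K.width ρ) - K.V ρ (max |u| (K.width ρ)) :=
    K.monotone_sub_V hρ (le_max_left _ _)
  rw [K.V_of_width_le hρ (le_max_right _ _), K.V_abs] at h
  linarith

lemma V_le (hρ : ρ ∈ Icc l r) (u : ℝ) : K.V ρ u ≤ |u| + K.width ρ := by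
  have hw := K.width_pos hρ
  have hu := abs_nonneg u
  have h := K.monotoneOn_V hρ hu (hu.trans (le_max_left |u| (K.width ρ))) (le_max_left _ _)
  rw [K.V_of_width_le hρ (le_max_right _ _), K.V_abs] at h
  have hmax : max |u| (K.width ρ) ≤ |u| + K.width ρ := max_le (by linarith) (by linarith)
  linarith [K.σ_pos]

lemma abs_V_le (hρ : ρ ∈ Icc l r) (u : ℝ) : |K.V ρ u| ≤ |u| + K.width ρ :=
  abs_le.2 ⟨by linarith [K.V_ge hρ u, abs_nonneg u, K.le_width hρ, K.σ_pos], K.V_le hρ u⟩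

lemma abs_F_le (hρ : ρ ∈ Icc l r) (u : ℝ) : |K.F ρ u| ≤ |u| * (|u| + K.width ρ) := by
  have h := intervalIntegral.norm_integral_le_of_norm_le_const (a := 0) (b := u)
    (f := K.V ρ) (C := |u| + K.width ρ) fun v hv => by
      have hvu := abs_sub_left_of_mem_uIcc (uIoc_subset_uIcc hv)
      rw [sub_zero, sub_zero] at hvu
      exact (K.abs_V_le hρ v).trans (by linarith)
  rwa [sub_zero, norm_eq_abs, mul_comm] at h

lemma F_ge {u : ℝ} (hρ : ρ ∈ Icc l r) (hu : 0 ≤ u) : u ^ 2 / 2 - σ / 2 * u ≤ K.F ρ u := by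
  calc u ^ 2 / 2 - σ / 2 * u = ∫ v in (0)..u, (v - σ / 2) := by
        rw [intervalIntegral.integral_sub intervalIntegral.intervalIntegrable_id
          intervalIntegrable_const, integral_id, intervalIntegral.integral_const, smul_eq_mul]
        ring
    _ ≤ K.F ρ u := by
        refine intervalIntegral.integral_mono_on hu
          (Continuous.intervalIntegrable (by fun_prop) _ _)
          (Continuous.intervalIntegrable (by fun_prop) _ _) fun v hv => ?_
        simpa only [abs_of_nonneg hv.1] using K.V_ge hρ v

lemma mul_F_ge (hρ : ρ ∈ Icc l r) (u : ℝ) : |u| ^ 3 / 2 - σ / 2 * u ^ 2 ≤ u * K.F ρ u := by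
  have h := mul_le_mul_of_nonneg_left (K.F_ge hρ (abs_nonneg u)) (abs_nonneg u)
  rw [K.mul_F_abs] at h
  rw [← sq_abs u]
  linarith

lemma F_le {u : ℝ} (hρ : ρ ∈ Icc l r) (hu : 0 ≤ u) : K.F ρ u ≤ u * K.V ρ 0 + u ^ 2 / 2 := by
  calc K.F ρ u ≤ ∫ v in (0)..u, (v + K.V ρ 0) := by
        refine intervalIntegral.integral_mono_on hu
          (Continuous.intervalIntegrable (by fun_prop) _ _)
          (Continuous.intervalIntegrable (by fun_prop) _ _) fun v hv => ?_
        have : 0 - K.V ρ 0 ≤ v - K.V ρ v := K.monotone_sub_V hρ hv.1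
        linarith
    _ = u * K.V ρ 0 + u ^ 2 / 2 := by
        rw [intervalIntegral.integral_add intervalIntegral.intervalIntegrable_id
          intervalIntegrable_const, integral_id, intervalIntegral.integral_const, smul_eq_mul]
        ring

lemma monotone_J (hρ : ρ ∈ Icc l r) : Monotone (K.J ρ) := fun u v h => by
  rw [K.J_eq_integral hρ, K.J_eq_integral hρ]
  exact intervalIntegral.integral_mono_on hρ.1 (Continuous.intervalIntegrable (by fun_prop) _ _)
    (Continuous.intervalIntegrable (by fun_prop) _ _) fun s hs =>
      mul_le_mul_of_nonneg_left (K.monotone_oddPart ⟨hs.1, hs.2.trans hρ.2⟩ h) (sq_nonneg _)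

lemma J_of_width_le {u : ℝ} (hρ : ρ ∈ Icc l r) (hu : K.width ρ ≤ u) :
    K.J ρ u = K.press ρ := by
  rw [K.J_eq_integral hρ, press]
  refine intervalIntegral.integral_congr fun s hs => ?_
  rw [uIcc_of_le hρ.1] at hs
  simp only [K.oddPart_of_width_le ⟨hs.1, hs.2.trans hρ.2⟩
    ((K.width_mono hs.1 hs.2 hρ.2).trans hu), mul_one]

lemma H_of_width_le {u : ℝ} (hρ : ρ ∈ Icc l r) (hu : K.width ρ ≤ u) :
    K.H ρ u = K.press ρ * (u - σ / 2) := by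
  rw [H, press, ← intervalIntegral.integral_mul_const]
  refine intervalIntegral.integral_congr fun s hs => ?_
  rw [uIcc_of_le hρ.1] at hs
  simp only [K.V_of_width_le ⟨hs.1, hs.2.trans hρ.2⟩ ((K.width_mono hs.1 hs.2 hρ.2).trans hu)]

lemma press_nonneg (hρ : l ≤ ρ) : 0 ≤ K.press ρ :=
  intervalIntegral.integral_nonneg hρ fun _ _ => sq_nonneg _

lemma H_zero_le (hρ : ρ ∈ Icc l r) (u : ℝ) : K.H ρ 0 ≤ K.H ρ u := by
  rw [← K.H_abs ρ u]
  exact intervalIntegral.integral_mono_on hρ.1 (Continuous.intervalIntegrable (by fun_prop) _ _)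
    (Continuous.intervalIntegrable (by fun_prop) _ _) fun s hs => mul_le_mul_of_nonneg_left
      (K.monotoneOn_V ⟨hs.1, hs.2.trans hρ.2⟩ self_mem_Ici (abs_nonneg u) (abs_nonneg u))
      (sq_nonneg _)

lemma abs_H_zero_le (hρ : ρ ∈ Icc l r) : |K.H ρ 0| ≤ K.width ρ * K.press ρ := by
  rw [H, press, ← intervalIntegral.integral_const_mul]
  refine (intervalIntegral.abs_integral_le_integral_abs hρ.1).trans <|
    intervalIntegral.integral_mono_on hρ.1 (Continuous.intervalIntegrable (by fun_prop) _ _)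
      (Continuous.intervalIntegrable (by fun_prop) _ _) fun s hs => ?_
  have h := K.abs_V_le ⟨hs.1, hs.2.trans hρ.2⟩ 0
  rw [abs_zero, zero_add] at h
  rw [abs_mul, abs_of_nonneg (sq_nonneg _), mul_comm]
  exact mul_le_mul_of_nonneg_right (h.trans (K.width_mono hs.1 hs.2 hρ.2)) (sq_nonneg _)

/-- `H` is convex in `u`, and its tangent at `|u|` lies below it at the edge of the window, where
`H` and `J` are explicit. -/
lemma mul_J_sub_H_le (hρ : ρ ∈ Icc l r) (u : ℝ) :
    u * K.J ρ u - K.H ρ u ≤ σ / 2 * K.press ρ := by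
  set U := max |u| (K.width ρ)
  have hJU : K.J ρ U = K.press ρ := K.J_of_width_le hρ (le_max_right _ _)
  have hHU : K.H ρ U = K.press ρ * (U - σ / 2) := K.H_of_width_le hρ (le_max_right _ _)
  have huU : |u| ≤ U := le_max_left _ _
  have hJ : |u| * K.J ρ |u| ≤ |u| * K.press ρ :=
    mul_le_mul_of_nonneg_left (hJU ▸ K.monotone_J hρ huU) (abs_nonneg u)
  have hH : K.H ρ U - K.H ρ |u| ≤ K.press ρ * (U - |u|) := by
    refine (convex_Icc |u| U).image_sub_le_mul_sub_of_deriv_le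
      (fun x _ => (K.hasDerivAt_H_right hρ x).continuousAt.continuousWithinAt)
      (fun x _ => (K.hasDerivAt_H_right hρ x).differentiableAt.differentiableWithinAt)
      (fun x hx => ?_) _ (left_mem_Icc.2 huU) _ (right_mem_Icc.2 huU) huU
    rw [(K.hasDerivAt_H_right hρ x).deriv, ← hJU]
    exact K.monotone_J hρ (interior_subset hx).2
  rw [K.mul_J_abs] at hJ
  rw [hHU, K.H_abs] at hH
  linarith

lemma intervalIntegrable_press_div (hρ : l ≤ ρ) :
    IntervalIntegrable (fun s => K.press s / s ^ 2) volume l ρ := by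
  refine ContinuousOn.intervalIntegrable ?_
  rw [uIcc_of_le hρ]
  exact K.continuous_press.continuousOn.div (by fun_prop) fun s hs =>
    pow_ne_zero _ (K.l_pos.trans_le hs.1).ne'

/-- Integrate `∂ᵨF = J / ρ²` at the edge of the window, where `J` is the pressure. -/
lemma width_mul_V_zero_ge (hρ : ρ ∈ Icc l r) :
    (∫ s in l..ρ, K.press s / s ^ 2) - σ / 2 * K.width ρ ≤ K.width ρ * K.V ρ 0 := by
  have hw : 0 ≤ K.width ρ := (K.width_pos hρ).le
  have h := intervalIntegral.integral_eq_sub_of_hasDerivAt_of_le hρ.1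
    (f := fun s => K.F s (K.width ρ)) (f' := fun s => K.press s / s ^ 2)
    (Continuous.continuousOn (by fun_prop))
    (fun s hs => by
      have hs' : s ∈ Icc l r := ⟨hs.1.le, hs.2.le.trans hρ.2⟩
      have := K.hasDerivAt_F_left (ρ := s) ⟨hs.1, hs.2.trans_le hρ.2⟩ (K.width ρ)
      rwa [K.J_of_width_le hs' (K.width_mono hs.1.le hs.2.le hρ.2)] at this)
    (K.intervalIntegrable_press_div hρ.1)
  rw [h]
  linarith [K.F_le hρ hw, K.F_ge ⟨le_rfl, K.l_lt_r.le⟩ hw]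

end Bounds

end WaveKernel

lemma sub_le_sub_of_hasDerivAt_le {f g f' g' : ℝ → ℝ} {a b x : ℝ} (hfc : ContinuousOn f (Icc a b))
    (hgc : ContinuousOn g (Icc a b)) (hf : ∀ x ∈ Ioo a b, HasDerivAt f (f' x) x)
    (hg : ∀ x ∈ Ioo a b, HasDerivAt g (g' x) x) (hfg : ∀ x ∈ Ioo a b, f' x ≤ g' x)
    (hx : x ∈ Icc a b) : f x - f a ≤ g x - g a := by
  have hmono : MonotoneOn (fun x => g x - f x) (Icc a b) :=
    monotoneOn_of_hasDerivWithinAt_nonneg (f' := fun x => g' x - f' x) (convex_Icc a b)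
      (hgc.sub hfc) (fun x hx => by
        rw [interior_Icc] at hx ⊢
        exact ((hg x hx).sub (hf x hx)).hasDerivWithinAt)
      (by simpa only [interior_Icc, sub_nonneg] using hfg)
  have h : g a - f a ≤ g x - f x := hmono ⟨le_rfl, hx.1.trans hx.2⟩ hx hx.1
  linarith

section PressureLaw

variable {θ δ ρ : ℝ}

lemma rpow_two_mul (hρ : 0 ≤ ρ) : ρ ^ (2 * θ) = (ρ ^ θ) ^ 2 := by
  rw [mul_comm, rpow_mul hρ, rpow_two]

/-- The regularised pressure `p_δ`, written in terms of `θ` through `γ = 2θ + 1`. -/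
def pressure (θ δ ρ : ℝ) : ℝ := θ ^ 2 / (2 * θ + 1) * ρ ^ (2 * θ + 1) + δ * ρ ^ 2

/-- The derivative of `pressure`, which is the square of the sound speed. -/
def pressDeriv (θ δ ρ : ℝ) : ℝ := θ ^ 2 * ρ ^ (2 * θ) + 2 * δ * ρ

/-- The rate `(ρ c)' / (2 ρ c)` for the sound speed `c = √(pressDeriv θ δ ρ)`. -/
def couplingRate (θ δ ρ : ℝ) : ℝ :=
  (θ ^ 2 * (2 * θ + 2) * ρ ^ (2 * θ) + 6 * δ * ρ) / (4 * (ρ * pressDeriv θ δ ρ))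

lemma pressure_nonneg (hθ : 0 ≤ θ) (hδ : 0 ≤ δ) (hρ : 0 ≤ ρ) : 0 ≤ pressure θ δ ρ := by
  unfold pressure
  positivity

lemma pressure_le (hθ : 0 ≤ θ) (hδ : 0 ≤ δ) (hρ : 0 ≤ ρ) :
    pressure θ δ ρ ≤ (θ ^ 2 + 1) * (ρ ^ (2 * θ + 1) + δ * ρ ^ 2) := by
  calc pressure θ δ ρ ≤ (θ ^ 2 + 1) * ρ ^ (2 * θ + 1) + (θ ^ 2 + 1) * (δ * ρ ^ 2) := by
        refine add_le_add (mul_le_mul_of_nonneg_right ?_ (by positivity))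
          (le_mul_of_one_le_left (by positivity) (by linarith [sq_nonneg θ]))
        exact (div_le_self (sq_nonneg θ) (by linarith)).trans (by linarith)
    _ = _ := by ring

lemma pressDeriv_pos (hθ : 0 < θ) (hδ : 0 ≤ δ) (hρ : 0 < ρ) : 0 < pressDeriv θ δ ρ := by
  unfold pressDeriv
  positivity

lemma couplingRate_nonneg (hθ : 0 < θ) (hδ : 0 ≤ δ) (hρ : 0 < ρ) : 0 ≤ couplingRate θ δ ρ := by
  have := pressDeriv_pos hθ hδ hρ
  unfold couplingRate
  positivity

lemma hasDerivAt_pressure (hθ : 0 ≤ θ) (hρ : 0 < ρ) :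
    HasDerivAt (pressure θ δ) (pressDeriv θ δ ρ) ρ := by
  refine (((hasDerivAt_rpow_const (x := ρ) (p := 2 * θ + 1) (Or.inl hρ.ne')).const_mul
    (θ ^ 2 / (2 * θ + 1))).add ((hasDerivAt_pow 2 ρ).const_mul δ)).congr_deriv ?_
  rw [pressDeriv, add_sub_cancel_right]
  field_simp
  ring

lemma hasDerivAt_pressDeriv (hρ : 0 < ρ) :
    HasDerivAt (pressDeriv θ δ) ((2 * θ ^ 3 * ρ ^ (2 * θ) + 2 * δ * ρ) / ρ) ρ := by
  refine (((hasDerivAt_rpow_const (x := ρ) (p := 2 * θ) (Or.inl hρ.ne')).const_mul (θ ^ 2)).add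
    ((hasDerivAt_id ρ).const_mul (2 * δ))).congr_deriv ?_
  rw [rpow_sub_one hρ.ne']
  field_simp

lemma hasDerivAt_mul_sqrt_pressDeriv (hθ : 0 < θ) (hδ : 0 ≤ δ) (hρ : 0 < ρ) :
    HasDerivAt (fun s => s * √(pressDeriv θ δ s))
      (2 * couplingRate θ δ ρ * (ρ * √(pressDeriv θ δ ρ))) ρ := by
  have hp := pressDeriv_pos hθ hδ hρ
  have hc := sqrt_pos.2 hp
  have hcsq := sq_sqrt hp.le
  refine ((hasDerivAt_id ρ).mul ((hasDerivAt_pressDeriv hρ).sqrt hp.ne')).congr_deriv ?_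
  rw [couplingRate, id]
  set c := √(pressDeriv θ δ ρ)
  rw [← hcsq]
  field_simp
  rw [hcsq, pressDeriv]
  ring

lemma hasDerivAt_rpow_add_const_mul_sqrt (hδ : 0 < δ) (hρ : 0 < ρ) (C : ℝ) :
    HasDerivAt (fun s => s ^ θ + C * √(δ * s)) ((θ * ρ ^ θ + C / 2 * √(δ * ρ)) / ρ) ρ := by
  have hδρ : 0 < δ * ρ := by positivity
  have hq := sqrt_pos.2 hδρ
  have hqsq := sq_sqrt hδρ.le
  refine ((hasDerivAt_rpow_const (x := ρ) (p := θ) (Or.inl hρ.ne')).add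
    ((((hasDerivAt_id ρ).const_mul δ).sqrt hδρ.ne').const_mul C)).congr_deriv ?_
  rw [rpow_sub_one hρ.ne', id]
  set q := √(δ * ρ)
  field_simp
  linear_combination (-C) * hqsq

lemma le_sqrt_pressDeriv (hδ : 0 ≤ δ) (hρ : 0 < ρ) : θ * ρ ^ θ ≤ √(pressDeriv θ δ ρ) := by
  refine le_sqrt_of_sq_le ?_
  rw [pressDeriv, rpow_two_mul hρ.le, mul_pow]
  linarith [mul_nonneg hδ hρ.le]

lemma sqrt_pressDeriv_le (hθ : 0 ≤ θ) (hδ : 0 ≤ δ) (hρ : 0 < ρ) :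
    √(pressDeriv θ δ ρ) ≤ θ * ρ ^ θ + 3 / 2 * √(δ * ρ) := by
  have hδρ := mul_nonneg hδ hρ.le
  refine sqrt_le_iff.2 ⟨by positivity, ?_⟩
  have hcross : 0 ≤ θ * ρ ^ θ * √(δ * ρ) := by positivity
  rw [pressDeriv, rpow_two_mul hρ.le]
  linear_combination 3 * hcross + 1 / 4 * hδρ - 9 / 4 * sq_sqrt hδρ

end PressureLaw

namespace WaveKernel

variable {l r θ δ σ ρ : ℝ} {K : WaveKernel l r σ}

lemma exists_of_continuous {c g : ℝ → ℝ} (hl : 0 < l) (hlr : l < r) (hσ : 0 < σ)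
    (hc : Continuous c) (hc0 : ∀ s, 0 < c s) (hg : Continuous g) (hg0 : ∀ s, 0 ≤ g s)
    (hcg : ∀ ρ ∈ Ioo l r, HasDerivAt (fun s => s * c s) (2 * g ρ * (ρ * c ρ)) ρ) :
    ∃ K : WaveKernel l r σ, K.c = c := by
  have hmax (s : ℝ) : 0 < max l s := hl.trans_le (le_max_left _ _)
  have hspeed : Continuous fun s => c s / max l s := hc.div (by fun_prop) fun s => (hmax s).ne'
  set k : ℝ → ℝ := fun ρ => ∫ s in l..ρ, c s / max l s
  have hk (ρ : ℝ) : HasDerivAt k (c ρ / max l ρ) ρ :=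
    (hspeed.integral_hasStrictDerivAt l ρ).hasDerivAt
  have hkc : Continuous k := continuous_iff_continuousAt.2 fun s => (hk s).continuousAt
  have hkl : k l = 0 := intervalIntegral.integral_same
  have hkm : Monotone k :=
    monotone_of_hasDerivAt_nonneg hk fun s => (div_pos (hc0 s) (hmax s)).le
  obtain ⟨A, hA, hAt, hAl, hAd⟩ := exists_reflected_relaxation hlr.le hg hg0 hkc
    (hkm.monotoneOn _) hkl.ge (continuous_clampUnit.comp (continuous_id.div_const σ))
    (isTransition_clampUnit_div hσ)
  have hkd (ρ : ℝ) (hρ : ρ ∈ Ioo l r) : HasDerivAt k (c ρ / ρ) ρ := by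
    simpa only [max_eq_right hρ.1.le] using hk ρ
  exact ⟨⟨c, g, k, A, hl, hlr, hσ, hc, hc0, hg, hkc, hkl, hkd, hcg, hA, hAt, hAl, hAd⟩, rfl⟩

/-- The sound speed of `K` is that of the pressure law with parameters `θ` and `δ`, and the
initial velocity scale `σ` is comparable to the sound speed at the reference density. -/
structure HasPressure (K : WaveKernel l r σ) (θ δ : ℝ) : Prop where
  θ_pos : 0 < θ
  δ_pos : 0 < δ
  σ_eq : σ = l ^ θ + √(δ * l)
  c_eq : ∀ ρ, l ≤ ρ → K.c ρ = √(pressDeriv θ δ ρ)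

lemma exists_hasPressure (hθ : 0 < θ) (hδ : 0 < δ) (hl : 0 < l) (hlr : l < r) :
    ∃ K : WaveKernel l r (l ^ θ + √(δ * l)), K.HasPressure θ δ := by
  have hmax (s : ℝ) : 0 < max l s := hl.trans_le (le_max_left _ _)
  have hpow : Continuous fun s => max l s ^ (2 * θ) :=
    (continuous_const.max continuous_id).rpow_const fun s => Or.inl (hmax s).ne'
  have hp : Continuous fun s => pressDeriv θ δ (max l s) := by
    unfold pressDeriv
    fun_prop
  have hp0 (s : ℝ) := pressDeriv_pos hθ hδ.le (hmax s)
  have hg : Continuous fun s => couplingRate θ δ (max l s) := by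
    refine Continuous.div (by fun_prop) (by fun_prop) fun s => ?_
    exact mul_ne_zero four_ne_zero (mul_pos (hmax s) (hp0 s)).ne'
  obtain ⟨K, hK⟩ := exists_of_continuous (σ := l ^ θ + √(δ * l)) hl hlr (by positivity) hp.sqrt
    (fun s => sqrt_pos.2 (hp0 s)) hg (fun s => couplingRate_nonneg hθ hδ.le (hmax s))
    fun ρ hρ => by
      have heq : (fun s => s * √(pressDeriv θ δ (max l s))) =ᶠ[nhds ρ]
          fun s => s * √(pressDeriv θ δ s) := by
        filter_upwards [Ioi_mem_nhds hρ.1] with s hs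
        rw [max_eq_right (le_of_lt hs)]
      rw [max_eq_right hρ.1.le]
      exact (hasDerivAt_mul_sqrt_pressDeriv hθ hδ.le (hl.trans hρ.1)).congr_of_eventuallyEq heq
  exact ⟨K, hθ, hδ, rfl, fun ρ hρ => by simp only [hK, max_eq_right hρ]⟩

namespace HasPressure

variable (hK : K.HasPressure θ δ)

include hK

lemma c_sq (hρ : l ≤ ρ) : K.c ρ ^ 2 = pressDeriv θ δ ρ := by
  rw [hK.c_eq ρ hρ, sq_sqrt (pressDeriv_pos hK.θ_pos hK.δ_pos.le (K.l_pos.trans_le hρ)).le]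

lemma width_le (hρ : ρ ∈ Icc l r) : K.width ρ ≤ ρ ^ θ + 3 * √(δ * ρ) := by
  have hd (s : ℝ) (hs : l ≤ s) := hasDerivAt_rpow_add_const_mul_sqrt (θ := θ) hK.δ_pos
    (K.l_pos.trans_le hs) 3
  have h := sub_le_sub_of_hasDerivAt_le K.continuous_k.continuousOn
    (fun s hs => (hd s hs.1).continuousAt.continuousWithinAt) K.hasDerivAt_k
    (fun s hs => hd s hs.1.le) (fun s hs => by
      have hs0 := K.l_pos.trans hs.1
      rw [hK.c_eq s hs.1.le]
      exact div_le_div_of_nonneg_right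
        (sqrt_pressDeriv_le hK.θ_pos.le hK.δ_pos.le hs0) hs0.le) hρ
  rw [K.k_left] at h
  unfold width
  linarith [hK.σ_eq, sqrt_nonneg (δ * l)]

lemma rpow_le_width (hρ : ρ ∈ Icc l r) : ρ ^ θ ≤ K.width ρ := by
  have hd (s : ℝ) (hs : l ≤ s) := hasDerivAt_rpow_const (x := s) (p := θ)
    (Or.inl (K.l_pos.trans_le hs).ne')
  have h := sub_le_sub_of_hasDerivAt_le
    (fun s hs => (hd s hs.1).continuousAt.continuousWithinAt) K.continuous_k.continuousOn
    (fun s hs => hd s hs.1.le) K.hasDerivAt_k (fun s hs => by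
      have hs0 := K.l_pos.trans hs.1
      rw [rpow_sub_one hs0.ne', ← mul_div_assoc, hK.c_eq s hs.1.le]
      exact div_le_div_of_nonneg_right (le_sqrt_pressDeriv hK.δ_pos.le hs0) hs0.le) hρ
  rw [K.k_left] at h
  unfold width
  linarith [hK.σ_eq, sqrt_nonneg (δ * l)]

lemma width_sq_le (hρ : ρ ∈ Icc l r) : K.width ρ ^ 2 ≤ 2 * ρ ^ (2 * θ) + 18 * (δ * ρ) := by
  have hρ0 := K.l_pos.trans_le hρ.1
  calc K.width ρ ^ 2 ≤ (ρ ^ θ + 3 * √(δ * ρ)) ^ 2 :=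
        pow_le_pow_left₀ (K.width_pos hρ).le (hK.width_le hρ) 2
    _ ≤ 2 * ((ρ ^ θ) ^ 2 + (3 * √(δ * ρ)) ^ 2) := add_sq_le
    _ = _ := by
        rw [mul_pow, sq_sqrt (mul_pos hK.δ_pos hρ0).le, rpow_two_mul hρ0.le]
        ring

lemma press_eq (hρ : l ≤ ρ) : K.press ρ = pressure θ δ ρ - pressure θ δ l := by
  refine intervalIntegral.integral_eq_sub_of_hasDerivAt (fun s hs => ?_)
    ((K.continuous_c.pow 2).intervalIntegrable _ _)
  rw [uIcc_of_le hρ] at hs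
  rw [hK.c_sq hs.1]
  exact hasDerivAt_pressure hK.θ_pos.le (K.l_pos.trans_le hs.1)

lemma press_le (hρ : l ≤ ρ) :
    K.press ρ ≤ (θ ^ 2 + 1) * (ρ ^ (2 * θ + 1) + δ * ρ ^ 2) := by
  rw [hK.press_eq hρ]
  exact (sub_le_self _ (pressure_nonneg hK.θ_pos.le hK.δ_pos.le K.l_pos.le)).trans
    (pressure_le hK.θ_pos.le hK.δ_pos.le (K.l_pos.le.trans hρ))

lemma rpow_two_mul_add_le_sq : l ^ (2 * θ) + δ * l ≤ σ ^ 2 := by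
  have hδl := mul_pos hK.δ_pos K.l_pos
  have hcross : 0 ≤ l ^ θ * √(δ * l) := mul_nonneg (rpow_nonneg K.l_pos.le θ) (sqrt_nonneg _)
  rw [hK.σ_eq, rpow_two_mul K.l_pos.le]
  linear_combination 2 * hcross - sq_sqrt hδl.le

lemma integral_press_div (hρ : l ≤ ρ) :
    ∫ s in l..ρ, K.press s / s ^ 2 =
      (θ / (2 * (2 * θ + 1)) * ρ ^ (2 * θ) + δ * ρ + pressure θ δ l * ρ⁻¹) -
      (θ / (2 * (2 * θ + 1)) * l ^ (2 * θ) + δ * l + pressure θ δ l * l⁻¹) := by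
  refine intervalIntegral.integral_eq_sub_of_hasDerivAt
    (f := fun s => θ / (2 * (2 * θ + 1)) * s ^ (2 * θ) + δ * s + pressure θ δ l * s⁻¹)
    (fun s hs => ?_) (K.intervalIntegrable_press_div hρ)
  rw [uIcc_of_le hρ] at hs
  have hθ := hK.θ_pos
  have hs0 := K.l_pos.trans_le hs.1
  refine ((((hasDerivAt_rpow_const (x := s) (p := 2 * θ) (Or.inl hs0.ne')).const_mul
    (θ / (2 * (2 * θ + 1)))).add ((hasDerivAt_id s).const_mul δ)).add
    ((hasDerivAt_inv hs0.ne').const_mul (pressure θ δ l))).congr_deriv ?_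
  rw [hK.press_eq hs.1, pressure.eq_1 θ δ s, rpow_sub_one hs0.ne', rpow_add_one hs0.ne']
  field_simp
  ring

lemma integral_press_div_ge (hρ : l ≤ ρ) :
    θ / (2 * (2 * θ + 1)) * ρ ^ (2 * θ) + δ * ρ - (θ + θ ^ 2 + 2) * σ ^ 2 ≤
      ∫ s in l..ρ, K.press s / s ^ 2 := by
  have hθ := hK.θ_pos
  have hl := K.l_pos
  have hpρ : 0 ≤ pressure θ δ l * ρ⁻¹ :=
    mul_nonneg (pressure_nonneg hθ.le hK.δ_pos.le hl.le) (inv_nonneg.2 (hl.le.trans hρ))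
  have hpl : pressure θ δ l * l⁻¹ = θ ^ 2 / (2 * θ + 1) * l ^ (2 * θ) + δ * l := by
    rw [pressure, rpow_add_one hl.ne']
    field_simp
  have hleft : θ / (2 * (2 * θ + 1)) * l ^ (2 * θ) + δ * l + pressure θ δ l * l⁻¹ ≤
      (θ + θ ^ 2 + 2) * σ ^ 2 := by
    calc _ ≤ θ * l ^ (2 * θ) + δ * l + (θ ^ 2 * l ^ (2 * θ) + δ * l) := by
          rw [hpl]
          gcongr
          · exact div_le_self hθ.le (by linarith)
          · exact div_le_self (sq_nonneg θ) (by linarith)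
      _ ≤ (θ + θ ^ 2 + 2) * (l ^ (2 * θ) + δ * l) := by
          have hδl := mul_nonneg (add_nonneg hθ.le (sq_nonneg θ)) (mul_pos hK.δ_pos hl).le
          linarith [rpow_pos_of_pos hl (2 * θ)]
      _ ≤ (θ + θ ^ 2 + 2) * σ ^ 2 := by
          gcongr
          exact hK.rpow_two_mul_add_le_sq
  rw [hK.integral_press_div hρ]
  linarith

end HasPressure

/-- The constant `C` with which `V` at rest dominates `C ρ^θ`, up to a multiple of `σ`. -/
def coercivityConst (θ : ℝ) : ℝ := min (θ / (2 * (2 * θ + 1))) 1 / 18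

lemma coercivityConst_pos (hθ : 0 < θ) : 0 < coercivityConst θ := by
  unfold coercivityConst
  positivity

namespace HasPressure

variable (hK : K.HasPressure θ δ)

include hK

lemma coercivityConst_mul_width_sq_le (hρ : ρ ∈ Icc l r) :
    coercivityConst θ * K.width ρ ^ 2 ≤ θ / (2 * (2 * θ + 1)) * ρ ^ (2 * θ) + δ * ρ := by
  have hρ0 := K.l_pos.trans_le hρ.1
  set C := coercivityConst θ with hC
  have hC0 : 0 < C := coercivityConst_pos hK.θ_pos
  have hCpow : 18 * C ≤ θ / (2 * (2 * θ + 1)) := by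
    linarith [min_le_left (θ / (2 * (2 * θ + 1))) 1, hC.trans (coercivityConst.eq_1 θ)]
  have hCδ : 18 * C ≤ 1 := by
    linarith [min_le_right (θ / (2 * (2 * θ + 1))) 1, hC.trans (coercivityConst.eq_1 θ)]
  calc C * K.width ρ ^ 2 ≤ C * (2 * ρ ^ (2 * θ) + 18 * (δ * ρ)) := by
        gcongr
        exact hK.width_sq_le hρ
    _ ≤ 18 * C * ρ ^ (2 * θ) + 18 * C * (δ * ρ) := by
        linarith [mul_pos hC0 (rpow_pos_of_pos hρ0 (2 * θ))]
    _ ≤ θ / (2 * (2 * θ + 1)) * ρ ^ (2 * θ) + 1 * (δ * ρ) := by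
        have := mul_pos hK.δ_pos hρ0
        gcongr
    _ = _ := by rw [one_mul]

lemma V_zero_ge (hρ : ρ ∈ Icc l r) :
    coercivityConst θ * ρ ^ θ - (θ + θ ^ 2 + 3) * σ ≤ K.V ρ 0 := by
  have hθ := hK.θ_pos
  have hw := K.width_pos hρ
  have hσw : σ ^ 2 ≤ σ * K.width ρ := by
    rw [sq]
    exact mul_le_mul_of_nonneg_left (K.le_width hρ) K.σ_pos.le
  have hV : K.width ρ * (coercivityConst θ * K.width ρ - (θ + θ ^ 2 + 3) * σ) ≤
      K.width ρ * K.V ρ 0 := by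
    have hσw' := mul_le_mul_of_nonneg_left hσw (show 0 ≤ θ + θ ^ 2 + 2 by positivity)
    linarith [K.width_mul_V_zero_ge hρ, hK.integral_press_div_ge hρ.1,
      hK.coercivityConst_mul_width_sq_le hρ, mul_pos K.σ_pos hw]
  have hpow := mul_le_mul_of_nonneg_left (hK.rpow_le_width hρ) (coercivityConst_pos hθ).le
  linarith [le_of_mul_le_mul_left hV hw]

lemma c_sq_mul_V_zero_ge (hρ : ρ ∈ Icc l r) :
    coercivityConst θ * θ ^ 2 * ρ ^ (3 * θ) - (θ + θ ^ 2 + 3) * σ * K.c ρ ^ 2 ≤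
      K.c ρ ^ 2 * K.V ρ 0 := by
  have hρ0 := K.l_pos.trans_le hρ.1
  have hC := coercivityConst_pos hK.θ_pos
  have hc : θ ^ 2 * ρ ^ (2 * θ) ≤ K.c ρ ^ 2 := by
    rw [hK.c_sq hρ.1, pressDeriv]
    linarith [mul_pos hK.δ_pos hρ0]
  have hsplit : ρ ^ (3 * θ) = ρ ^ (2 * θ) * ρ ^ θ := by
    rw [← rpow_add hρ0]
    ring_nf
  calc coercivityConst θ * θ ^ 2 * ρ ^ (3 * θ) - (θ + θ ^ 2 + 3) * σ * K.c ρ ^ 2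
      = θ ^ 2 * ρ ^ (2 * θ) * (coercivityConst θ * ρ ^ θ) -
          (θ + θ ^ 2 + 3) * σ * K.c ρ ^ 2 := by rw [hsplit]; ring
    _ ≤ K.c ρ ^ 2 * (coercivityConst θ * ρ ^ θ) - (θ + θ ^ 2 + 3) * σ * K.c ρ ^ 2 := by gcongr
    _ = K.c ρ ^ 2 * (coercivityConst θ * ρ ^ θ - (θ + θ ^ 2 + 3) * σ) := by ring
    _ ≤ K.c ρ ^ 2 * K.V ρ 0 := mul_le_mul_of_nonneg_left (hK.V_zero_ge hρ) (sq_nonneg _)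

lemma H_zero_ge (hρ : ρ ∈ Icc l r) :
    coercivityConst θ * θ ^ 2 / (3 * θ + 1) * ρ ^ (3 * θ + 1) -
      coercivityConst θ * θ ^ 2 * l ^ (3 * θ + 1) - (θ + θ ^ 2 + 3) * σ * K.press ρ ≤
      K.H ρ 0 := by
  have hθ := hK.θ_pos
  have hl := K.l_pos
  set C := coercivityConst θ * θ ^ 2
  have hC : 0 ≤ C := mul_nonneg (coercivityConst_pos hθ).le (sq_nonneg θ)
  have hpow : IntervalIntegrable (fun s => C * s ^ (3 * θ)) volume l ρ :=
    (intervalIntegral.intervalIntegrable_rpow' (by linarith)).const_mul C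
  have hc : IntervalIntegrable (fun s => (θ + θ ^ 2 + 3) * σ * K.c s ^ 2) volume l ρ :=
    Continuous.intervalIntegrable (by fun_prop) _ _
  have h := intervalIntegral.integral_mono_on hρ.1 (hpow.sub hc)
    (Continuous.intervalIntegrable (by fun_prop) _ _)
    fun s hs => hK.c_sq_mul_V_zero_ge ⟨hs.1, hs.2.trans hρ.2⟩
  rw [intervalIntegral.integral_sub hpow hc, intervalIntegral.integral_const_mul,
    intervalIntegral.integral_const_mul, integral_rpow (Or.inl (by linarith))] at h
  have hleft : C / (3 * θ + 1) * l ^ (3 * θ + 1) ≤ C * l ^ (3 * θ + 1) := by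
    gcongr
    exact div_le_self hC (by linarith)
  rw [H, press]
  linear_combination h + hleft

end HasPressure

end WaveKernel

/-! ### Coercive entropy–flux pairs -/

/-- The data of an entropy–flux pair `(ρ F, u ρ F + H)` for densities in `I`, where `c` is the sound
speed, `V = ∂ᵤF`, `J = ρ² ∂ᵨF = ∂ᵤH`, and the second derivatives are encoded by `Y = ∂ᵤV` and
`Z = (ρ / c) ∂ᵨV`. -/
structure EntropyFlux (I : Set ℝ) where
  c : ℝ → ℝ
  F : ℝ → ℝ → ℝ
  V : ℝ → ℝ → ℝ
  J : ℝ → ℝ → ℝ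
  H : ℝ → ℝ → ℝ
  Y : ℝ → ℝ → ℝ
  Z : ℝ → ℝ → ℝ
  continuous_c : Continuous c
  continuous_F : Continuous (Function.uncurry F)
  continuous_V : Continuous (Function.uncurry V)
  continuous_J : Continuous (Function.uncurry J)
  continuous_H : Continuous (Function.uncurry H)
  continuous_Y : Continuous (Function.uncurry Y)
  continuous_Z : Continuous (Function.uncurry Z)
  hasPartials_F : HasPartials F (fun ρ u => J ρ u / ρ ^ 2) V I
  hasPartials_V : HasPartials V (fun ρ u => c ρ / ρ * Z ρ u) Y I
  hasPartials_J : HasPartials J (fun ρ u => c ρ ^ 2 * Y ρ u) (fun ρ u => ρ * c ρ * Z ρ u) I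
  hasPartials_H : HasPartials H (fun ρ u => c ρ ^ 2 * V ρ u) J I

/-- The entropy–flux pair of a wave kernel, from which `a` times the momentum equation, with its
entropy `ρ u` and its flux `ρ u² + p`, has been subtracted. -/
def WaveKernel.toEntropyFlux {l r σ : ℝ} (K : WaveKernel l r σ) (a : ℝ) :
    EntropyFlux (Ioo l r) where
  c := K.c
  F ρ u := K.F ρ u - a * u
  V ρ u := K.V ρ u - a
  J := K.J
  H ρ u := K.H ρ u - a * K.press ρ
  Y := K.oddPart
  Z := K.evenPart
  continuous_c := K.continuous_c
  continuous_F := (K.continuous_F continuous_fst continuous_snd).sub (by fun_prop)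
  continuous_V := (K.continuous_V continuous_fst continuous_snd).sub continuous_const
  continuous_J := K.continuous_J continuous_fst continuous_snd
  continuous_H := (K.continuous_H continuous_fst continuous_snd).sub
    ((K.continuous_press.comp continuous_fst).const_mul a)
  continuous_Y := K.continuous_oddPart continuous_fst continuous_snd
  continuous_Z := K.continuous_evenPart continuous_fst continuous_snd
  hasPartials_F :=
    { K.hasPartials_F with
      left := fun ρ hρ u => (K.hasPartials_F.left ρ hρ u).sub_const _
      right := fun ρ hρ u => ((K.hasPartials_F.right ρ hρ u).sub
        ((hasDerivAt_id u).const_mul a)).congr_deriv (by rw [mul_one])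
      continuousOn_right :=
        ((K.continuous_V continuous_fst continuous_snd).sub continuous_const).continuousOn }
  hasPartials_V :=
    { K.hasPartials_V with
      left := fun ρ hρ u => (K.hasPartials_V.left ρ hρ u).sub_const _
      right := fun ρ hρ u => (K.hasPartials_V.right ρ hρ u).sub_const _ }
  hasPartials_J := K.hasPartials_J
  hasPartials_H :=
    { K.hasPartials_H with
      left := fun ρ hρ u => ((K.hasPartials_H.left ρ hρ u).sub
        ((K.hasDerivAt_press ρ).const_mul a)).congr_deriv (by ring)
      right := fun ρ hρ u => (K.hasPartials_H.right ρ hρ u).sub_const _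
      continuousOn_left := (((K.continuous_c.comp continuous_fst).pow 2).mul
        ((K.continuous_V continuous_fst continuous_snd).sub continuous_const)).continuousOn }

/-- A density controlled by the relative energy `½ ρ u² + h̄_δ(ρ, ρbar)`, up to constants that
depend on `ρbar`. -/
def energyDensity (θ δ ρbar ρ u : ℝ) : ℝ :=
  ρ * u ^ 2 + ρ ^ (2 * θ + 1) + δ * ρ ^ 2 + ρbar ^ (2 * θ + 1) + δ * ρbar ^ 2

/-- The entropy–flux pair is normalised at the state `(ρbar, 0)`, has bounded second derivatives,
and, up to `C` times the energy density, its flux dominates `c₀ (ρ |u|³ + ρ^(γ + θ))`. -/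
structure EntropyFlux.IsCoercive {I : Set ℝ} (Φ : EntropyFlux I) (θ δ ρbar c₀ C : ℝ) :
    Prop where
  c_sq : ∀ ρ ∈ I, Φ.c ρ ^ 2 = pressDeriv θ δ ρ
  F_zero : ∀ ρ, Φ.F ρ 0 = 0
  J_zero : ∀ ρ, Φ.J ρ 0 = 0
  V_bar : Φ.V ρbar 0 = 0
  abs_H_bar_le : |Φ.H ρbar 0| ≤ C * (ρbar ^ (2 * θ + 1) + δ * ρbar ^ 2)
  abs_Y_le : ∀ ρ ∈ I, ∀ u, |Φ.Y ρ u| ≤ 1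
  abs_Z_le : ∀ ρ ∈ I, ∀ u, |Φ.Z ρ u| ≤ 1
  abs_entropy_le : ∀ ρ ∈ I, ∀ u, |ρ * Φ.F ρ u| ≤ C * energyDensity θ δ ρbar ρ u
  abs_mul_V_le : ∀ ρ ∈ I, ∀ u, |u * ρ * Φ.V ρ u| ≤ C * energyDensity θ δ ρbar ρ u
  stress_le : ∀ ρ ∈ I, ∀ u, u * Φ.J ρ u - Φ.H ρ u ≤ C * energyDensity θ δ ρbar ρ u
  flux_ge : ∀ ρ ∈ I, ∀ u, c₀ * (ρ * |u| ^ 3 + ρ ^ (3 * θ + 1)) -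
    C * energyDensity θ δ ρbar ρ u ≤ u * ρ * Φ.F ρ u + Φ.H ρ u

section EnergyDensity

variable {θ δ ρbar ρ : ℝ}

lemma energyDensity_nonneg (hδ : 0 ≤ δ) (hρbar : 0 ≤ ρbar) (hρ : 0 ≤ ρ) (u : ℝ) :
    0 ≤ energyDensity θ δ ρbar ρ u := by
  unfold energyDensity
  positivity

lemma mul_sq_le_energyDensity (hδ : 0 ≤ δ) (hρbar : 0 ≤ ρbar) (hρ : 0 ≤ ρ) (u : ℝ) :
    ρ * u ^ 2 ≤ energyDensity θ δ ρbar ρ u := by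
  have h : 0 ≤ ρ ^ (2 * θ + 1) + δ * ρ ^ 2 + ρbar ^ (2 * θ + 1) + δ * ρbar ^ 2 := by positivity
  rw [energyDensity]
  linarith

lemma rpow_add_mul_sq_le_energyDensity (hδ : 0 ≤ δ) (hρbar : 0 ≤ ρbar) (hρ : 0 ≤ ρ) (u : ℝ) :
    ρ ^ (2 * θ + 1) + δ * ρ ^ 2 ≤ energyDensity θ δ ρbar ρ u := by
  have h : 0 ≤ ρ * u ^ 2 + ρbar ^ (2 * θ + 1) + δ * ρbar ^ 2 := by positivity
  rw [energyDensity]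
  linarith

lemma mul_rpow_le_rpow_add_rpow {x y p : ℝ} (hx : 0 < x) (hy : 0 < y) (hp : 0 ≤ p) :
    x * y ^ p ≤ x ^ (p + 1) + y ^ (p + 1) := by
  rw [rpow_add_one hx.ne', rpow_add_one hy.ne']
  rcases le_total x y with h | h
  · have hxy : x * y ^ p ≤ y * y ^ p := by gcongr
    linarith [mul_pos (rpow_pos_of_pos hx p) hx]
  · have hxy : x * y ^ p ≤ x * x ^ p := by gcongr
    linarith [mul_pos (rpow_pos_of_pos hy p) hy]

end EnergyDensity

namespace WaveKernel

variable {l r θ δ σ ρbar ρ N : ℝ} {K : WaveKernel l r σ}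

lemma abs_V_zero_le (hbar : ρbar ∈ Icc l r) (hN : K.width ρbar ≤ N) : |K.V ρbar 0| ≤ N := by
  simpa only [abs_zero, zero_add] using (K.abs_V_le hbar 0).trans (by simpa using hN)

lemma abs_V_zero_mul_press_le (hbar : ρbar ∈ Icc l r) (hN : K.width ρbar ≤ N) (hρ : l ≤ ρ) :
    |K.V ρbar 0 * K.press ρ| ≤ N * K.press ρ := by
  have hp := K.press_nonneg hρ
  rw [abs_mul, abs_of_nonneg hp]
  exact mul_le_mul_of_nonneg_right (abs_V_zero_le hbar hN) hp

namespace HasPressure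

variable (hK : K.HasPressure θ δ)

include hK

lemma mul_width_sq_le (hρ : ρ ∈ Icc l r) :
    ρ * K.width ρ ^ 2 ≤ 2 * ρ ^ (2 * θ + 1) + 18 * (δ * ρ ^ 2) := by
  have hρ0 := K.l_pos.trans_le hρ.1
  rw [rpow_add_one hρ0.ne']
  linarith [mul_le_mul_of_nonneg_left (hK.width_sq_le hρ) hρ0.le]

lemma mul_V_zero_sq_le (hbar : ρbar ∈ Icc l r) (hρ : 0 < ρ) :
    ρ * K.V ρbar 0 ^ 2 ≤ 2 * (ρ ^ (2 * θ + 1) + ρbar ^ (2 * θ + 1)) +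
      9 * (δ * ρ ^ 2 + δ * ρbar ^ 2) := by
  have hθ := hK.θ_pos
  have hV : K.V ρbar 0 ^ 2 ≤ K.width ρbar ^ 2 :=
    sq_le_sq' (by linarith [neg_le_of_abs_le (K.abs_V_le hbar 0), abs_zero (α := ℝ)])
      (by linarith [le_of_abs_le (K.abs_V_le hbar 0), abs_zero (α := ℝ)])
  have hmul := mul_le_mul_of_nonneg_left (hV.trans (hK.width_sq_le hbar)) hρ.le
  have hpow := mul_rpow_le_rpow_add_rpow hρ (K.l_pos.trans_le hbar.1)
    (show 0 ≤ 2 * θ by positivity)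
  linarith [mul_nonneg hK.δ_pos.le (sq_nonneg (ρ - ρbar))]

lemma mul_abs_mul_add_le (hbar : ρbar ∈ Icc l r) (hρ : ρ ∈ Icc l r) (u : ℝ) :
    ρ * |u| * (|u| + K.width ρ) + ρ * |u| * |K.V ρbar 0| ≤
      20 * energyDensity θ δ ρbar ρ u := by
  have hρ0 := K.l_pos.trans_le hρ.1
  have hbar0 := K.l_pos.trans_le hbar.1
  have hwidth := mul_nonneg hρ0.le (sq_nonneg (|u| - K.width ρ))
  have hV := mul_nonneg hρ0.le (sq_nonneg (|u| - |K.V ρbar 0|))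
  have hδ := hK.δ_pos
  have hpow : 0 ≤ ρ ^ (2 * θ + 1) + ρbar ^ (2 * θ + 1) + ρ * u ^ 2 + δ * ρ ^ 2 + δ * ρbar ^ 2 := by
    positivity
  rw [sub_sq, sq_abs] at hwidth hV
  rw [sq_abs] at hV
  have hu : ρ * |u| * |u| = ρ * u ^ 2 := by rw [mul_assoc, ← sq, sq_abs]
  have hδbar : 0 ≤ δ * ρbar ^ 2 := by positivity
  have hρu : 0 ≤ ρ * u ^ 2 := by positivity
  rw [energyDensity]
  linarith [hK.mul_width_sq_le hρ, hK.mul_V_zero_sq_le hbar hρ0, rpow_pos_of_pos hρ0 (2 * θ + 1),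
    rpow_pos_of_pos hbar0 (2 * θ + 1)]

lemma abs_mul_F_sub_le (hbar : ρbar ∈ Icc l r) (hρ : ρ ∈ Icc l r) (u : ℝ) :
    |ρ * (K.F ρ u - K.V ρbar 0 * u)| ≤ 20 * energyDensity θ δ ρbar ρ u := by
  have hρ0 := K.l_pos.trans_le hρ.1
  calc |ρ * (K.F ρ u - K.V ρbar 0 * u)| = ρ * |K.F ρ u - K.V ρbar 0 * u| := by
        rw [abs_mul, abs_of_pos hρ0]
    _ ≤ ρ * (|u| * (|u| + K.width ρ) + |K.V ρbar 0| * |u|) := by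
        rw [← abs_mul (K.V ρbar 0)]
        exact mul_le_mul_of_nonneg_left
          ((abs_sub _ _).trans (add_le_add_left (K.abs_F_le hρ u) _)) hρ0.le
    _ = ρ * |u| * (|u| + K.width ρ) + ρ * |u| * |K.V ρbar 0| := by ring
    _ ≤ _ := hK.mul_abs_mul_add_le hbar hρ u

lemma abs_mul_V_sub_le (hbar : ρbar ∈ Icc l r) (hρ : ρ ∈ Icc l r) (u : ℝ) :
    |u * ρ * (K.V ρ u - K.V ρbar 0)| ≤ 20 * energyDensity θ δ ρbar ρ u := by
  have hρ0 := K.l_pos.trans_le hρ.1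
  calc |u * ρ * (K.V ρ u - K.V ρbar 0)| = ρ * |u| * |K.V ρ u - K.V ρbar 0| := by
        rw [abs_mul, abs_mul, abs_of_pos hρ0, mul_comm |u|]
    _ ≤ ρ * |u| * (|u| + K.width ρ + |K.V ρbar 0|) :=
        mul_le_mul_of_nonneg_left ((abs_sub _ _).trans (add_le_add_left (K.abs_V_le hρ u) _))
          (by positivity)
    _ = ρ * |u| * (|u| + K.width ρ) + ρ * |u| * |K.V ρbar 0| := by ring
    _ ≤ _ := hK.mul_abs_mul_add_le hbar hρ u

lemma const_mul_press_le {A : ℝ} (hA : 0 ≤ A) (hρ : l ≤ ρ) (hρbar : 0 ≤ ρbar) (u : ℝ) :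
    A * K.press ρ ≤ A * (θ ^ 2 + 1) * energyDensity θ δ ρbar ρ u := by
  rw [mul_assoc]
  refine mul_le_mul_of_nonneg_left ((hK.press_le hρ).trans ?_) hA
  exact mul_le_mul_of_nonneg_left (rpow_add_mul_sq_le_energyDensity hK.δ_pos.le hρbar
    (K.l_pos.le.trans hρ) u) (by positivity)

lemma abs_H_zero_sub_le (hbar : ρbar ∈ Icc l r) (hN : K.width ρbar ≤ N) :
    |K.H ρbar 0 - K.V ρbar 0 * K.press ρbar| ≤
      2 * N * (θ ^ 2 + 1) * (ρbar ^ (2 * θ + 1) + δ * ρbar ^ 2) := by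
  have hp := K.press_nonneg hbar.1
  have hN0 : 0 ≤ N := (K.width_pos hbar).le.trans hN
  calc |K.H ρbar 0 - K.V ρbar 0 * K.press ρbar|
      ≤ |K.H ρbar 0| + |K.V ρbar 0 * K.press ρbar| := abs_sub _ _
    _ ≤ N * K.press ρbar + N * K.press ρbar :=
        add_le_add ((K.abs_H_zero_le hbar).trans (mul_le_mul_of_nonneg_right hN hp))
          (abs_V_zero_mul_press_le hbar hN hbar.1)
    _ = 2 * N * K.press ρbar := by ring
    _ ≤ 2 * N * ((θ ^ 2 + 1) * (ρbar ^ (2 * θ + 1) + δ * ρbar ^ 2)) :=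
        mul_le_mul_of_nonneg_left (hK.press_le hbar.1) (by positivity)
    _ = _ := by ring

lemma mul_J_sub_le (hbar : ρbar ∈ Icc l r) (hσN : σ ≤ N) (hN : K.width ρbar ≤ N)
    (hρ : ρ ∈ Icc l r) (u : ℝ) :
    u * K.J ρ u - (K.H ρ u - K.V ρbar 0 * K.press ρ) ≤
      2 * N * (θ ^ 2 + 1) * energyDensity θ δ ρbar ρ u := by
  have hp := K.press_nonneg hρ.1
  have hN0 : 0 ≤ N := K.σ_pos.le.trans hσN
  refine le_trans ?_ (hK.const_mul_press_le (by positivity) hρ.1 (K.l_pos.le.trans hbar.1) u)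
  linarith [K.mul_J_sub_H_le hρ u, le_of_abs_le (abs_V_zero_mul_press_le hbar hN hρ.1),
    mul_le_mul_of_nonneg_right hσN hp, mul_nonneg hN0 hp]

lemma mul_F_sub_ge (hbar : ρbar ∈ Icc l r) (hσN : σ ≤ N) (hN : K.width ρbar ≤ N)
    (hρ : ρ ∈ Icc l r) (u : ℝ) :
    1 / 2 * (ρ * |u| ^ 3) - 2 * N * energyDensity θ δ ρbar ρ u ≤
      u * ρ * (K.F ρ u - K.V ρbar 0 * u) := by
  have hρ0 := K.l_pos.trans_le hρ.1
  have hN0 : 0 ≤ N := K.σ_pos.le.trans hσN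
  have hE := mul_le_mul_of_nonneg_left (mul_sq_le_energyDensity (θ := θ) hK.δ_pos.le
    (K.l_pos.le.trans hbar.1) hρ0.le u) (show 0 ≤ 2 * N by positivity)
  have hρu : 0 ≤ ρ * u ^ 2 := by positivity
  linarith [mul_le_mul_of_nonneg_left (K.mul_F_ge hρ u) hρ0.le,
    mul_le_mul_of_nonneg_right ((le_abs_self _).trans (abs_V_zero_le hbar hN)) hρu,
    mul_le_mul_of_nonneg_right hσN hρu, mul_nonneg hN0 hρu]

lemma H_sub_ge (hl : l ≤ 1) (hbar : ρbar ∈ Icc l r) (hσN : σ ≤ N) (hN : K.width ρbar ≤ N)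
    (hρ : ρ ∈ Icc l r) (u : ℝ) :
    coercivityConst θ * θ ^ 2 / (3 * θ + 1) * ρ ^ (3 * θ + 1) -
      (coercivityConst θ * θ ^ 2 + (θ + θ ^ 2 + 4) * N * (θ ^ 2 + 1)) *
        energyDensity θ δ ρbar ρ u ≤ K.H ρ u - K.V ρbar 0 * K.press ρ := by
  have hθ := hK.θ_pos
  have hρ0 := K.l_pos.trans_le hρ.1
  have hbar0 := K.l_pos.trans_le hbar.1
  have hN0 : 0 ≤ N := K.σ_pos.le.trans hσN
  have hp := K.press_nonneg hρ.1
  have hD : 0 ≤ coercivityConst θ * θ ^ 2 := mul_nonneg (coercivityConst_pos hθ).le (sq_nonneg θ)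
  have hpow : l ^ (3 * θ + 1) ≤ energyDensity θ δ ρbar ρ u :=
    calc l ^ (3 * θ + 1) ≤ l ^ (2 * θ + 1) :=
          rpow_le_rpow_of_exponent_ge K.l_pos hl (by linarith)
      _ ≤ ρ ^ (2 * θ + 1) := rpow_le_rpow K.l_pos.le hρ.1 (by positivity)
      _ ≤ ρ ^ (2 * θ + 1) + δ * ρ ^ 2 :=
          le_add_of_nonneg_right (mul_nonneg hK.δ_pos.le (sq_nonneg ρ))
      _ ≤ _ := rpow_add_mul_sq_le_energyDensity hK.δ_pos.le hbar0.le hρ0.le u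
  have hσp : (θ + θ ^ 2 + 3) * σ * K.press ρ ≤ (θ + θ ^ 2 + 3) * N * K.press ρ := by gcongr
  linarith [(hK.H_zero_ge hρ).trans (K.H_zero_le hρ u), mul_le_mul_of_nonneg_left hpow hD,
    le_of_abs_le (abs_V_zero_mul_press_le hbar hN hρ.1),
    hK.const_mul_press_le (show 0 ≤ (θ + θ ^ 2 + 4) * N by positivity) hρ.1 hbar0.le u]

lemma isCoercive_toEntropyFlux (hl : l ≤ 1) (hbar : ρbar ∈ Icc l r) (hσN : σ ≤ N)
    (hN : K.width ρbar ≤ N) :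
    (K.toEntropyFlux (K.V ρbar 0)).IsCoercive θ δ ρbar
      (min (1 / 2) (coercivityConst θ * θ ^ 2 / (3 * θ + 1)))
      (20 + 2 * N + coercivityConst θ * θ ^ 2 + (θ + θ ^ 2 + 4) * N * (θ ^ 2 + 1)) := by
  have hθ := hK.θ_pos
  have hN0 : 0 ≤ N := K.σ_pos.le.trans hσN
  have hbar0 := K.l_pos.trans_le hbar.1
  set D := coercivityConst θ * θ ^ 2
  have hD : 0 ≤ D := mul_nonneg (coercivityConst_pos hθ).le (sq_nonneg θ)
  have hB : 2 * N * (θ ^ 2 + 1) ≤ (θ + θ ^ 2 + 4) * N * (θ ^ 2 + 1) := by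
    gcongr
    linarith [sq_nonneg θ]
  have hB0 : 0 ≤ 2 * N * (θ ^ 2 + 1) := by positivity
  have hE (ρ : ℝ) (hρ : ρ ∈ Ioo l r) (u : ℝ) : 0 ≤ energyDensity θ δ ρbar ρ u :=
    energyDensity_nonneg hK.δ_pos.le hbar0.le (K.l_pos.trans hρ.1).le u
  exact
    { c_sq := fun ρ hρ => hK.c_sq hρ.1.le
      F_zero := fun ρ => by simp [toEntropyFlux, K.F_zero]
      J_zero := K.J_zero
      V_bar := sub_self _
      abs_H_bar_le := (hK.abs_H_zero_sub_le hbar hN).trans <| by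
        have := hK.δ_pos
        gcongr
        linarith
      abs_Y_le := fun ρ hρ => K.abs_oddPart_le (Ioo_subset_Icc_self hρ)
      abs_Z_le := fun ρ hρ => K.abs_evenPart_le (Ioo_subset_Icc_self hρ)
      abs_entropy_le := fun ρ hρ u =>
        (hK.abs_mul_F_sub_le hbar (Ioo_subset_Icc_self hρ) u).trans
          (mul_le_mul_of_nonneg_right (by linarith) (hE ρ hρ u))
      abs_mul_V_le := fun ρ hρ u =>
        (hK.abs_mul_V_sub_le hbar (Ioo_subset_Icc_self hρ) u).trans
          (mul_le_mul_of_nonneg_right (by linarith) (hE ρ hρ u))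
      stress_le := fun ρ hρ u =>
        (hK.mul_J_sub_le hbar hσN hN (Ioo_subset_Icc_self hρ) u).trans
          (mul_le_mul_of_nonneg_right (by linarith) (hE ρ hρ u))
      flux_ge := fun ρ hρ u => by
        have hρ0 := K.l_pos.trans hρ.1
        have hu := mul_le_mul_of_nonneg_right (min_le_left (1 / 2) (D / (3 * θ + 1)))
          (show 0 ≤ ρ * |u| ^ 3 by positivity)
        have hpow := mul_le_mul_of_nonneg_right (min_le_right (1 / 2) (D / (3 * θ + 1)))
          (rpow_pos_of_pos hρ0 (3 * θ + 1)).le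
        have hF := hK.mul_F_sub_ge hbar hσN hN (Ioo_subset_Icc_self hρ) u
        have hH := hK.H_sub_ge hl hbar hσN hN (Ioo_subset_Icc_self hρ) u
        simp only [toEntropyFlux]
        linarith [hE ρ hρ u] }

end HasPressure

end WaveKernel

theorem exists_isCoercive {θ : ℝ} (hθ : 0 < θ) (M₀ : ℝ) :
    ∃ c₀ C : ℝ, 0 < c₀ ∧ 0 < C ∧ ∀ δ l r ρbar : ℝ, 0 < δ → δ ≤ M₀ → 0 < l → l < ρbar →
      ρbar < r → ρbar ≤ 1 → ∃ Φ : EntropyFlux (Ioo l r), Φ.IsCoercive θ δ ρbar c₀ C := by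
  set N : ℝ := 1 + 3 * √M₀
  have hD : 0 < WaveKernel.coercivityConst θ * θ ^ 2 :=
    mul_pos (WaveKernel.coercivityConst_pos hθ) (by positivity)
  refine ⟨min (1 / 2) (WaveKernel.coercivityConst θ * θ ^ 2 / (3 * θ + 1)),
    20 + 2 * N + WaveKernel.coercivityConst θ * θ ^ 2 + (θ + θ ^ 2 + 4) * N * (θ ^ 2 + 1),
    by positivity, by positivity, fun δ l r ρbar hδ hδM hl hlbar hbarr hbar1 => ?_⟩
  have hbound (x : ℝ) (hx : 0 < x) (hx1 : x ≤ 1) : x ^ θ + 3 * √(δ * x) ≤ N :=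
    add_le_add (rpow_le_one hx.le hx1 hθ.le)
      (mul_le_mul_of_nonneg_left (sqrt_le_sqrt
        ((mul_le_of_le_one_right hδ.le hx1).trans hδM)) zero_le_three)
  obtain ⟨K, hK⟩ := WaveKernel.exists_hasPressure hθ hδ hl (hlbar.trans hbarr)
  have hbar : ρbar ∈ Icc l r := ⟨hlbar.le, hbarr.le⟩
  exact ⟨_, hK.isCoercive_toEntropyFlux (hlbar.le.trans hbar1) hbar
    (by linarith [hbound l hl (hlbar.le.trans hbar1), sqrt_nonneg (δ * l)])
    ((hK.width_le hbar).trans (hbound ρbar (hl.trans hlbar) hbar1))⟩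

/-! ### The entropy balance along a viscous solution -/

/-- Partial derivative in time. -/
def partialT (f : ℝ → ℝ → ℝ) (t r : ℝ) : ℝ := deriv (fun s => f s r) t

/-- Partial derivative in the radius. -/
def partialR (f : ℝ → ℝ → ℝ) (t r : ℝ) : ℝ := deriv (fun y => f t y) r

section PartialDerivatives

variable {f : ℝ → ℝ → ℝ}

lemma hasDerivAt_fderiv_left (hf : ContDiff ℝ (⊤ : ℕ∞) (Function.uncurry f)) (t r : ℝ) :
    HasDerivAt (fun s => f s r) (fderiv ℝ (Function.uncurry f) (t, r) (1, 0)) t :=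
  ((hf.differentiable (by simp)).differentiableAt (x := (t, r))).hasFDerivAt.comp_hasDerivAt
    (f := fun s => (s, r)) t ((hasDerivAt_id t).prodMk (hasDerivAt_const t r))

lemma hasDerivAt_fderiv_right (hf : ContDiff ℝ (⊤ : ℕ∞) (Function.uncurry f)) (t r : ℝ) :
    HasDerivAt (fun y => f t y) (fderiv ℝ (Function.uncurry f) (t, r) (0, 1)) r :=
  ((hf.differentiable (by simp)).differentiableAt (x := (t, r))).hasFDerivAt.comp_hasDerivAt
    (f := fun y => (t, y)) r ((hasDerivAt_const r t).prodMk (hasDerivAt_id r))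

lemma hasDerivAt_partialT (hf : ContDiff ℝ (⊤ : ℕ∞) (Function.uncurry f)) (t r : ℝ) :
    HasDerivAt (fun s => f s r) (partialT f t r) t :=
  (hasDerivAt_fderiv_left hf t r).differentiableAt.hasDerivAt

lemma hasDerivAt_partialR (hf : ContDiff ℝ (⊤ : ℕ∞) (Function.uncurry f)) (t r : ℝ) :
    HasDerivAt (fun y => f t y) (partialR f t r) r :=
  (hasDerivAt_fderiv_right hf t r).differentiableAt.hasDerivAt

lemma contDiff_partialT (hf : ContDiff ℝ (⊤ : ℕ∞) (Function.uncurry f)) :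
    ContDiff ℝ (⊤ : ℕ∞) (Function.uncurry (partialT f)) := by
  have h : Function.uncurry (partialT f) =
      fun p => fderiv ℝ (Function.uncurry f) p ((1, 0) : ℝ × ℝ) :=
    funext fun p => (hasDerivAt_fderiv_left hf p.1 p.2).deriv
  rw [h]
  exact (hf.fderiv_right (m := (⊤ : ℕ∞)) (by simp)).clm_apply contDiff_const

lemma contDiff_partialR (hf : ContDiff ℝ (⊤ : ℕ∞) (Function.uncurry f)) :
    ContDiff ℝ (⊤ : ℕ∞) (Function.uncurry (partialR f)) := by
  have h : Function.uncurry (partialR f) =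
      fun p => fderiv ℝ (Function.uncurry f) p ((0, 1) : ℝ × ℝ) :=
    funext fun p => (hasDerivAt_fderiv_right hf p.1 p.2).deriv
  rw [h]
  exact (hf.fderiv_right (m := (⊤ : ℕ∞)) (by simp)).clm_apply contDiff_const

end PartialDerivatives

section RadialWeight

variable {n : ℕ} {f f' : ℝ → ℝ} {d r : ℝ}

lemma hasDerivAt_pow_pred_mul (hn : 1 ≤ n) (hr : r ≠ 0) {f : ℝ → ℝ} (hf : HasDerivAt f d r) :
    HasDerivAt (fun y => y ^ (n - 1) * f y)
      (r ^ (n - 1) * ((n - 1 : ℝ) / r * f r + d)) r := by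
  refine ((hasDerivAt_pow (n - 1) r).mul hf).congr_deriv ?_
  obtain ⟨k, rfl⟩ := Nat.exists_eq_add_of_le' hn
  rcases k with _ | k
  · simp
  · simp only [Nat.add_sub_cancel]
    rw [pow_succ]
    push_cast
    field_simp
    ring

lemma deriv_deriv_pow_pred_mul (hn : 1 ≤ n) (hr : r ≠ 0) (hf : ∀ y, HasDerivAt f (f' y) y)
    (hf' : HasDerivAt f' d r) :
    deriv (fun y => deriv (fun z => z ^ (n - 1) * f z) y) r =
      r ^ (n - 1) * ((n - 1 : ℝ) * (n - 2) / r ^ 2 * f r + 2 * ((n - 1 : ℝ) / r) * f' r + d) := by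
  have heq : (fun y => deriv (fun z => z ^ (n - 1) * f z) y) =ᶠ[nhds r]
      fun y => y ^ (n - 1) * ((n - 1 : ℝ) / y * f y + f' y) := by
    filter_upwards [isOpen_ne.mem_nhds hr] with y hy
    exact (hasDerivAt_pow_pred_mul hn hy (hf y)).deriv
  have hdiv : HasDerivAt (fun y => (n - 1 : ℝ) / y) (-(n - 1 : ℝ) / r ^ 2) r :=
    ((hasDerivAt_const r (n - 1 : ℝ)).div (hasDerivAt_id r) hr).congr_deriv (by simp)
  rw [heq.deriv_eq]
  refine (hasDerivAt_pow_pred_mul hn hr ((hdiv.mul (hf r)).add hf')).deriv.trans ?_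
  simp only [Pi.add_apply, Pi.mul_apply]
  field_simp
  ring

end RadialWeight

namespace ViscousSetup

/-- The velocity `u = m / ρ`. -/
def vel {n : ℕ} {γ T E₀ : ℝ} (S : ViscousSetup n γ T E₀) (t r : ℝ) : ℝ := S.m t r / S.ρ t r

section Equations

variable {n : ℕ} {θ T E₀ t r : ℝ} (S : ViscousSetup n (2 * θ + 1) T E₀)

include S in
lemma theta_pos : 0 < θ := by linarith [S.hγ]

lemma rho_pos (ht : t ∈ Icc 0 T) (hr : r ∈ Icc S.a S.b) : 0 < S.ρ t r :=
  S.hcε.trans_le (S.pos t ht r hr)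

lemma m_eq (h : S.ρ t r ≠ 0) : S.m t r = S.ρ t r * S.vel t r := (mul_div_cancel₀ _ h).symm

lemma hasDerivAt_vel_left (h : S.ρ t r ≠ 0) :
    HasDerivAt (fun s => S.vel s r) (partialT S.vel t r) t :=
  ((hasDerivAt_partialT S.smooth_m t r).div (hasDerivAt_partialT S.smooth_ρ t r)
    h).differentiableAt.hasDerivAt

lemma hasDerivAt_vel_right (h : S.ρ t r ≠ 0) :
    HasDerivAt (fun y => S.vel t y) (partialR S.vel t r) r :=
  ((hasDerivAt_partialR S.smooth_m t r).div (hasDerivAt_partialR S.smooth_ρ t r)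
    h).differentiableAt.hasDerivAt

lemma partialR_vel_eq (h : S.ρ t r ≠ 0) :
    partialR S.vel t r = (partialR S.m t r - S.vel t r * partialR S.ρ t r) / S.ρ t r := by
  refine ((hasDerivAt_partialR S.smooth_m t r).div (hasDerivAt_partialR S.smooth_ρ t r)
    h).deriv.trans ?_
  rw [vel]
  field_simp

lemma partialT_vel_eq (h : S.ρ t r ≠ 0) :
    partialT S.vel t r = (partialT S.m t r - S.vel t r * partialT S.ρ t r) / S.ρ t r := by
  refine ((hasDerivAt_partialT S.smooth_m t r).div (hasDerivAt_partialT S.smooth_ρ t r)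
    h).deriv.trans ?_
  rw [vel]
  field_simp

lemma partialR_m_eq (h : S.ρ t r ≠ 0) :
    partialR S.m t r = partialR S.ρ t r * S.vel t r + S.ρ t r * partialR S.vel t r := by
  rw [S.partialR_vel_eq h]
  field_simp
  ring

lemma partialT_m_eq (h : S.ρ t r ≠ 0) :
    partialT S.m t r = partialT S.ρ t r * S.vel t r + S.ρ t r * partialT S.vel t r := by
  rw [S.partialT_vel_eq h]
  field_simp
  ring

lemma continuity_eq_expanded (ht : t ∈ Ioo 0 T) (hr : r ∈ Ioo S.a S.b) :
    partialT S.ρ t r + (n - 1 : ℝ) / r * S.m t r + partialR S.m t r =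
      S.ε * ((n - 1 : ℝ) / r * partialR S.ρ t r + partialR (partialR S.ρ) t r) := by
  have hr0 : 0 < r := S.ha0.trans hr.1
  have hn := one_le_two.trans S.hn
  have hm := hasDerivAt_pow_pred_mul hn hr0.ne' (hasDerivAt_partialR S.smooth_m t r)
  have hρ := hasDerivAt_pow_pred_mul hn hr0.ne'
    (hasDerivAt_partialR (contDiff_partialR S.smooth_ρ) t r)
  have h := S.continuity_eq t ht r hr
  change r ^ (n - 1) * partialT S.ρ t r + _ =
    S.ε * deriv (fun y => y ^ (n - 1) * partialR S.ρ t y) r at h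
  rw [hm.deriv, hρ.deriv] at h
  refine mul_left_cancel₀ (pow_pos hr0 (n - 1)).ne' ?_
  linear_combination h

lemma deriv_pressure_rho (hρ : 0 < S.ρ t r) :
    deriv (fun y => (2 * θ + 1 - 1) ^ 2 / (4 * (2 * θ + 1)) * S.ρ t y ^ (2 * θ + 1) +
      S.δ * S.ρ t y ^ 2) r = pressDeriv θ S.δ (S.ρ t r) * partialR S.ρ t r := by
  have hθ := S.theta_pos
  have hκ : (2 * θ + 1 - 1) ^ 2 / (4 * (2 * θ + 1)) = θ ^ 2 / (2 * θ + 1) := by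
    field_simp
    ring
  rw [hκ]
  exact ((hasDerivAt_pressure hθ.le hρ).comp r (hasDerivAt_partialR S.smooth_ρ t r)).deriv

lemma hasDerivAt_m_sq_div_rho (h : S.ρ t r ≠ 0) :
    HasDerivAt (fun y => S.m t y ^ 2 / S.ρ t y)
      (2 * S.vel t r * partialR S.m t r - S.vel t r ^ 2 * partialR S.ρ t r) r := by
  refine (((hasDerivAt_partialR S.smooth_m t r).pow 2).div (hasDerivAt_partialR S.smooth_ρ t r)
    h).congr_deriv ?_
  simp only [Pi.pow_apply, S.m_eq h]
  field_simp
  ring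

lemma momentum_eq_expanded (ht : t ∈ Ioo 0 T) (hr : r ∈ Ioo S.a S.b) :
    partialT S.m t r + 2 * S.vel t r * partialR S.m t r - S.vel t r ^ 2 * partialR S.ρ t r +
        (n - 1 : ℝ) / r * (S.m t r * S.vel t r) +
        pressDeriv θ S.δ (S.ρ t r) * partialR S.ρ t r =
      S.ε * (partialR (partialR S.m) t r + (n - 1 : ℝ) / r * partialR S.m t r -
        (n - 1 : ℝ) / r ^ 2 * S.m t r) := by
  have hr0 : 0 < r := S.ha0.trans hr.1
  have hn := one_le_two.trans S.hn
  have hρ := S.rho_pos (Ioo_subset_Icc_self ht) (Ioo_subset_Icc_self hr)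
  have hm := hasDerivAt_pow_pred_mul hn hr0.ne' (hasDerivAt_partialR S.smooth_m t r)
  have hmm := deriv_deriv_pow_pred_mul hn hr0.ne' (hasDerivAt_partialR S.smooth_m t)
    (hasDerivAt_partialR (contDiff_partialR S.smooth_m) t r)
  have hflux := hasDerivAt_pow_pred_mul hn hr0.ne' (S.hasDerivAt_m_sq_div_rho hρ.ne')
  have h := S.momentum_eq t ht r hr
  simp only [mul_div_assoc (_ ^ (n - 1)) (_ ^ 2)] at h
  rw [hflux.deriv, S.deriv_pressure_rho hρ, hmm, hm.deriv] at h
  change r ^ (n - 1) * partialT S.m t r + _ + _ = _ at h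
  have hmu : S.m t r ^ 2 / S.ρ t r = S.m t r * S.vel t r := by rw [sq, mul_div_assoc, vel]
  rw [hmu] at h
  refine mul_left_cancel₀ (pow_pos hr0 (n - 1)).ne' ?_
  linear_combination (norm := (field_simp; ring)) h

end Equations

end ViscousSetup

namespace EntropyFlux

variable {l R : ℝ} (Φ : EntropyFlux (Ioo l R))

/-- The derivative of the entropy `ρ F` with respect to the density at fixed momentum. -/
def G (ρ u : ℝ) : ℝ := Φ.F ρ u + Φ.J ρ u / ρ - u * Φ.V ρ u

variable {ρ u : ℝ → ℝ} {ρ' u' x : ℝ}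

lemma hasDerivAt_entropy (hρ : HasDerivAt ρ ρ' x) (hu : HasDerivAt u u' x)
    (hx : ρ x ∈ Ioo l R) (hx0 : ρ x ≠ 0) :
    HasDerivAt (fun s => ρ s * Φ.F (ρ s) (u s))
      (Φ.G (ρ x) (u x) * ρ' + Φ.V (ρ x) (u x) * (ρ' * u x + ρ x * u')) x := by
  refine (hρ.mul (Φ.hasPartials_F.comp isOpen_Ioo hρ hu hx)).congr_deriv ?_
  rw [G]
  field_simp
  ring

lemma hasDerivAt_G (hρ : HasDerivAt ρ ρ' x) (hu : HasDerivAt u u' x)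
    (hx : ρ x ∈ Ioo l R) (hx0 : ρ x ≠ 0) :
    HasDerivAt (fun s => Φ.G (ρ s) (u s))
      (Φ.c (ρ x) ^ 2 / ρ x * Φ.Y (ρ x) (u x) * ρ' + Φ.c (ρ x) * Φ.Z (ρ x) (u x) * u' -
        u x * (Φ.c (ρ x) / ρ x * Φ.Z (ρ x) (u x) * ρ' + Φ.Y (ρ x) (u x) * u')) x := by
  refine (((Φ.hasPartials_F.comp isOpen_Ioo hρ hu hx).add
    ((Φ.hasPartials_J.comp isOpen_Ioo hρ hu hx).div hρ hx0)).sub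
    (hu.mul (Φ.hasPartials_V.comp isOpen_Ioo hρ hu hx))).congr_deriv ?_
  field_simp
  ring

lemma hasDerivAt_flux (hρ : HasDerivAt ρ ρ' x) (hu : HasDerivAt u u' x)
    (hx : ρ x ∈ Ioo l R) (hx0 : ρ x ≠ 0) :
    HasDerivAt (fun s => u s * ρ s * Φ.F (ρ s) (u s) + Φ.H (ρ s) (u s))
      (Φ.G (ρ x) (u x) * (ρ' * u x + ρ x * u') +
        Φ.V (ρ x) (u x) *
          (2 * u x * (ρ' * u x + ρ x * u') - u x ^ 2 * ρ' + Φ.c (ρ x) ^ 2 * ρ')) x := by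
  refine (((hu.mul hρ).mul (Φ.hasPartials_F.comp isOpen_Ioo hρ hu hx)).add
    (Φ.hasPartials_H.comp isOpen_Ioo hρ hu hx)).congr_deriv ?_
  simp only [Pi.mul_apply, G]
  field_simp
  ring

end EntropyFlux

namespace ViscousSetup

variable {n : ℕ} {θ T E₀ l R t r : ℝ} (S : ViscousSetup n (2 * θ + 1) T E₀)
  (Φ : EntropyFlux (Ioo l R))

/-- The entropy `ρ F` along the solution. -/
def entropy (t r : ℝ) : ℝ := S.ρ t r * Φ.F (S.ρ t r) (S.vel t r)

/-- The entropy flux `u ρ F + H` along the solution. -/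
def flux (t r : ℝ) : ℝ :=
  S.vel t r * S.ρ t r * Φ.F (S.ρ t r) (S.vel t r) + Φ.H (S.ρ t r) (S.vel t r)

/-- The Hessian of the entropy in `(ρ, m)`, evaluated at the radial derivative of the solution. -/
def hessian (t r : ℝ) : ℝ :=
  Φ.c (S.ρ t r) ^ 2 / S.ρ t r * Φ.Y (S.ρ t r) (S.vel t r) * partialR S.ρ t r ^ 2 +
    2 * Φ.c (S.ρ t r) * Φ.Z (S.ρ t r) (S.vel t r) * partialR S.ρ t r * partialR S.vel t r +
    S.ρ t r * Φ.Y (S.ρ t r) (S.vel t r) * partialR S.vel t r ^ 2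

/-- The quantity `u J - H` along the solution: the part of the geometric source term that is not
a multiple of the entropy flux. -/
def stress (t r : ℝ) : ℝ :=
  S.vel t r * Φ.J (S.ρ t r) (S.vel t r) - Φ.H (S.ρ t r) (S.vel t r)

lemma hasDerivAt_entropy_left (hρ : S.ρ t r ∈ Ioo l R) (h0 : S.ρ t r ≠ 0) :
    HasDerivAt (fun s => S.entropy Φ s r)
      (Φ.G (S.ρ t r) (S.vel t r) * partialT S.ρ t r +
        Φ.V (S.ρ t r) (S.vel t r) * partialT S.m t r) t := by
  rw [S.partialT_m_eq h0]
  exact Φ.hasDerivAt_entropy (hasDerivAt_partialT S.smooth_ρ t r) (S.hasDerivAt_vel_left h0) hρ h0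

lemma hasDerivAt_entropy_right (hρ : S.ρ t r ∈ Ioo l R) (h0 : S.ρ t r ≠ 0) :
    HasDerivAt (fun y => S.entropy Φ t y)
      (Φ.G (S.ρ t r) (S.vel t r) * partialR S.ρ t r +
        Φ.V (S.ρ t r) (S.vel t r) * partialR S.m t r) r := by
  rw [S.partialR_m_eq h0]
  exact Φ.hasDerivAt_entropy (hasDerivAt_partialR S.smooth_ρ t r) (S.hasDerivAt_vel_right h0) hρ h0

lemma partialT_entropy (hρ : S.ρ t r ∈ Ioo l R) (h0 : S.ρ t r ≠ 0) :
    partialT (S.entropy Φ) t r = Φ.G (S.ρ t r) (S.vel t r) * partialT S.ρ t r +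
      Φ.V (S.ρ t r) (S.vel t r) * partialT S.m t r :=
  (S.hasDerivAt_entropy_left Φ hρ h0).deriv

lemma partialR_entropy (hρ : S.ρ t r ∈ Ioo l R) (h0 : S.ρ t r ≠ 0) :
    partialR (S.entropy Φ) t r = Φ.G (S.ρ t r) (S.vel t r) * partialR S.ρ t r +
      Φ.V (S.ρ t r) (S.vel t r) * partialR S.m t r :=
  (S.hasDerivAt_entropy_right Φ hρ h0).deriv

lemma hasDerivAt_flux_right (hρ : S.ρ t r ∈ Ioo l R) (h0 : S.ρ t r ≠ 0) :
    HasDerivAt (fun y => S.flux Φ t y)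
      (Φ.G (S.ρ t r) (S.vel t r) * partialR S.m t r +
        Φ.V (S.ρ t r) (S.vel t r) * (2 * S.vel t r * partialR S.m t r -
          S.vel t r ^ 2 * partialR S.ρ t r + Φ.c (S.ρ t r) ^ 2 * partialR S.ρ t r)) r := by
  rw [S.partialR_m_eq h0]
  exact Φ.hasDerivAt_flux (hasDerivAt_partialR S.smooth_ρ t r) (S.hasDerivAt_vel_right h0) hρ h0

lemma hasDerivAt_partialR_entropy (hρ : S.ρ t r ∈ Ioo l R) (h0 : S.ρ t r ≠ 0) :
    HasDerivAt (fun y => partialR (S.entropy Φ) t y)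
      (S.hessian Φ t r + Φ.G (S.ρ t r) (S.vel t r) * partialR (partialR S.ρ) t r +
        Φ.V (S.ρ t r) (S.vel t r) * partialR (partialR S.m) t r) r := by
  have hρ' := hasDerivAt_partialR S.smooth_ρ t r
  have hu := S.hasDerivAt_vel_right h0
  have heq : (fun y => partialR (S.entropy Φ) t y) =ᶠ[nhds r] fun y =>
      Φ.G (S.ρ t y) (S.vel t y) * partialR S.ρ t y +
        Φ.V (S.ρ t y) (S.vel t y) * partialR S.m t y := by
    filter_upwards [hρ'.continuousAt.eventually_mem (isOpen_Ioo.mem_nhds hρ),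
      hρ'.continuousAt.eventually_ne h0] with y hy hy0 using S.partialR_entropy Φ hy hy0
  refine HasDerivAt.congr_of_eventuallyEq ?_ heq
  refine (((Φ.hasDerivAt_G hρ' hu hρ h0).mul
      (hasDerivAt_partialR (contDiff_partialR S.smooth_ρ) t r)).add
    ((Φ.hasPartials_V.comp isOpen_Ioo hρ' hu hρ).mul
      (hasDerivAt_partialR (contDiff_partialR S.smooth_m) t r))).congr_deriv ?_
  rw [S.partialR_m_eq h0, hessian]
  field_simp
  ring

lemma G_mul_m_add (h0 : S.ρ t r ≠ 0) :
    Φ.G (S.ρ t r) (S.vel t r) * S.m t r + Φ.V (S.ρ t r) (S.vel t r) * (S.m t r * S.vel t r) =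
      S.flux Φ t r + S.stress Φ t r := by
  rw [S.m_eq h0, EntropyFlux.G, flux, stress]
  field_simp
  ring

lemma entropy_balance (hc : Φ.c (S.ρ t r) ^ 2 = pressDeriv θ S.δ (S.ρ t r)) (ht : t ∈ Ioo 0 T)
    (hr : r ∈ Ioo S.a S.b) (hρ : S.ρ t r ∈ Ioo l R) :
    partialT (S.entropy Φ) t r + partialR (S.flux Φ) t r +
        (n - 1 : ℝ) / r * (S.flux Φ t r + S.stress Φ t r) =
      S.ε * (partialR (partialR (S.entropy Φ)) t r +
        (n - 1 : ℝ) / r * partialR (S.entropy Φ) t r - S.hessian Φ t r -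
        (n - 1 : ℝ) / r ^ 2 * (S.vel t r * S.ρ t r * Φ.V (S.ρ t r) (S.vel t r))) := by
  have h0 := (S.rho_pos (Ioo_subset_Icc_self ht) (Ioo_subset_Icc_self hr)).ne'
  have hmass := S.continuity_eq_expanded ht hr
  have hmom := S.momentum_eq_expanded ht hr
  have hflux : partialR (S.flux Φ) t r = _ := (S.hasDerivAt_flux_right Φ hρ h0).deriv
  have hηrr : partialR (partialR (S.entropy Φ)) t r = _ :=
    (S.hasDerivAt_partialR_entropy Φ hρ h0).deriv
  rw [← hc] at hmom
  rw [S.partialT_entropy Φ hρ h0, hflux, hηrr, S.partialR_entropy Φ hρ h0]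
  linear_combination Φ.G (S.ρ t r) (S.vel t r) * hmass + Φ.V (S.ρ t r) (S.vel t r) * hmom -
    (n - 1 : ℝ) / r * S.G_mul_m_add Φ h0 -
    S.ε * ((n - 1 : ℝ) / r ^ 2) * Φ.V (S.ρ t r) (S.vel t r) * S.m_eq h0

/-- The boundary functional of the entropy balance localised by the weight `ω`, where `W` is a
primitive of `ω`. -/
def boundaryTerm (ω W : ℝ → ℝ) (t r : ℝ) : ℝ :=
  W r * (r ^ (n - 1) * (S.ε * partialR (S.entropy Φ) t r - S.flux Φ t r)) -
    S.ε * (ω r * (r ^ (n - 1) * S.entropy Φ t r))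

/-- The source of the entropy balance localised by the weight `ω` with primitive `W`, divided by
`r ^ (n - 1)`. -/
def source (ω W : ℝ → ℝ) (t r : ℝ) : ℝ :=
  ω r * S.flux Φ t r + S.ε * ((n - 1 : ℝ) / r * ω r + deriv ω r) * S.entropy Φ t r -
    (n - 1 : ℝ) / r * W r * S.stress Φ t r - S.ε * W r * S.hessian Φ t r -
    S.ε * ((n - 1 : ℝ) / r ^ 2) * W r *
      (S.vel t r * S.ρ t r * Φ.V (S.ρ t r) (S.vel t r))

lemma hasDerivAt_boundaryTerm {ω W : ℝ → ℝ} (hω : DifferentiableAt ℝ ω r)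
    (hW : HasDerivAt W (ω r) r) (hc : Φ.c (S.ρ t r) ^ 2 = pressDeriv θ S.δ (S.ρ t r))
    (ht : t ∈ Ioo 0 T) (hr : r ∈ Ioo S.a S.b) (hρ : S.ρ t r ∈ Ioo l R) :
    HasDerivAt (fun y => S.boundaryTerm Φ ω W t y)
      (r ^ (n - 1) * W r * partialT (S.entropy Φ) t r -
        r ^ (n - 1) * S.source Φ ω W t r) r := by
  have h0 := (S.rho_pos (Ioo_subset_Icc_self ht) (Ioo_subset_Icc_self hr)).ne'
  have hr0 : r ≠ 0 := (S.ha0.trans hr.1).ne'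
  have hn := one_le_two.trans S.hn
  have hη : HasDerivAt (fun y => S.entropy Φ t y) (partialR (S.entropy Φ) t r) r :=
    (S.hasDerivAt_entropy_right Φ hρ h0).differentiableAt.hasDerivAt
  have hηr : HasDerivAt (fun y => partialR (S.entropy Φ) t y)
      (partialR (partialR (S.entropy Φ)) t r) r :=
    (S.hasDerivAt_partialR_entropy Φ hρ h0).differentiableAt.hasDerivAt
  have hq : HasDerivAt (fun y => S.flux Φ t y) (partialR (S.flux Φ) t r) r :=
    (S.hasDerivAt_flux_right Φ hρ h0).differentiableAt.hasDerivAt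
  refine ((hW.mul (hasDerivAt_pow_pred_mul hn hr0 ((hηr.const_mul S.ε).sub hq))).sub
    ((hω.hasDerivAt.mul (hasDerivAt_pow_pred_mul hn hr0 hη)).const_mul S.ε)).congr_deriv ?_
  simp only [Pi.sub_apply, source]
  linear_combination (-(r ^ (n - 1) * W r)) * S.entropy_balance Φ hc ht hr hρ

end ViscousSetup

/-! ### Lower bound for the localised source -/

lemma two_mul_mul_mul_le {c z p v ρ : ℝ} (hρ : 0 < ρ) (hz : |z| ≤ 1) :
    2 * c * z * p * v ≤ c ^ 2 / ρ * p ^ 2 + ρ * v ^ 2 := by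
  have hz2 : 0 ≤ 1 - z ^ 2 := sub_nonneg.2 ((sq_le_one_iff_abs_le_one z).2 hz)
  have h : 0 ≤ ((c * p - z * ρ * v) ^ 2 + (1 - z ^ 2) * (ρ * v) ^ 2) / ρ := by positivity
  calc 2 * c * z * p * v
      ≤ 2 * c * z * p * v + ((c * p - z * ρ * v) ^ 2 + (1 - z ^ 2) * (ρ * v) ^ 2) / ρ :=
        le_add_of_nonneg_right h
    _ = c ^ 2 / ρ * p ^ 2 + ρ * v ^ 2 := by
        field_simp
        ring

/-- A weight `ω` on `[a, b]` with a primitive `W` vanishing at `a`, both controlled by `K`. -/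
structure Cutoff (a b K : ℝ) (ω W : ℝ → ℝ) : Prop where
  differentiable : Differentiable ℝ ω
  continuous_deriv : Continuous (deriv ω)
  hasDerivAt : ∀ r, HasDerivAt W (ω r) r
  left : W a = 0
  nonneg : ∀ r ∈ Icc a b, 0 ≤ ω r
  le : ∀ r ∈ Icc a b, ω r ≤ K
  abs_deriv_le : ∀ r ∈ Icc a b, |deriv ω r| ≤ K
  primitive_nonneg : ∀ r ∈ Icc a b, 0 ≤ W r
  primitive_le : ∀ r ∈ Icc a b, W r ≤ K
  primitive_div_le : ∀ r ∈ Icc a b, W r / r ≤ K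

namespace Cutoff

variable {a b K : ℝ} {ω W : ℝ → ℝ}

lemma continuous (hω : Cutoff a b K ω W) : Continuous ω := hω.differentiable.continuous

lemma continuous_primitive (hω : Cutoff a b K ω W) : Continuous W :=
  continuous_iff_continuousAt.2 fun r => (hω.hasDerivAt r).continuousAt

lemma bound_nonneg (hω : Cutoff a b K ω W) (hab : a ≤ b) : 0 ≤ K :=
  (abs_nonneg _).trans (hω.abs_deriv_le a (left_mem_Icc.2 hab))

lemma of_hasCompactSupport (hω : ContDiff ℝ 1 ω) (hs : HasCompactSupport ω)
    (h0 : ∀ r : ℝ, 0 ≤ r → 0 ≤ ω r) :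
    ∃ K : ℝ, ∀ a b : ℝ, 0 < a → Cutoff a b K ω (fun r => ∫ x in a..r, ω x) := by
  have hc := hω.continuous
  obtain ⟨K₁, hK₁⟩ := hs.exists_bound_of_continuous hc
  obtain ⟨K₂, hK₂⟩ := hs.deriv.exists_bound_of_continuous hω.continuous_deriv_one
  have hK₁0 : 0 ≤ K₁ := (norm_nonneg _).trans (hK₁ 0)
  refine ⟨max (max K₁ K₂) (∫ x, ‖ω x‖), fun a b ha => ?_⟩
  have hle₁ : K₁ ≤ max (max K₁ K₂) (∫ x, ‖ω x‖) := (le_max_left _ _).trans (le_max_left _ _)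
  have hle₂ : K₂ ≤ max (max K₁ K₂) (∫ x, ‖ω x‖) := (le_max_right _ _).trans (le_max_left _ _)
  have hprim_le : ∀ r ∈ Icc a b, ∫ x in a..r, ω x ≤ ∫ x, ‖ω x‖ := fun r hr => by
    rw [intervalIntegral.integral_of_le hr.1]
    exact (le_abs_self _).trans ((norm_integral_le_integral_norm _).trans
      (setIntegral_le_integral (hc.integrable_of_hasCompactSupport hs).norm
        (Filter.Eventually.of_forall fun _ => norm_nonneg _)))
  have hprim_le_mul : ∀ r ∈ Icc a b, ∫ x in a..r, ω x ≤ K₁ * r := fun r hr =>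
    calc ∫ x in a..r, ω x ≤ K₁ * |r - a| := (le_abs_self _).trans
          (intervalIntegral.norm_integral_le_of_norm_le_const fun x _ => hK₁ x)
      _ ≤ K₁ * r := by
          rw [abs_of_nonneg (sub_nonneg.2 hr.1)]
          gcongr
          linarith
  exact
  { differentiable := hω.differentiable one_ne_zero
    continuous_deriv := hω.continuous_deriv_one
    hasDerivAt := fun r => intervalIntegral.integral_hasDerivAt_right (hc.intervalIntegrable _ _)
      (hc.stronglyMeasurableAtFilter _ _) hc.continuousAt
    left := intervalIntegral.integral_same
    nonneg := fun r hr => h0 r (ha.le.trans hr.1)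
    le := fun r _ => (le_abs_self _).trans ((hK₁ r).trans hle₁)
    abs_deriv_le := fun r _ => (hK₂ r).trans hle₂
    primitive_nonneg := fun r hr => intervalIntegral.integral_nonneg hr.1 fun x hx =>
      h0 x (ha.le.trans hx.1)
    primitive_le := fun r hr => (hprim_le r hr).trans (le_max_right _ _)
    primitive_div_le := fun r hr =>
      ((div_le_iff₀ (ha.trans_le hr.1)).2 (hprim_le_mul r hr)).trans hle₁ }

end Cutoff

namespace ViscousSetup

section Source

variable {n : ℕ} {θ T E₀ : ℝ} (S : ViscousSetup n (2 * θ + 1) T E₀)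

/-- The part of the energy dissipation density that controls the derivatives of the solution. -/
def dissipation (t r : ℝ) : ℝ :=
  pressDeriv θ S.δ (S.ρ t r) / S.ρ t r * partialR S.ρ t r ^ 2 +
    S.ρ t r * partialR S.vel t r ^ 2

/-- The energy density `energyDensity` along the solution. -/
def energyAlong (t r : ℝ) : ℝ := energyDensity θ S.δ S.ρbar (S.ρ t r) (S.vel t r)

/-- The density `ρ |u|³ + ρ^(γ + θ)`, where `γ + θ = 3 θ + 1`. -/
def cubicDensity (t r : ℝ) : ℝ := S.ρ t r * |S.vel t r| ^ 3 + S.ρ t r ^ (3 * θ + 1)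

include S in
lemma dim_sub_one_nonneg : (0 : ℝ) ≤ n - 1 :=
  sub_nonneg.2 (Nat.one_le_cast.2 (one_le_two.trans S.hn))

lemma a_le_b : S.a ≤ S.b := (S.ha1.trans S.hb).le

variable {t r : ℝ}

lemma radius_pos (hr : r ∈ Icc S.a S.b) : 0 < r := S.ha0.trans_le hr.1

lemma viscosity_div_le {M₀ : ℝ} (hM : S.ε / S.a ≤ M₀) (hr : r ∈ Icc S.a S.b) :
    S.ε / r ≤ M₀ :=
  (div_le_div_of_nonneg_left S.hε.le S.ha0 hr.1).trans hM

lemma viscosity_le {M₀ : ℝ} (hM : S.ε / S.a ≤ M₀) : S.ε ≤ M₀ :=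
  (le_div_self S.hε.le S.ha0 S.ha1.le).trans hM

lemma dissipation_nonneg (ht : t ∈ Icc 0 T) (hr : r ∈ Icc S.a S.b) : 0 ≤ S.dissipation t r := by
  have h0 := S.rho_pos ht hr
  have hp := pressDeriv_pos S.theta_pos S.hδ.le h0
  rw [dissipation]
  positivity

variable {l R c₀ C K M₀ : ℝ} {Φ : EntropyFlux (Ioo l R)} {ω W : ℝ → ℝ}

lemma hessian_le (hΦ : Φ.IsCoercive θ S.δ S.ρbar c₀ C) (hmem : S.ρ t r ∈ Ioo l R)
    (h0 : 0 < S.ρ t r) : S.hessian Φ t r ≤ 2 * S.dissipation t r := by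
  have hY := (abs_le.1 (hΦ.abs_Y_le _ hmem (S.vel t r))).2
  have hρρ : Φ.c (S.ρ t r) ^ 2 / S.ρ t r * Φ.Y (S.ρ t r) (S.vel t r) * partialR S.ρ t r ^ 2 ≤
      Φ.c (S.ρ t r) ^ 2 / S.ρ t r * 1 * partialR S.ρ t r ^ 2 := by gcongr
  have hvv : S.ρ t r * Φ.Y (S.ρ t r) (S.vel t r) * partialR S.vel t r ^ 2 ≤
      S.ρ t r * 1 * partialR S.vel t r ^ 2 := by gcongr
  have hρv := two_mul_mul_mul_le (c := Φ.c (S.ρ t r)) (p := partialR S.ρ t r)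
    (v := partialR S.vel t r) h0 (hΦ.abs_Z_le _ hmem (S.vel t r))
  rw [hessian, dissipation, ← hΦ.c_sq _ hmem]
  linarith

lemma mul_flux_ge (hΦ : Φ.IsCoercive θ S.δ S.ρbar c₀ C) (hω : Cutoff S.a S.b K ω W)
    (hr : r ∈ Icc S.a S.b) (hmem : S.ρ t r ∈ Ioo l R) :
    c₀ * (S.cubicDensity t r * ω r) - K * (C * S.energyAlong t r) ≤ ω r * S.flux Φ t r := by
  have hflux : c₀ * S.cubicDensity t r - C * S.energyAlong t r ≤ S.flux Φ t r :=
    hΦ.flux_ge _ hmem _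
  have hCE : 0 ≤ C * S.energyAlong t r := (abs_nonneg _).trans (hΦ.abs_entropy_le _ hmem _)
  have h := mul_le_mul_of_nonneg_left hflux (hω.nonneg r hr)
  have hK := mul_le_mul_of_nonneg_right (hω.le r hr) hCE
  linarith

lemma abs_entropy_term_le (hΦ : Φ.IsCoercive θ S.δ S.ρbar c₀ C) (hω : Cutoff S.a S.b K ω W)
    (hM : S.ε / S.a ≤ M₀) (hr : r ∈ Icc S.a S.b) (hmem : S.ρ t r ∈ Ioo l R) :
    |S.ε * ((n - 1 : ℝ) / r * ω r + deriv ω r) * S.entropy Φ t r| ≤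
      n * M₀ * K * (C * S.energyAlong t r) := by
  have hε := S.hε
  have hr0 := S.radius_pos hr
  have hν := S.dim_sub_one_nonneg
  have hω0 := hω.nonneg r hr
  have hK := hω.bound_nonneg S.a_le_b
  have hM0 : 0 ≤ M₀ := hε.le.trans (S.viscosity_le hM)
  have hcoef : |S.ε * ((n - 1 : ℝ) / r * ω r + deriv ω r)| ≤ n * M₀ * K :=
    calc |S.ε * ((n - 1 : ℝ) / r * ω r + deriv ω r)|
        = |(n - 1 : ℝ) * (S.ε / r) * ω r + S.ε * deriv ω r| := by ring_nf
      _ ≤ (n - 1 : ℝ) * (S.ε / r) * ω r + S.ε * |deriv ω r| := by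
          refine (abs_add_le _ _).trans_eq ?_
          rw [abs_of_nonneg (by positivity), abs_mul, abs_of_pos hε]
      _ ≤ (n - 1 : ℝ) * M₀ * K + M₀ * K := by
          gcongr
          exacts [S.viscosity_div_le hM hr, hω.le r hr, S.viscosity_le hM, hω.abs_deriv_le r hr]
      _ = n * M₀ * K := by ring
  rw [abs_mul]
  exact mul_le_mul hcoef (hΦ.abs_entropy_le _ hmem _) (abs_nonneg _) (by positivity)

lemma stress_term_le (hΦ : Φ.IsCoercive θ S.δ S.ρbar c₀ C) (hω : Cutoff S.a S.b K ω W)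
    (hr : r ∈ Icc S.a S.b) (hmem : S.ρ t r ∈ Ioo l R) :
    (n - 1 : ℝ) / r * W r * S.stress Φ t r ≤ (n - 1) * K * (C * S.energyAlong t r) := by
  have hr0 := S.radius_pos hr
  have hν := S.dim_sub_one_nonneg
  have hW := hω.primitive_nonneg r hr
  have hCE : 0 ≤ C * S.energyAlong t r := (abs_nonneg _).trans (hΦ.abs_entropy_le _ hmem _)
  have hstress : S.stress Φ t r ≤ C * S.energyAlong t r := hΦ.stress_le _ hmem _
  calc (n - 1 : ℝ) / r * W r * S.stress Φ t r
      = (n - 1) * (W r / r) * S.stress Φ t r := by ring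
    _ ≤ (n - 1) * (W r / r) * (C * S.energyAlong t r) := by gcongr
    _ ≤ (n - 1) * K * (C * S.energyAlong t r) := by
        gcongr
        exact hω.primitive_div_le r hr

lemma hessian_term_le (hΦ : Φ.IsCoercive θ S.δ S.ρbar c₀ C) (hω : Cutoff S.a S.b K ω W)
    (ht : t ∈ Icc 0 T) (hr : r ∈ Icc S.a S.b) (hmem : S.ρ t r ∈ Ioo l R) :
    S.ε * W r * S.hessian Φ t r ≤ 2 * K * (S.ε * S.dissipation t r) := by
  have hε := S.hε
  have hW := hω.primitive_nonneg r hr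
  have hD := S.dissipation_nonneg ht hr
  calc S.ε * W r * S.hessian Φ t r
      ≤ S.ε * W r * (2 * S.dissipation t r) := by
        gcongr
        exact S.hessian_le hΦ hmem (S.rho_pos ht hr)
    _ ≤ S.ε * K * (2 * S.dissipation t r) := by
        gcongr
        exact hω.primitive_le r hr
    _ = 2 * K * (S.ε * S.dissipation t r) := by ring

lemma abs_V_term_le (hΦ : Φ.IsCoercive θ S.δ S.ρbar c₀ C) (hω : Cutoff S.a S.b K ω W)
    (hM : S.ε / S.a ≤ M₀) (hr : r ∈ Icc S.a S.b) (hmem : S.ρ t r ∈ Ioo l R) :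
    |S.ε * ((n - 1 : ℝ) / r ^ 2) * W r *
        (S.vel t r * S.ρ t r * Φ.V (S.ρ t r) (S.vel t r))| ≤
      (n - 1) * M₀ * K * (C * S.energyAlong t r) := by
  have hε := S.hε
  have hr0 := S.radius_pos hr
  have hν := S.dim_sub_one_nonneg
  have hW := hω.primitive_nonneg r hr
  have hK := hω.bound_nonneg S.a_le_b
  have hM0 : 0 ≤ M₀ := hε.le.trans (S.viscosity_le hM)
  have hcoef : S.ε * ((n - 1 : ℝ) / r ^ 2) * W r ≤ (n - 1) * M₀ * K :=
    calc S.ε * ((n - 1 : ℝ) / r ^ 2) * W r = (n - 1) * (S.ε / r) * (W r / r) := by ring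
      _ ≤ (n - 1) * M₀ * K := by
          gcongr
          exacts [S.viscosity_div_le hM hr, hω.primitive_div_le r hr]
  rw [abs_mul, abs_of_nonneg (by positivity : 0 ≤ S.ε * ((n - 1 : ℝ) / r ^ 2) * W r)]
  exact mul_le_mul hcoef (hΦ.abs_mul_V_le _ hmem _) (abs_nonneg _) (by positivity)

lemma source_ge (hΦ : Φ.IsCoercive θ S.δ S.ρbar c₀ C) (hω : Cutoff S.a S.b K ω W)
    (hM : S.ε / S.a ≤ M₀) (ht : t ∈ Icc 0 T) (hr : r ∈ Icc S.a S.b)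
    (hmem : S.ρ t r ∈ Ioo l R) :
    c₀ * (S.cubicDensity t r * ω r) - K * C * (n + (2 * n - 1) * M₀) * S.energyAlong t r -
      2 * K * S.ε * S.dissipation t r ≤ S.source Φ ω W t r := by
  have hflux := S.mul_flux_ge hΦ hω hr hmem
  have hentropy := (abs_le.1 (S.abs_entropy_term_le hΦ hω hM hr hmem)).1
  have hstress := S.stress_term_le hΦ hω hr hmem
  have hhessian := S.hessian_term_le hΦ hω ht hr hmem
  have hV := (abs_le.1 (S.abs_V_term_le hΦ hω hM hr hmem)).2
  rw [source]
  linarith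

end Source

section Continuity

variable {n : ℕ} {θ T E₀ : ℝ} (S : ViscousSetup n (2 * θ + 1) T E₀)

/-- The closed space-time cylinder. -/
def cylinder : Set (ℝ × ℝ) := Icc 0 T ×ˢ Icc S.a S.b

lemma rho_ne_zero {p : ℝ × ℝ} (hp : p ∈ S.cylinder) : S.ρ p.1 p.2 ≠ 0 :=
  (S.rho_pos hp.1 hp.2).ne'

lemma radius_ne_zero {p : ℝ × ℝ} (hp : p ∈ S.cylinder) : p.2 ≠ 0 := (S.radius_pos hp.2).ne'

lemma continuousOn_rho : ContinuousOn (Function.uncurry S.ρ) S.cylinder :=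
  S.smooth_ρ.continuous.continuousOn

lemma continuousOn_rho_rpow (q : ℝ) :
    ContinuousOn (fun p : ℝ × ℝ => S.ρ p.1 p.2 ^ q) S.cylinder :=
  S.continuousOn_rho.rpow_const fun _ hp => Or.inl (S.rho_ne_zero hp)

lemma continuousOn_vel : ContinuousOn (Function.uncurry S.vel) S.cylinder :=
  S.smooth_m.continuous.continuousOn.div S.continuousOn_rho fun _ hp => S.rho_ne_zero hp

lemma continuousOn_partialR_rho : ContinuousOn (Function.uncurry (partialR S.ρ)) S.cylinder :=
  (contDiff_partialR S.smooth_ρ).continuous.continuousOn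

lemma continuousOn_partialR_m : ContinuousOn (Function.uncurry (partialR S.m)) S.cylinder :=
  (contDiff_partialR S.smooth_m).continuous.continuousOn

lemma continuousOn_partialR_vel : ContinuousOn (Function.uncurry (partialR S.vel)) S.cylinder :=
  ((S.continuousOn_partialR_m.sub (S.continuousOn_vel.mul S.continuousOn_partialR_rho)).div
    S.continuousOn_rho fun _ hp => S.rho_ne_zero hp).congr
      fun _ hp => S.partialR_vel_eq (S.rho_ne_zero hp)

lemma continuousOn_dissipation : ContinuousOn (Function.uncurry S.dissipation) S.cylinder :=
  ((((continuousOn_const.mul (S.continuousOn_rho_rpow _)).add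
    (continuousOn_const.mul S.continuousOn_rho)).div S.continuousOn_rho
      fun _ hp => S.rho_ne_zero hp).mul (S.continuousOn_partialR_rho.pow 2)).add
        (S.continuousOn_rho.mul (S.continuousOn_partialR_vel.pow 2))

lemma continuousOn_energyAlong : ContinuousOn (Function.uncurry S.energyAlong) S.cylinder :=
  ((((S.continuousOn_rho.mul (S.continuousOn_vel.pow 2)).add (S.continuousOn_rho_rpow _)).add
    (continuousOn_const.mul (S.continuousOn_rho.pow 2))).add continuousOn_const).add
      continuousOn_const

lemma continuousOn_cubicDensity : ContinuousOn (Function.uncurry S.cubicDensity) S.cylinder :=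
  (S.continuousOn_rho.mul (S.continuousOn_vel.abs.pow 3)).add (S.continuousOn_rho_rpow _)

lemma continuousOn_comp {f : ℝ → ℝ → ℝ} (hf : Continuous (Function.uncurry f)) :
    ContinuousOn (fun p : ℝ × ℝ => f (S.ρ p.1 p.2) (S.vel p.1 p.2)) S.cylinder :=
  hf.comp_continuousOn (S.continuousOn_rho.prodMk S.continuousOn_vel)

variable {l R : ℝ} (Φ : EntropyFlux (Ioo l R))

lemma continuousOn_G :
    ContinuousOn (fun p : ℝ × ℝ => Φ.G (S.ρ p.1 p.2) (S.vel p.1 p.2)) S.cylinder :=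
  ((S.continuousOn_comp Φ.continuous_F).add ((S.continuousOn_comp Φ.continuous_J).div
    S.continuousOn_rho fun _ hp => S.rho_ne_zero hp)).sub
      (S.continuousOn_vel.mul (S.continuousOn_comp Φ.continuous_V))

lemma continuousOn_entropy : ContinuousOn (Function.uncurry (S.entropy Φ)) S.cylinder :=
  S.continuousOn_rho.mul (S.continuousOn_comp Φ.continuous_F)

lemma continuousOn_flux : ContinuousOn (Function.uncurry (S.flux Φ)) S.cylinder :=
  ((S.continuousOn_vel.mul S.continuousOn_rho).mul (S.continuousOn_comp Φ.continuous_F)).add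
    (S.continuousOn_comp Φ.continuous_H)

lemma continuousOn_stress : ContinuousOn (Function.uncurry (S.stress Φ)) S.cylinder :=
  (S.continuousOn_vel.mul (S.continuousOn_comp Φ.continuous_J)).sub
    (S.continuousOn_comp Φ.continuous_H)

lemma continuousOn_hessian : ContinuousOn (Function.uncurry (S.hessian Φ)) S.cylinder := by
  have hc : ContinuousOn (fun p : ℝ × ℝ => Φ.c (S.ρ p.1 p.2)) S.cylinder :=
    Φ.continuous_c.comp_continuousOn S.continuousOn_rho
  have hY := S.continuousOn_comp Φ.continuous_Y
  have hZ := S.continuousOn_comp Φ.continuous_Z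
  have hρ := S.continuousOn_rho
  have hρr := S.continuousOn_partialR_rho
  have hur := S.continuousOn_partialR_vel
  exact (((((hc.pow 2).div hρ fun _ hp => S.rho_ne_zero hp).mul hY).mul (hρr.pow 2)).add
    ((((continuousOn_const.mul hc).mul hZ).mul hρr).mul hur)).add ((hρ.mul hY).mul (hur.pow 2))

lemma continuousOn_source {ω W : ℝ → ℝ} (hω : Continuous ω) (hω' : Continuous (deriv ω))
    (hW : Continuous W) : ContinuousOn (Function.uncurry (S.source Φ ω W)) S.cylinder := by
  have hω₂ : ContinuousOn (fun p : ℝ × ℝ => ω p.2) S.cylinder := by fun_prop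
  have hω'₂ : ContinuousOn (fun p : ℝ × ℝ => deriv ω p.2) S.cylinder := by fun_prop
  have hW₂ : ContinuousOn (fun p : ℝ × ℝ => W p.2) S.cylinder := by fun_prop
  have hν : ContinuousOn (fun p : ℝ × ℝ => (n - 1 : ℝ) / p.2) S.cylinder :=
    continuousOn_const.div continuousOn_snd fun _ hp => S.radius_ne_zero hp
  have hν₂ : ContinuousOn (fun p : ℝ × ℝ => (n - 1 : ℝ) / p.2 ^ 2) S.cylinder :=
    continuousOn_const.div (by fun_prop) fun _ hp => pow_ne_zero 2 (S.radius_ne_zero hp)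
  exact (((((hω₂.mul (S.continuousOn_flux Φ)).add ((continuousOn_const.mul
    ((hν.mul hω₂).add hω'₂)).mul (S.continuousOn_entropy Φ))).sub
    ((hν.mul hW₂).mul (S.continuousOn_stress Φ))).sub ((continuousOn_const.mul hW₂).mul
      (S.continuousOn_hessian Φ))).sub (((continuousOn_const.mul hν₂).mul hW₂).mul
      ((S.continuousOn_vel.mul S.continuousOn_rho).mul (S.continuousOn_comp Φ.continuous_V))))

/-- On the cylinder the density takes its values in `I`. -/
def DensityMem (I : Set ℝ) : Prop := ∀ t ∈ Icc 0 T, ∀ r ∈ Icc S.a S.b, S.ρ t r ∈ I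

variable {S}

lemma continuousOn_partialT_entropy (hmem : S.DensityMem (Ioo l R)) :
    ContinuousOn (Function.uncurry (partialT (S.entropy Φ))) S.cylinder :=
  (((S.continuousOn_G Φ).mul (contDiff_partialT S.smooth_ρ).continuous.continuousOn).add
    ((S.continuousOn_comp Φ.continuous_V).mul
      (contDiff_partialT S.smooth_m).continuous.continuousOn)).congr
        fun _ hp => S.partialT_entropy Φ (hmem _ hp.1 _ hp.2) (S.rho_ne_zero hp)

lemma continuousOn_partialR_entropy (hmem : S.DensityMem (Ioo l R)) :
    ContinuousOn (Function.uncurry (partialR (S.entropy Φ))) S.cylinder :=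
  (((S.continuousOn_G Φ).mul S.continuousOn_partialR_rho).add
    ((S.continuousOn_comp Φ.continuous_V).mul S.continuousOn_partialR_m)).congr
      fun _ hp => S.partialR_entropy Φ (hmem _ hp.1 _ hp.2) (S.rho_ne_zero hp)

lemma continuousOn_boundaryTerm (hmem : S.DensityMem (Ioo l R)) {ω W : ℝ → ℝ}
    (hω : Continuous ω) (hW : Continuous W) :
    ContinuousOn (Function.uncurry (S.boundaryTerm Φ ω W)) S.cylinder := by
  have hω₂ : ContinuousOn (fun p : ℝ × ℝ => ω p.2) S.cylinder := by fun_prop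
  have hW₂ : ContinuousOn (fun p : ℝ × ℝ => W p.2) S.cylinder := by fun_prop
  have hpow : ContinuousOn (fun p : ℝ × ℝ => p.2 ^ (n - 1)) S.cylinder := by fun_prop
  exact (hW₂.mul (hpow.mul ((continuousOn_const.mul (continuousOn_partialR_entropy Φ hmem)).sub
    (S.continuousOn_flux Φ)))).sub
      (continuousOn_const.mul (hω₂.mul (hpow.mul (S.continuousOn_entropy Φ))))

end Continuity

end ViscousSetup

/-! ### The integrated entropy balance -/

lemma continuousOn_intervalIntegral {X : Type*} [TopologicalSpace X] {s : Set X} {a b : ℝ}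
    {g : X → ℝ → ℝ} (hab : a ≤ b)
    (hg : ContinuousOn (Function.uncurry g) (s ×ˢ Icc a b)) :
    ContinuousOn (fun x => ∫ r in a..b, g x r) s := by
  have hproj : Continuous fun p : s × ℝ => ((p.1 : X), (projIcc a b hab p.2 : ℝ)) := by fun_prop
  have hcont : Continuous fun p : s × ℝ => g p.1 (projIcc a b hab p.2) :=
    hg.comp_continuous hproj fun p => ⟨p.1.2, (projIcc a b hab p.2).2⟩
  rw [continuousOn_iff_continuous_domRestrict]
  refine (intervalIntegral.continuous_parametric_intervalIntegral_of_continuous' (μ := volume)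
    (f := fun (x : s) r => g x (projIcc a b hab r)) hcont a b).congr fun x => ?_
  refine intervalIntegral.integral_congr fun r hr => ?_
  rw [uIcc_of_le hab] at hr
  simp only [projIcc_of_mem hab hr]

lemma integral_Ioo_eq_intervalIntegral {a b : ℝ} (hab : a ≤ b) (f : ℝ → ℝ) :
    ∫ r in Ioo a b, f r = ∫ r in a..b, f r := by
  rw [intervalIntegral.integral_of_le hab, integral_Ioc_eq_integral_Ioo]

namespace ViscousSetup

section RadialIntegral

variable {n : ℕ} {θ T E₀ : ℝ} (S : ViscousSetup n (2 * θ + 1) T E₀)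

/-- Integration over the annulus with respect to the radial measure `r ^ (n - 1) dr`. -/
def radialIntegral (f : ℝ → ℝ → ℝ) (t : ℝ) : ℝ := ∫ r in S.a..S.b, r ^ (n - 1) * f t r

variable {f g : ℝ → ℝ → ℝ} {t : ℝ}

lemma continuousOn_pow_mul (hf : ContinuousOn (Function.uncurry f) S.cylinder) :
    ContinuousOn (Function.uncurry fun t r => r ^ (n - 1) * f t r) S.cylinder :=
  ContinuousOn.mul (by fun_prop) hf

lemma continuousOn_const_mul (k : ℝ) (hf : ContinuousOn (Function.uncurry f) S.cylinder) :
    ContinuousOn (Function.uncurry fun t r => k * f t r) S.cylinder :=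
  hf.const_mul k

lemma continuousOn_add (hf : ContinuousOn (Function.uncurry f) S.cylinder)
    (hg : ContinuousOn (Function.uncurry g) S.cylinder) :
    ContinuousOn (Function.uncurry fun t r => f t r + g t r) S.cylinder :=
  hf.add hg

lemma continuousOn_slice (hf : ContinuousOn (Function.uncurry f) S.cylinder) (ht : t ∈ Icc 0 T) :
    ContinuousOn (f t) (Icc S.a S.b) :=
  hf.comp (f := fun r => (t, r)) (by fun_prop) fun _ hr => ⟨ht, hr⟩

lemma intervalIntegrable_slice (hf : ContinuousOn (Function.uncurry f) S.cylinder)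
    (ht : t ∈ Icc 0 T) : IntervalIntegrable (fun r => r ^ (n - 1) * f t r) volume S.a S.b :=
  (S.continuousOn_slice (S.continuousOn_pow_mul hf) ht).intervalIntegrable_of_Icc S.a_le_b

lemma continuousOn_radialIntegral (hf : ContinuousOn (Function.uncurry f) S.cylinder) :
    ContinuousOn (S.radialIntegral f) (Icc 0 T) :=
  continuousOn_intervalIntegral S.a_le_b (S.continuousOn_pow_mul hf)

lemma intervalIntegrable_radialIntegral (hf : ContinuousOn (Function.uncurry f) S.cylinder) :
    IntervalIntegrable (S.radialIntegral f) volume 0 T :=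
  (S.continuousOn_radialIntegral hf).intervalIntegrable_of_Icc S.hT.le

lemma radialIntegral_const_mul (k : ℝ) (f : ℝ → ℝ → ℝ) (t : ℝ) :
    S.radialIntegral (fun t r => k * f t r) t = k * S.radialIntegral f t := by
  simp only [radialIntegral, mul_left_comm _ k]
  exact intervalIntegral.integral_const_mul _ _

lemma radialIntegral_add (hf : ContinuousOn (Function.uncurry f) S.cylinder)
    (hg : ContinuousOn (Function.uncurry g) S.cylinder) (ht : t ∈ Icc 0 T) :
    S.radialIntegral (fun t r => f t r + g t r) t =
      S.radialIntegral f t + S.radialIntegral g t := by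
  simp only [radialIntegral, mul_add]
  exact intervalIntegral.integral_add (S.intervalIntegrable_slice hf ht)
    (S.intervalIntegrable_slice hg ht)

lemma radialIntegral_mono (hf : ContinuousOn (Function.uncurry f) S.cylinder)
    (hg : ContinuousOn (Function.uncurry g) S.cylinder) (ht : t ∈ Icc 0 T)
    (h : ∀ r ∈ Icc S.a S.b, f t r ≤ g t r) : S.radialIntegral f t ≤ S.radialIntegral g t :=
  intervalIntegral.integral_mono_on S.a_le_b (S.intervalIntegrable_slice hf ht)
    (S.intervalIntegrable_slice hg ht) fun r hr =>
      mul_le_mul_of_nonneg_left (h r hr) (pow_nonneg (S.radius_pos hr).le _)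

lemma radialIntegral_nonneg (h : ∀ r ∈ Icc S.a S.b, 0 ≤ f t r) : 0 ≤ S.radialIntegral f t :=
  intervalIntegral.integral_nonneg S.a_le_b fun r hr =>
    mul_nonneg (pow_nonneg (S.radius_pos hr).le _) (h r hr)

lemma abs_radialIntegral_le (hf : ContinuousOn (Function.uncurry f) S.cylinder)
    (hg : ContinuousOn (Function.uncurry g) S.cylinder) (ht : t ∈ Icc 0 T)
    (h : ∀ r ∈ Icc S.a S.b, |f t r| ≤ g t r) : |S.radialIntegral f t| ≤ S.radialIntegral g t := by
  refine (intervalIntegral.abs_integral_le_integral_abs S.a_le_b).trans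
    (intervalIntegral.integral_mono_on S.a_le_b (S.intervalIntegrable_slice hf ht).abs
      (S.intervalIntegrable_slice hg ht) fun r hr => ?_)
  have hpow := pow_nonneg (S.radius_pos hr).le (n - 1)
  rw [abs_mul, abs_of_nonneg hpow]
  exact mul_le_mul_of_nonneg_left (h r hr) hpow

end RadialIntegral

section Balance

variable {n : ℕ} {θ T E₀ : ℝ} {S : ViscousSetup n (2 * θ + 1) T E₀}
  {l R c₀ C K M₀ t : ℝ} {Φ : EntropyFlux (Ioo l R)} {ω W : ℝ → ℝ}

lemma vel_left (ht : t ∈ Icc 0 T) : S.vel t S.a = 0 := by rw [vel, S.bc_ma t ht, zero_div]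

lemma vel_right (ht : t ∈ Icc 0 T) : S.vel t S.b = 0 := by rw [vel, S.bc_mb t ht, zero_div]

lemma boundaryTerm_left (hΦ : Φ.IsCoercive θ S.δ S.ρbar c₀ C) (hω : Cutoff S.a S.b K ω W)
    (ht : t ∈ Icc 0 T) : S.boundaryTerm Φ ω W t S.a = 0 := by
  simp [boundaryTerm, hω.left, entropy, vel_left ht, hΦ.F_zero]

-- The normalisation `V ρbar 0 = 0` removes the unknown derivative of `m` at `r = b`.
lemma boundaryTerm_right (hΦ : Φ.IsCoercive θ S.δ S.ρbar c₀ C)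
    (hmem : S.DensityMem (Ioo l R)) (ht : t ∈ Icc 0 T) :
    S.boundaryTerm Φ ω W t S.b = -(W S.b * (S.b ^ (n - 1) * Φ.H S.ρbar 0)) := by
  have hb := right_mem_Icc.2 S.a_le_b
  rw [boundaryTerm, S.partialR_entropy Φ (hmem t ht _ hb) (S.rho_pos ht hb).ne']
  simp [entropy, flux, EntropyFlux.G, vel_right ht, S.bc_ρb t ht, hΦ.F_zero, hΦ.J_zero, hΦ.V_bar]

lemma abs_boundaryTerm_right_le (hΦ : Φ.IsCoercive θ S.δ S.ρbar c₀ C)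
    (hmem : S.DensityMem (Ioo l R)) (hω : Cutoff S.a S.b K ω W) (ht : t ∈ Icc 0 T) :
    |S.boundaryTerm Φ ω W t S.b| ≤
      K * C * ((S.ρbar ^ (2 * θ + 1) + S.δ * S.ρbar ^ 2) * S.b ^ (n - 1)) := by
  have hb := right_mem_Icc.2 S.a_le_b
  have hb0 := S.radius_pos hb
  have hK := hω.bound_nonneg S.a_le_b
  rw [boundaryTerm_right hΦ hmem ht, abs_neg, abs_mul, abs_mul,
    abs_of_nonneg (hω.primitive_nonneg _ hb), abs_of_pos (pow_pos hb0 _)]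
  calc W S.b * (S.b ^ (n - 1) * |Φ.H S.ρbar 0|)
      ≤ K * (S.b ^ (n - 1) * (C * (S.ρbar ^ (2 * θ + 1) + S.δ * S.ρbar ^ 2))) := by
        gcongr
        exacts [hω.primitive_le _ hb, hΦ.abs_H_bar_le]
    _ = K * C * ((S.ρbar ^ (2 * θ + 1) + S.δ * S.ρbar ^ 2) * S.b ^ (n - 1)) := by ring

lemma continuousOn_primitive_mul {f : ℝ → ℝ → ℝ} (hω : Cutoff S.a S.b K ω W)
    (hf : ContinuousOn (Function.uncurry f) S.cylinder) :
    ContinuousOn (Function.uncurry fun t r => W r * f t r) S.cylinder :=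
  (hω.continuous_primitive.comp continuous_snd).continuousOn.mul hf

lemma continuousOn_cubicDensity_mul (hω : Cutoff S.a S.b K ω W) :
    ContinuousOn (Function.uncurry fun t r => S.cubicDensity t r * ω r) S.cylinder :=
  S.continuousOn_cubicDensity.mul (hω.continuous.comp continuous_snd).continuousOn

lemma radialIntegral_source_le (hΦ : Φ.IsCoercive θ S.δ S.ρbar c₀ C)
    (hmem : S.DensityMem (Ioo l R)) (hω : Cutoff S.a S.b K ω W) (ht : t ∈ Ioo 0 T) :
    S.radialIntegral (S.source Φ ω W) t ≤
      S.radialIntegral (fun t r => W r * partialT (S.entropy Φ) t r) t +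
        K * C * ((S.ρbar ^ (2 * θ + 1) + S.δ * S.ρbar ^ 2) * S.b ^ (n - 1)) := by
  have ht' := Ioo_subset_Icc_self ht
  have hWη := S.intervalIntegrable_slice
    (continuousOn_primitive_mul hω (continuousOn_partialT_entropy Φ hmem)) ht'
  have hsource := S.intervalIntegrable_slice
    (S.continuousOn_source Φ hω.continuous hω.continuous_deriv hω.continuous_primitive) ht'
  have hftc := intervalIntegral.integral_eq_sub_of_hasDerivAt_of_le S.a_le_b
    (S.continuousOn_slice (continuousOn_boundaryTerm Φ hmem hω.continuous
      hω.continuous_primitive) ht')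
    (fun r hr => by
      have hr' := hmem t ht' r (Ioo_subset_Icc_self hr)
      simpa only [mul_assoc] using S.hasDerivAt_boundaryTerm Φ (hω.differentiable r)
        (hω.hasDerivAt r) (hΦ.c_sq _ hr') ht hr hr')
    (hWη.sub hsource)
  rw [intervalIntegral.integral_sub hWη hsource, boundaryTerm_left hΦ hω ht', sub_zero] at hftc
  have hbdry := (abs_le.1 (abs_boundaryTerm_right_le hΦ hmem hω ht')).1
  rw [← hftc] at hbdry
  rw [radialIntegral, radialIntegral]
  linarith

lemma radialIntegral_cubicDensity_le (hΦ : Φ.IsCoercive θ S.δ S.ρbar c₀ C)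
    (hmem : S.DensityMem (Ioo l R)) (hω : Cutoff S.a S.b K ω W) (hM : S.ε / S.a ≤ M₀)
    (ht : t ∈ Ioo 0 T) :
    c₀ * S.radialIntegral (fun t r => S.cubicDensity t r * ω r) t ≤
      S.radialIntegral (fun t r => W r * partialT (S.entropy Φ) t r) t +
        K * C * (n + (2 * n - 1) * M₀) * S.radialIntegral S.energyAlong t +
        2 * K * S.ε * S.radialIntegral S.dissipation t +
        K * C * ((S.ρbar ^ (2 * θ + 1) + S.δ * S.ρbar ^ 2) * S.b ^ (n - 1)) := by
  have ht' := Ioo_subset_Icc_self ht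
  have hE := S.continuousOn_const_mul (K * C * (n + (2 * n - 1) * M₀)) S.continuousOn_energyAlong
  have hD := S.continuousOn_const_mul (2 * K * S.ε) S.continuousOn_dissipation
  have hsource := S.continuousOn_source Φ hω.continuous hω.continuous_deriv
    hω.continuous_primitive
  have hmono := S.radialIntegral_mono
    (S.continuousOn_const_mul c₀ (continuousOn_cubicDensity_mul hω))
    (S.continuousOn_add (S.continuousOn_add hE hD) hsource) ht'
    fun r hr => show _ ≤ (_ + _) + _ by linarith [S.source_ge hΦ hω hM ht' hr (hmem t ht' r hr)]
  rw [S.radialIntegral_const_mul, S.radialIntegral_add (S.continuousOn_add hE hD) hsource ht',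
    S.radialIntegral_add hE hD ht', S.radialIntegral_const_mul,
    S.radialIntegral_const_mul] at hmono
  linarith [radialIntegral_source_le hΦ hmem hω ht]

lemma integral_radialIntegral_partialT_entropy (hmem : S.DensityMem (Ioo l R))
    (hω : Cutoff S.a S.b K ω W) :
    (∫ t in (0)..T, S.radialIntegral (fun t r => W r * partialT (S.entropy Φ) t r) t) =
      S.radialIntegral (fun t r => W r * S.entropy Φ t r) T -
        S.radialIntegral (fun t r => W r * S.entropy Φ t r) 0 := by
  have hη := continuousOn_primitive_mul hω (S.continuousOn_entropy Φ)
  have hη' := continuousOn_primitive_mul hω (continuousOn_partialT_entropy Φ hmem)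
  have hsub : Ioo 0 T ×ˢ uIcc S.a S.b ⊆ S.cylinder := by
    rw [uIcc_of_le S.a_le_b]
    exact prod_mono_left Ioo_subset_Icc_self
  refine intervalIntegral.integral_eq_sub_of_hasDerivAt_of_le S.hT.le
    (S.continuousOn_radialIntegral hη) (fun t ht => ?_) (S.intervalIntegrable_radialIntegral hη')
  refine hasDerivAt_intervalIntegral_of_continuousOn isOpen_Ioo (fun s hs r hr => ?_)
    ((S.continuousOn_pow_mul hη).mono hsub) ((S.continuousOn_pow_mul hη').mono hsub) ht
  rw [uIcc_of_le S.a_le_b] at hr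
  have hs' := Ioo_subset_Icc_self hs
  exact (((S.hasDerivAt_entropy_left Φ (hmem s hs' r hr)
    (S.rho_pos hs' hr).ne').differentiableAt.hasDerivAt).const_mul (W r)).const_mul _

lemma abs_radialIntegral_entropy_le (hΦ : Φ.IsCoercive θ S.δ S.ρbar c₀ C)
    (hmem : S.DensityMem (Ioo l R)) (hω : Cutoff S.a S.b K ω W) (ht : t ∈ Icc 0 T) :
    |S.radialIntegral (fun t r => W r * S.entropy Φ t r) t| ≤
      K * C * S.radialIntegral S.energyAlong t := by
  rw [← S.radialIntegral_const_mul]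
  refine S.abs_radialIntegral_le (continuousOn_primitive_mul hω (S.continuousOn_entropy Φ))
    (S.continuousOn_energyAlong.const_mul (K * C)) ht fun r hr => ?_
  rw [abs_mul, abs_of_nonneg (hω.primitive_nonneg r hr), mul_assoc]
  exact mul_le_mul (hω.primitive_le r hr) (hΦ.abs_entropy_le _ (hmem t ht r hr) _)
    (abs_nonneg _) (hω.bound_nonneg S.a_le_b)

lemma integral_radialIntegral_partialT_entropy_le (hΦ : Φ.IsCoercive θ S.δ S.ρbar c₀ C)
    (hC : 0 ≤ C) (hmem : S.DensityMem (Ioo l R)) (hω : Cutoff S.a S.b K ω W) {A : ℝ}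
    (hA : ∀ t ∈ Icc 0 T, S.radialIntegral S.energyAlong t ≤ A) :
    (∫ t in (0)..T, S.radialIntegral (fun t r => W r * partialT (S.entropy Φ) t r) t) ≤
      2 * (K * C * A) := by
  have hKC : 0 ≤ K * C := mul_nonneg (hω.bound_nonneg S.a_le_b) hC
  have hbound {t : ℝ} (ht : t ∈ Icc 0 T) :
      |S.radialIntegral (fun t r => W r * S.entropy Φ t r) t| ≤ K * C * A :=
    (abs_radialIntegral_entropy_le hΦ hmem hω ht).trans
      (mul_le_mul_of_nonneg_left (hA t ht) hKC)
  have hT := (abs_le.1 (hbound (right_mem_Icc.2 S.hT.le))).2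
  have h0 := (abs_le.1 (hbound (left_mem_Icc.2 S.hT.le))).1
  rw [integral_radialIntegral_partialT_entropy hmem hω]
  linarith

lemma integral_cubicDensity_le (hΦ : Φ.IsCoercive θ S.δ S.ρbar c₀ C) (hC : 0 ≤ C)
    (hmem : S.DensityMem (Ioo l R)) (hω : Cutoff S.a S.b K ω W) (hM : S.ε / S.a ≤ M₀)
    {A B D : ℝ} (hA : ∀ t ∈ Icc 0 T, S.radialIntegral S.energyAlong t ≤ A)
    (hD : S.ε * ∫ t in (0)..T, S.radialIntegral S.dissipation t ≤ D)
    (hB : (S.ρbar ^ (2 * θ + 1) + S.δ * S.ρbar ^ 2) * S.b ^ (n - 1) ≤ B) :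
    c₀ * ∫ t in (0)..T, S.radialIntegral (fun t r => S.cubicDensity t r * ω r) t ≤
      K * C * (2 * A + T * ((n + (2 * n - 1) * M₀) * A + B)) + 2 * K * D := by
  have hK := hω.bound_nonneg S.a_le_b
  have hM0 : 0 ≤ M₀ := S.hε.le.trans (S.viscosity_le hM)
  have hν := S.dim_sub_one_nonneg
  have hcoef : 0 ≤ (n : ℝ) + (2 * n - 1) * M₀ := by
    have : 0 ≤ 2 * (n : ℝ) - 1 := by linarith
    positivity
  have iG := S.intervalIntegrable_radialIntegral (continuousOn_cubicDensity_mul hω)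
  have iη := S.intervalIntegrable_radialIntegral
    (continuousOn_primitive_mul hω (continuousOn_partialT_entropy Φ hmem))
  have iD := (S.intervalIntegrable_radialIntegral S.continuousOn_dissipation).const_mul
    (2 * K * S.ε)
  have hmono := intervalIntegral.integral_mono_on_of_le_Ioo S.hT.le (iG.const_mul c₀)
    ((iη.add iD).add (intervalIntegrable_const (c := K * C * ((n + (2 * n - 1) * M₀) * A + B))))
    fun t ht => show _ ≤ (_ + _) + _ by
      have hA' := mul_le_mul_of_nonneg_left (hA t (Ioo_subset_Icc_self ht))
        (mul_nonneg (mul_nonneg hK hC) hcoef)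
      have hB' := mul_le_mul_of_nonneg_left hB (mul_nonneg hK hC)
      linarith [radialIntegral_cubicDensity_le hΦ hmem hω hM ht]
  rw [intervalIntegral.integral_add (iη.add iD) intervalIntegrable_const,
    intervalIntegral.integral_add iη iD, intervalIntegral.integral_const_mul,
    intervalIntegral.integral_const_mul, intervalIntegral.integral_const, smul_eq_mul,
    sub_zero] at hmono
  have hη := integral_radialIntegral_partialT_entropy_le hΦ hC hmem hω hA
  have hD' := mul_le_mul_of_nonneg_left hD (by positivity : 0 ≤ 2 * K)
  linarith

end Balance

end ViscousSetup

/-! ### The relative energy and the energy estimate -/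

/-- The Bregman divergence `x ^ p - y ^ p - p y ^ (p - 1) (x - y)` of the power function. -/
def rpowBregman (p x y : ℝ) : ℝ := x ^ p - y ^ p - p * y ^ (p - 1) * (x - y)

/-- The relative internal energy `h̄_δ(ρ, ρbar)` with `κ = (γ - 1)² / (4 γ)`, in the form in which
its two nonnegative contributions are visible. -/
def relInternalEnergy (γ δ ρ ρbar : ℝ) : ℝ :=
  (γ - 1) / (4 * γ) * rpowBregman γ ρ ρbar + δ * (ρ - ρbar) ^ 2

lemma rpowBregman_nonneg {p x y : ℝ} (hp : 1 ≤ p) (hx : 0 ≤ x) (hy : 0 < y) :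
    0 ≤ rpowBregman p x y := by
  have hbernoulli := one_add_mul_self_le_rpow_one_add (s := x / y - 1)
    (by linarith [div_nonneg hx hy.le]) hp
  rw [add_sub_cancel, div_rpow hx hy.le, le_div_iff₀ (by positivity)] at hbernoulli
  have hpow : (1 + p * (x / y - 1)) * y ^ p = y ^ p + p * y ^ (p - 1) * (x - y) := by
    rw [rpow_sub_one hy.ne']
    field_simp
  rw [rpowBregman]
  linarith

lemma exists_rpow_le_rpowBregman_add {p : ℝ} (hp : 1 < p) :
    ∃ Λ : ℝ, 0 < Λ ∧ ∀ x y : ℝ, 0 < x → 0 < y →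
      x ^ p ≤ 2 * rpowBregman p x y + Λ * y ^ p := by
  -- Beyond `x = L y` the tangent term `p y ^ (p - 1) x` is at most `x ^ p / 2`.
  obtain ⟨L, hL0, hL⟩ : ∃ L : ℝ, 0 < L ∧ L ^ (p - 1) = 2 * p :=
    ⟨(2 * p) ^ (p - 1)⁻¹, by positivity, rpow_inv_rpow (by positivity) (sub_pos.2 hp).ne'⟩
  refine ⟨2 + 2 * p * L, by positivity, fun x y hx hy => ?_⟩
  have split (z : ℝ) (hz : 0 < z) : z ^ p = z ^ (p - 1) * z := by
    rw [← rpow_add_one hz.ne', sub_add_cancel]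
  rw [rpowBregman, split x hx, split y hy]
  have hp' : 0 < p * y ^ (p - 1) * y := by positivity
  rcases le_total (L * y) x with hfar | hnear
  · have hslope : (L * y) ^ (p - 1) ≤ x ^ (p - 1) :=
      rpow_le_rpow (by positivity) hfar (sub_nonneg.2 hp.le)
    rw [mul_rpow hL0.le hy.le, hL] at hslope
    have := mul_le_mul_of_nonneg_right hslope hx.le
    have : 0 < 2 * p * L * (y ^ (p - 1) * y) := by positivity
    linarith
  · have := mul_le_mul_of_nonneg_left hnear (by positivity : 0 ≤ 2 * p * y ^ (p - 1))
    have : 0 < x ^ (p - 1) * x := by positivity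
    linarith

lemma hBarDelta_eq_relInternalEnergy {γ : ℝ} (hγ : 1 < γ) (δ ρ ρbar : ℝ) :
    hBarDelta γ ((γ - 1) ^ 2 / (4 * γ)) δ ρ ρbar = relInternalEnergy γ δ ρ ρbar := by
  have hγ0 : γ ≠ 0 := by positivity
  unfold hBarDelta hDelta hDelta' relInternalEnergy rpowBregman
  field_simp
  ring

lemma relInternalEnergy_nonneg {γ δ ρ ρbar : ℝ} (hγ : 1 < γ) (hδ : 0 ≤ δ) (hρ : 0 ≤ ρ)
    (hρbar : 0 < ρbar) : 0 ≤ relInternalEnergy γ δ ρ ρbar :=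
  add_nonneg (mul_nonneg (div_nonneg (sub_pos.2 hγ).le (by positivity))
    (rpowBregman_nonneg hγ.le hρ hρbar)) (by positivity)

lemma hDelta''_eq {θ δ ρ : ℝ} (hθ : 0 < θ) (hρ : 0 < ρ) :
    hDelta'' (2 * θ + 1) ((2 * θ + 1 - 1) ^ 2 / (4 * (2 * θ + 1))) δ ρ =
      pressDeriv θ δ ρ / ρ := by
  rw [hDelta'', pressDeriv, show 2 * θ + 1 - 2 = 2 * θ - 1 by ring, rpow_sub_one hρ.ne',
    add_sub_cancel_right]
  field_simp
  ring

lemma exists_energyDensity_le {θ : ℝ} (hθ : 0 < θ) :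
    ∃ C : ℝ, 0 < C ∧ ∀ δ ρbar ρ u : ℝ, 0 < δ → 0 < ρbar → 0 < ρ →
      energyDensity θ δ ρbar ρ u ≤
        C * (1 / 2 * ρ * u ^ 2 + relInternalEnergy (2 * θ + 1) δ ρ ρbar) +
          C * (ρbar ^ (2 * θ + 1) + δ * ρbar ^ 2) := by
  have hγ : 1 < 2 * θ + 1 := by linarith
  obtain ⟨Λ, hΛ, hpow⟩ := exists_rpow_le_rpowBregman_add hγ
  obtain ⟨k, hk⟩ : ∃ k, k = (2 * θ + 1 - 1) / (4 * (2 * θ + 1)) := ⟨_, rfl⟩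
  have hk0 : 0 < k := by
    rw [hk, add_sub_cancel_right]
    positivity
  obtain ⟨C, hC⟩ : ∃ C, C = 3 + Λ + 2 / k := ⟨_, rfl⟩
  have hk' : 0 < 2 / k := by positivity
  have hCk : 2 ≤ C * k := by
    rw [← div_le_iff₀ hk0]
    linarith
  refine ⟨C, by linarith, fun δ ρbar ρ u hδ hρbar hρ => ?_⟩
  have hB := rpowBregman_nonneg hγ.le hρ.le hρbar
  have hsq : 0 ≤ δ * (ρ - 2 * ρbar) ^ 2 := by positivity
  calc energyDensity θ δ ρbar ρ u
      ≤ 2 * (1 / 2 * ρ * u ^ 2) + 2 * rpowBregman (2 * θ + 1) ρ ρbar + 2 * (δ * (ρ - ρbar) ^ 2) +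
          ((1 + Λ) * ρbar ^ (2 * θ + 1) + 3 * (δ * ρbar ^ 2)) := by
        rw [energyDensity]
        linarith [hpow ρ ρbar hρ hρbar]
    _ ≤ C * (1 / 2 * ρ * u ^ 2) + C * k * rpowBregman (2 * θ + 1) ρ ρbar +
          C * (δ * (ρ - ρbar) ^ 2) + (C * ρbar ^ (2 * θ + 1) + C * (δ * ρbar ^ 2)) := by
        gcongr <;> linarith
    _ = _ := by
        rw [relInternalEnergy, ← hk]
        ring

namespace ViscousSetup

section Energy

variable {n : ℕ} {θ T E₀ t r : ℝ} (S : ViscousSetup n (2 * θ + 1) T E₀)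

/-- The relative mechanical energy density `½ ρ u² + h̄_δ(ρ, ρbar)`. -/
def relEnergy (t r : ℝ) : ℝ :=
  1 / 2 * S.ρ t r * S.vel t r ^ 2 + relInternalEnergy (2 * θ + 1) S.δ (S.ρ t r) S.ρbar

/-- The density of all the energy dissipated by the viscosity, including the geometric term. -/
def fullDissipation (t r : ℝ) : ℝ :=
  S.dissipation t r + (n - 1) * S.ρ t r * S.vel t r ^ 2 / r ^ 2

lemma continuousOn_relEnergy : ContinuousOn (Function.uncurry S.relEnergy) S.cylinder :=
  ((continuousOn_const.mul S.continuousOn_rho).mul (S.continuousOn_vel.pow 2)).add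
    ((continuousOn_const.mul (((S.continuousOn_rho_rpow (2 * θ + 1)).sub continuousOn_const).sub
      (continuousOn_const.mul (S.continuousOn_rho.sub continuousOn_const)))).add
      (continuousOn_const.mul ((S.continuousOn_rho.sub continuousOn_const).pow 2)))

lemma continuousOn_fullDissipation :
    ContinuousOn (Function.uncurry S.fullDissipation) S.cylinder :=
  S.continuousOn_dissipation.add (((continuousOn_const.mul S.continuousOn_rho).mul
    (S.continuousOn_vel.pow 2)).div (by fun_prop)
      fun _ hp => pow_ne_zero 2 (S.radius_ne_zero hp))

lemma relEnergy_nonneg (ht : t ∈ Icc 0 T) (hr : r ∈ Icc S.a S.b) : 0 ≤ S.relEnergy t r := by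
  have h0 := S.rho_pos ht hr
  have := relInternalEnergy_nonneg S.hγ S.hδ.le h0.le S.hρbar
  rw [relEnergy]
  positivity

lemma dissipation_le_fullDissipation (ht : t ∈ Icc 0 T) (hr : r ∈ Icc S.a S.b) :
    S.dissipation t r ≤ S.fullDissipation t r := by
  have h0 := S.rho_pos ht hr
  have hν := S.dim_sub_one_nonneg
  exact le_add_of_nonneg_right (by positivity)

lemma energy_le (ht : t ∈ Icc 0 T) :
    S.radialIntegral S.relEnergy t + S.ε * ∫ s in (0)..T, S.radialIntegral S.fullDissipation s ≤
      E₀ := by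
  refine le_trans (le_of_eq ?_) (S.energy t ht)
  simp only [integral_Ioo_eq_intervalIntegral S.a_le_b, integral_Ioo_eq_intervalIntegral S.hT.le]
  congr 2
  · refine intervalIntegral.integral_congr fun r _ => ?_
    simp only [hBarDelta_eq_relInternalEnergy S.hγ, relEnergy, vel]
    exact mul_comm _ _
  · refine intervalIntegral.integral_congr fun s hs => intervalIntegral.integral_congr
      fun r hr => ?_
    rw [uIcc_of_le S.hT.le] at hs
    rw [uIcc_of_le S.a_le_b] at hr
    simp only [hDelta''_eq S.theta_pos (S.rho_pos hs hr)]
    exact mul_comm _ _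

lemma radialIntegral_relEnergy_le (ht : t ∈ Icc 0 T) : S.radialIntegral S.relEnergy t ≤ E₀ := by
  have hfull : 0 ≤ ∫ s in (0)..T, S.radialIntegral S.fullDissipation s :=
    intervalIntegral.integral_nonneg S.hT.le fun s hs => S.radialIntegral_nonneg fun r hr =>
      (S.dissipation_nonneg hs hr).trans (S.dissipation_le_fullDissipation hs hr)
  exact (le_add_of_nonneg_right (mul_nonneg S.hε.le hfull)).trans (S.energy_le ht)

lemma integral_dissipation_le :
    S.ε * ∫ t in (0)..T, S.radialIntegral S.dissipation t ≤ E₀ := by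
  have h0 : (0 : ℝ) ∈ Icc 0 T := left_mem_Icc.2 S.hT.le
  calc S.ε * ∫ t in (0)..T, S.radialIntegral S.dissipation t
      ≤ S.ε * ∫ t in (0)..T, S.radialIntegral S.fullDissipation t :=
        mul_le_mul_of_nonneg_left (intervalIntegral.integral_mono_on S.hT.le
          (S.intervalIntegrable_radialIntegral S.continuousOn_dissipation)
          (S.intervalIntegrable_radialIntegral S.continuousOn_fullDissipation) fun s hs =>
            S.radialIntegral_mono S.continuousOn_dissipation S.continuousOn_fullDissipation hs
              fun r hr => S.dissipation_le_fullDissipation hs hr) S.hε.le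
    _ ≤ E₀ := (le_add_of_nonneg_left (S.radialIntegral_nonneg fun _ hr =>
        S.relEnergy_nonneg h0 hr)).trans (S.energy_le h0)

lemma radialIntegral_const_le {k : ℝ} (hk : 0 ≤ k) (t : ℝ) :
    S.radialIntegral (fun _ _ => k) t ≤ k * S.b ^ n := by
  have hb0 : 0 ≤ S.b := zero_le_one.trans S.hb.le
  calc S.radialIntegral (fun _ _ => k) t
      ≤ ∫ _ in S.a..S.b, S.b ^ (n - 1) * k :=
        intervalIntegral.integral_mono_on S.a_le_b
          (Continuous.intervalIntegrable (by fun_prop) _ _) intervalIntegrable_const fun r hr =>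
            mul_le_mul_of_nonneg_right (pow_le_pow_left₀ (S.radius_pos hr).le hr.2 _) hk
    _ = (S.b - S.a) * (S.b ^ (n - 1) * k) := by
        rw [intervalIntegral.integral_const, smul_eq_mul]
    _ ≤ S.b * (S.b ^ (n - 1) * k) :=
        mul_le_mul_of_nonneg_right (sub_le_self _ S.ha0.le) (by positivity)
    _ = k * S.b ^ n := by
        rw [← mul_assoc, mul_pow_sub_one (two_pos.trans_le S.hn).ne', mul_comm]

lemma radialIntegral_energyAlong_le {C M : ℝ} (hC : 0 ≤ C)
    (h : ∀ ρ u : ℝ, 0 < ρ → energyDensity θ S.δ S.ρbar ρ u ≤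
      C * (1 / 2 * ρ * u ^ 2 + relInternalEnergy (2 * θ + 1) S.δ ρ S.ρbar) +
        C * (S.ρbar ^ (2 * θ + 1) + S.δ * S.ρbar ^ 2))
    (hM : (S.ρbar ^ (2 * θ + 1) + S.δ * S.ρbar ^ 2) * S.b ^ n ≤ M) (ht : t ∈ Icc 0 T) :
    S.radialIntegral S.energyAlong t ≤ C * (E₀ + M) := by
  have hδ := S.hδ
  have hρbar := S.hρbar
  have hrel := S.continuousOn_const_mul C S.continuousOn_relEnergy
  calc S.radialIntegral S.energyAlong t
      ≤ S.radialIntegral (fun t r => C * S.relEnergy t r +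
          C * (S.ρbar ^ (2 * θ + 1) + S.δ * S.ρbar ^ 2)) t :=
        S.radialIntegral_mono S.continuousOn_energyAlong
          (S.continuousOn_add hrel continuousOn_const) ht fun r hr => h _ _ (S.rho_pos ht hr)
    _ = C * S.radialIntegral S.relEnergy t +
          S.radialIntegral (fun _ _ => C * (S.ρbar ^ (2 * θ + 1) + S.δ * S.ρbar ^ 2)) t := by
        rw [S.radialIntegral_add hrel continuousOn_const ht, S.radialIntegral_const_mul]
    _ ≤ C * E₀ + C * (S.ρbar ^ (2 * θ + 1) + S.δ * S.ρbar ^ 2) * S.b ^ n :=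
        add_le_add (mul_le_mul_of_nonneg_left (S.radialIntegral_relEnergy_le ht) hC)
          (S.radialIntegral_const_le (by positivity) t)
    _ ≤ C * (E₀ + M) := by
        rw [mul_assoc, ← mul_add]
        gcongr

end Energy

end ViscousSetup

/-! ### Uniform bounds -/

namespace ViscousSetup

section UniformBound

variable {n : ℕ} {θ T E₀ M₀ : ℝ} (S : ViscousSetup n (2 * θ + 1) T E₀)

lemma exists_densityMem :
    ∃ l R : ℝ, 0 < l ∧ l < S.ρbar ∧ S.ρbar < R ∧ S.DensityMem (Ioo l R) := by
  obtain ⟨B, hB⟩ := (isCompact_Icc.prod isCompact_Icc : IsCompact S.cylinder)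
    |>.exists_bound_of_continuousOn S.continuousOn_rho
  have hmem : S.DensityMem (Ioo (S.cε / 2) (B + 1)) := fun t ht r hr =>
    ⟨(half_lt_self S.hcε).trans_le (S.pos t ht r hr),
      ((le_abs_self _).trans (hB (t, r) ⟨ht, hr⟩)).trans_lt (lt_add_one B)⟩
  have h0 : (0 : ℝ) ∈ Icc 0 T := left_mem_Icc.2 S.hT.le
  have hbar := hmem 0 h0 S.b (right_mem_Icc.2 S.a_le_b)
  rw [S.bc_ρb 0 h0] at hbar
  exact ⟨S.cε / 2, B + 1, half_pos S.hcε, hbar.1, hbar.2, hmem⟩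

lemma viscosity_div_inner_le (hM : S.ε * S.b ^ n / S.a ≤ M₀) : S.ε / S.a ≤ M₀ :=
  (div_le_div_of_nonneg_right (le_mul_of_one_le_right S.hε.le (one_le_pow₀ S.hb.le))
    S.ha0.le).trans hM

lemma far_energy_mul_le (hδε : S.δ ≤ S.ε) (hbar : S.ρbar ≤ 1)
    (hε : S.ε * S.b ^ n / S.a ≤ M₀) (hρ : S.ρbar ^ (2 * θ + 1) * S.b ^ n ≤ M₀) :
    (S.ρbar ^ (2 * θ + 1) + S.δ * S.ρbar ^ 2) * S.b ^ n ≤ 2 * M₀ := by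
  have hb0 : 0 ≤ S.b := zero_le_one.trans S.hb.le
  have hsq : S.ρbar ^ 2 ≤ 1 := pow_le_one₀ S.hρbar.le hbar
  have hε' : S.ε * S.b ^ n ≤ M₀ :=
    (le_div_self (mul_nonneg S.hε.le (by positivity)) S.ha0 S.ha1.le).trans hε
  have hδ : S.δ * S.ρbar ^ 2 * S.b ^ n ≤ S.ε * S.b ^ n := by
    gcongr
    exact (mul_le_of_le_one_right S.hδ.le hsq).trans hδε
  linarith

lemma far_energy_mul_pow_sub_one_le {B : ℝ}
    (hB : (S.ρbar ^ (2 * θ + 1) + S.δ * S.ρbar ^ 2) * S.b ^ n ≤ B) :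
    (S.ρbar ^ (2 * θ + 1) + S.δ * S.ρbar ^ 2) * S.b ^ (n - 1) ≤ B := by
  have hδ := S.hδ
  have hρbar := S.hρbar
  exact (mul_le_mul_of_nonneg_left (pow_le_pow_right₀ S.hb.le (Nat.sub_le n 1))
    (by positivity)).trans hB

lemma setIntegral_eq_integral_cubicDensity (ω : ℝ → ℝ) :
    (∫ t in Ioo 0 T, ∫ r in Ioo S.a S.b,
      (S.ρ t r * |S.m t r / S.ρ t r| ^ 3 + S.ρ t r ^ (2 * θ + 1 + (2 * θ + 1 - 1) / 2)) *
        ω r * r ^ (n - 1)) =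
      ∫ t in (0)..T, S.radialIntegral (fun t r => S.cubicDensity t r * ω r) t := by
  simp only [integral_Ioo_eq_intervalIntegral S.a_le_b, integral_Ioo_eq_intervalIntegral S.hT.le,
    show 2 * θ + 1 + (2 * θ + 1 - 1) / 2 = 3 * θ + 1 by ring, mul_comm _ (_ ^ (n - 1))]
  rfl

end UniformBound

lemma leading_parameters_le {n : ℕ} {γ T E₀ M₀ : ℝ} (S : ViscousSetup n γ T E₀)
    (h : S.ε * S.b ^ n / S.a + S.δ * |log S.a| * (1 + S.b ^ n / S.ε) +
      S.ρbar ^ ((γ - 1) / 2) * |log S.a| + S.ρbar ^ γ * S.b ^ n + √S.ε / S.a ≤ M₀) :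
    S.ε * S.b ^ n / S.a ≤ M₀ ∧ S.ρbar ^ γ * S.b ^ n ≤ M₀ := by
  have hε := S.hε
  have hδ := S.hδ
  have ha := S.ha0
  have hb := zero_lt_one.trans S.hb
  have hρbar := S.hρbar
  have h₁ : 0 ≤ S.ε * S.b ^ n / S.a := by positivity
  have h₂ : 0 ≤ S.δ * |log S.a| * (1 + S.b ^ n / S.ε) := by positivity
  have h₃ : 0 ≤ S.ρbar ^ ((γ - 1) / 2) * |log S.a| := by positivity
  have h₄ : 0 ≤ S.ρbar ^ γ * S.b ^ n := by positivity
  have h₅ : 0 ≤ √S.ε / S.a := by positivity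
  constructor <;> linarith

end ViscousSetup

theorem higher_integrability_at_origin_general (n : ℕ) (γ T E₀ M₀ : ℝ) (ω : ℝ → ℝ)
    (hω_smooth : ContDiff ℝ 1 ω) (hω_supp : HasCompactSupport ω)
    (hω_nonneg : ∀ r : ℝ, 0 ≤ r → 0 ≤ ω r) :
    ∃ M : ℝ, ∀ S : ViscousSetup n γ T E₀, S.δ ≤ S.ε → S.ρbar ≤ 1 →
      S.ε * S.b ^ n / S.a ≤ M₀ → S.ρbar ^ γ * S.b ^ n ≤ M₀ →
      (∫ t in Ioo 0 T, ∫ r in Ioo S.a S.b,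
        (S.ρ t r * |S.m t r / S.ρ t r| ^ 3 + S.ρ t r ^ (γ + (γ - 1) / 2)) *
          ω r * r ^ (n - 1)) ≤ M := by
  rcases le_or_gt γ 1 with hγ | hγ
  · exact ⟨0, fun S => absurd S.hγ hγ.not_gt⟩
  obtain ⟨θ, rfl⟩ : ∃ θ, γ = 2 * θ + 1 := ⟨(γ - 1) / 2, by ring⟩
  have hθ : 0 < θ := by linarith
  obtain ⟨c₀, C, hc₀, hC, hflux⟩ := exists_isCoercive hθ M₀
  obtain ⟨K, hcutoff⟩ := Cutoff.of_hasCompactSupport hω_smooth hω_supp hω_nonneg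
  obtain ⟨D, hD, henergy⟩ := exists_energyDensity_le hθ
  refine ⟨(K * C * (2 * (D * (E₀ + 2 * M₀)) + T * ((n + (2 * n - 1) * M₀) *
    (D * (E₀ + 2 * M₀)) + 2 * M₀)) + 2 * K * E₀) / c₀, fun S hδε hbar hε hρ => ?_⟩
  obtain ⟨l, R, hl, hlbar, hbarR, hmem⟩ := S.exists_densityMem
  have hεa := S.viscosity_div_inner_le hε
  have hfar := S.far_energy_mul_le hδε hbar hε hρ
  obtain ⟨Φ, hΦ⟩ := hflux S.δ l R S.ρbar S.hδ (hδε.trans (S.viscosity_le hεa)) hl hlbar hbarR hbar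
  rw [S.setIntegral_eq_integral_cubicDensity, le_div_iff₀' hc₀]
  exact S.integral_cubicDensity_le hΦ hC.le hmem (hcutoff S.a S.b S.ha0) hεa
    (fun t => S.radialIntegral_energyAlong_le hD.le (fun ρ u => henergy _ _ ρ u S.hδ S.hρbar) hfar)
    S.integral_dissipation_le (S.far_energy_mul_pow_sub_one_le hfar)

/-- higher integrability up to the origin: under the Viscous Setup with
`δ ≤ ε`, `ρ̄ ≤ 1` and the parameter bound
`ε b^n/a + δ|log a|(1 + b^n/ε) + ρ̄^θ|log a| + ρ̄^γ b^n + √ε/a ≤ M₀`, `θ = (γ−1)/2`,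
for any cutoff `ω ∈ C_c^∞([0,∞))` with `ω = 1` on `[0,1]` and `ω ≥ 0` there is `M > 0`
depending only on `n, γ, T, E₀, M₀, ω` (not on `ε`) with
`∫₀^T∫_a^b (ρ|u|³ + ρ^{γ+θ}) ω(r) r^{n−1} dr dt ≤ M`. -/
theorem higher_integrability_at_origin (n : ℕ) (γ T E₀ M₀ : ℝ) (hM₀ : 0 < M₀)
    (ω : ℝ → ℝ) (hω_smooth : ContDiff ℝ (⊤ : ℕ∞) ω) (hω_supp : HasCompactSupport ω)
    (hω_one : ∀ r ∈ Set.Icc (0:ℝ) 1, ω r = 1) (hω_nonneg : ∀ r : ℝ, 0 ≤ r → 0 ≤ ω r) :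
    ∃ M : ℝ, 0 < M ∧ ∀ S : ViscousSetup n γ T E₀, S.δ ≤ S.ε → S.ρbar ≤ 1 →
      S.ε * S.b ^ n / S.a + S.δ * |Real.log S.a| * (1 + S.b ^ n / S.ε)
          + S.ρbar ^ ((γ - 1) / 2) * |Real.log S.a| + S.ρbar ^ γ * S.b ^ n
          + Real.sqrt S.ε / S.a ≤ M₀ →
      (∫ t in Set.Ioo 0 T, ∫ r in Set.Ioo S.a S.b,
          (S.ρ t r * |S.m t r / S.ρ t r| ^ (3:ℕ) + (S.ρ t r) ^ (γ + (γ - 1) / 2))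
            * ω r * r ^ (n - 1)) ≤ M := by
  obtain ⟨M, hM⟩ := higher_integrability_at_origin_general n γ T E₀ M₀ ω
    (hω_smooth.of_le (by simp)) hω_supp hω_nonneg
  refine ⟨max 1 M, by positivity, fun S hδε hbar hsum => ?_⟩
  obtain ⟨hε, hρ⟩ := S.leading_parameters_le hsum
  exact (hM S hδε hbar hε hρ).trans (le_max_right 1 M)
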